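/- arXiv:2010.14801 — 6 statements merged into one kernel-verified Lean document; each statement's English description precedes it below -/
import Mathlib

section
/- There exist absolute constants c₁, c₂, c₃ > 0 such that for every ε ∈ (0, 1/2) and every sufficiently large k there exists a matrix B ∈ ℝ^{n×n}, n = 2^k, with rows and columns indexed by {0,1}^k, satisfying: (i) for every x ∈ {0,1}^k, the number of y ∈ {0,1}^k with B_{x,y} ≠ H^k_{x,y} is at most n^{c₁ ε log₂(1/ε)}; (ii) rank(B) ≤ n^{1 − c₂ ε²}; (iii) max_{x,y} |B_{x,y}| ≤ n^{1/2 + c₃ ε log₂(1/ε)}. -/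
/-- The Walsh–Hadamard matrix `H^k ∈ {−1,1}^{2^k × 2^k}`, with rows and columns indexed
by boolean vectors `x, y ∈ {0,1}^k`, and entries `H^k_{x,y} = (−1)^{∑ x_i y_i}`. -/
def walshHadamard (k : ℕ) : Matrix (Fin k → Bool) (Fin k → Bool) ℝ :=
  Matrix.of fun x y => (-1 : ℝ) ^ (Finset.univ.filter fun i => x i && y i).card

/-!
Identify boolean vectors with subsets of `[k]`, so that `H S T = (-1) ^ #(S ∩ T)`, and write
`k = a + 2 t` with `t ≈ (1/2 - ε) k`. Let `p` be the polynomial of degree `t` that agrees with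
`(-1) ^ z` at `z = a, …, a + t`. Its Newton expansion expresses `p #(S ∩ T)` as a sum over common
subsets of `S` and `T` of size at most `t`, so the matrix `p #(S ∩ T)` has rank at most the number
of sets of size at most `t`, which is exponentially smaller than `2 ^ k`. Restore the true entries
in the comparably few rows with `#S ≤ t` or `#Sᶜ ≤ t` and columns with `#T ≤ t`. In a remaining row,
`#(S ∩ T) ≤ #S < a + t`, so an error forces `#(S ∩ T) < a`; since `#S, #T > t`, the set `T` is then
within Hamming distance `3 a = O(ε k)` of `Sᶜ`, which leaves few choices for `T`.
-/

open Finset Polynomial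

section Rank

variable {m n K : Type*} [Fintype n] [Field K]

lemma rank_add_le_rank_add_rank (A B : Matrix m n K) : (A + B).rank ≤ A.rank + B.rank := by
  unfold Matrix.rank
  rw [Matrix.mulVecLin_add]
  exact (Submodule.finrank_mono (LinearMap.range_add_le _ _)).trans
    (Submodule.finrank_add_le_finrank_add_finrank _ _)

lemma rank_le_rank_add_card_of_eqOn_rows {A B : Matrix m n K} {R : Finset m}
    (h : ∀ i ∉ R, A i = B i) : A.rank ≤ B.rank + #R := by
  have hdiff : (A - B).rank ≤ #R :=
    Matrix.rank_le_card_of_support_subset _ _ <|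
      Function.support_subset_iff'.2 fun i hi => sub_eq_zero.2 (h i hi)
  calc A.rank = (B + (A - B)).rank := by rw [add_sub_cancel]
    _ ≤ B.rank + (A - B).rank := rank_add_le_rank_add_rank _ _
    _ ≤ B.rank + #R := by gcongr

lemma rank_le_rank_add_card_add_card [Finite m] {A B : Matrix m n K} {R : Finset m} {C : Finset n}
    (h : ∀ i ∉ R, ∀ j ∉ C, A i j = B i j) : A.rank ≤ B.rank + #R + #C := by
  classical
  have := Fintype.ofFinite m
  let A' : Matrix m n K := Matrix.of fun i j => if i ∈ R then B i j else A i j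
  have hrows : A.rank ≤ A'.rank + #R :=
    rank_le_rank_add_card_of_eqOn_rows fun i hi => by ext j; simp [A', hi]
  have hcols : A'.transpose.rank ≤ B.transpose.rank + #C :=
    rank_le_rank_add_card_of_eqOn_rows fun j hj => by
      ext i
      by_cases hi : i ∈ R
      · simp [A', hi]
      · simp [A', hi, h i hi j hj]
  rw [Matrix.rank_transpose, Matrix.rank_transpose] at hcols
  lia

end Rank

section SmallSets

variable (ι : Type*) [Fintype ι]

/-- The family of subsets of `ι` with at most `s` elements, i.e. the Hamming ball of radius `s`
around `∅`. -/
def smallSets (s : ℕ) : Finset (Finset ι) := {S | #S ≤ s}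

variable {ι}

@[simp]
lemma mem_smallSets {s : ℕ} {S : Finset ι} : S ∈ smallSets ι s ↔ #S ≤ s := by
  simp [smallSets]

lemma choose_le_card_smallSets (s : ℕ) : (Fintype.card ι).choose s ≤ #(smallSets ι s) := by
  rw [← card_univ, ← card_powersetCard]
  exact card_le_card fun S hS => mem_smallSets.2 (mem_powersetCard.1 hS).2.le

lemma card_smallSets_mul_pow_le (s : ℕ) {q : ℝ} (hq : 0 ≤ q) (hq1 : q ≤ 1) :
    #(smallSets ι s) * q ^ s ≤ (1 + q) ^ Fintype.card ι :=
  calc #(smallSets ι s) * q ^ s = ∑ _S ∈ smallSets ι s, q ^ s := by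
        rw [sum_const, nsmul_eq_mul]
    _ ≤ ∑ S ∈ smallSets ι s, q ^ #S :=
        sum_le_sum fun S hS => pow_le_pow_of_le_one hq hq1 (mem_smallSets.1 hS)
    _ ≤ ∑ S : Finset ι, q ^ #S :=
        sum_le_sum_of_subset_of_nonneg (subset_univ _) fun S _ _ => pow_nonneg hq _
    _ = (1 + q) ^ Fintype.card ι := by
        simpa [add_comm] using Fintype.sum_pow_mul_eq_add_pow ι q 1

lemma one_add_exp_neg_two_mul_le (x : ℝ) :
    1 + Real.exp (-(2 * x)) ≤ 2 * Real.exp (x ^ 2 / 2 - x) :=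
  calc 1 + Real.exp (-(2 * x)) = 2 * (Real.exp (-x) * Real.cosh x) := by
        rw [Real.cosh_eq, mul_div_assoc', mul_add, ← Real.exp_add, ← Real.exp_add,
          neg_add_cancel, Real.exp_zero]
        ring_nf
    _ ≤ 2 * (Real.exp (-x) * Real.exp (x ^ 2 / 2)) := by
        gcongr
        exact Real.cosh_le_exp_half_sq x
    _ = 2 * Real.exp (x ^ 2 / 2 - x) := by
        rw [← Real.exp_add, neg_add_eq_sub]

/-- Chernoff's bound. The weight `exp (-4 ε)` used in the proof approximates the optimal one,
`(1/2 - ε) / (1/2 + ε)`. -/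
lemma card_smallSets_le_two_pow_mul_exp {s : ℕ} {ε : ℝ} (hε : 0 ≤ ε)
    (hs : s ≤ (1 / 2 - ε) * Fintype.card ι) :
    #(smallSets ι s) ≤ 2 ^ Fintype.card ι * Real.exp (-(2 * ε ^ 2 * Fintype.card ι)) := by
  set k := Fintype.card ι
  have hweighted : #(smallSets ι s) * Real.exp (-(2 * (2 * ε))) ^ s ≤
      (2 * Real.exp ((2 * ε) ^ 2 / 2 - 2 * ε)) ^ k :=
    (card_smallSets_mul_pow_le s (Real.exp_pos _).le (Real.exp_le_one_iff.2 (by linarith))).trans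
      (pow_le_pow_left₀ (by positivity) (one_add_exp_neg_two_mul_le _) k)
  rw [mul_pow, ← Real.exp_nat_mul, ← Real.exp_nat_mul, mul_neg, Real.exp_neg, ← div_eq_mul_inv,
    div_le_iff₀ (Real.exp_pos _), mul_assoc, ← Real.exp_add] at hweighted
  refine hweighted.trans ?_
  gcongr
  linear_combination 4 * ε * hs

lemma card_smallSets_le_exp_mul_inv_pow (s : ℕ) {q : ℝ} (hq : 0 < q) (hq1 : q ≤ 1) :
    #(smallSets ι s) ≤ Real.exp (q * Fintype.card ι) * q⁻¹ ^ s := by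
  rw [inv_pow, ← div_eq_mul_inv, le_div_iff₀ (by positivity)]
  calc #(smallSets ι s) * q ^ s ≤ (1 + q) ^ Fintype.card ι :=
        card_smallSets_mul_pow_le s hq.le hq1
    _ ≤ Real.exp q ^ Fintype.card ι := by
        gcongr
        linarith [Real.add_one_le_exp q]
    _ = Real.exp (q * Fintype.card ι) := by rw [← Real.exp_nat_mul, mul_comm]

lemma exp_le_inv_rpow_two_mul {ε x : ℝ} (hε : 0 < ε) (hε2 : ε ≤ 1 / 2) (hx : 0 ≤ x) :
    Real.exp x ≤ ε⁻¹ ^ (2 * x) := by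
  have hlog : Real.log 2 ≤ Real.log ε⁻¹ :=
    Real.log_le_log two_pos ((le_inv_comm₀ two_pos hε).2 (by linarith))
  rw [Real.rpow_def_of_pos (by positivity), Real.exp_le_exp]
  nlinarith [Real.log_two_gt_d9]

lemma card_smallSets_le_inv_rpow {s : ℕ} {ε u : ℝ} (hε : 0 < ε) (hε2 : ε ≤ 1 / 2)
    (hs : s ≤ u) : #(smallSets ι s) ≤ ε⁻¹ ^ (2 * (ε * Fintype.card ι) + u) :=
  calc (#(smallSets ι s) : ℝ) ≤ Real.exp (ε * Fintype.card ι) * ε⁻¹ ^ s :=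
        card_smallSets_le_exp_mul_inv_pow s hε (by linarith)
    _ ≤ ε⁻¹ ^ (2 * (ε * Fintype.card ι)) * ε⁻¹ ^ u := by
        gcongr
        · exact exp_le_inv_rpow_two_mul hε hε2 (by positivity)
        · rw [← Real.rpow_natCast]
          exact Real.rpow_le_rpow_of_exponent_le ((one_le_inv₀ hε).2 (by linarith)) hs
    _ = ε⁻¹ ^ (2 * (ε * Fintype.card ι) + u) := (Real.rpow_add (by positivity) _ _).symm

end SmallSets

section IntersectionMatrix

variable {ι R : Type*} [CommRing R]

/-- The matrix with entries `p(#(S ∩ T))`, indexed by subsets `S`, `T` of `ι`. -/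
def intersectionMatrix (ι : Type*) [DecidableEq ι] (p : R[X]) : Matrix (Finset ι) (Finset ι) R :=
  Matrix.of fun S T => p.eval (#(S ∩ T) : R)

/-- The Newton expansion of `p` at `0`, with each binomial coefficient counting subsets of `U`. -/
lemma eval_natCast_card_eq_sum_powerset (p : R[X]) (U : Finset ι) :
    p.eval (#U : R) = ∑ S ∈ U.powerset, (fwdDiff 1)^[#S] p.eval 0 := by
  rw [sum_powerset_apply_card fun i => (fwdDiff 1)^[i] p.eval 0]
  simpa using shift_eq_sum_fwdDiff_iter 1 p.eval #U 0

lemma rank_intersectionMatrix_le [Fintype ι] [DecidableEq ι] [Nontrivial R] {p : R[X]} {t : ℕ}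
    (hp : p.natDegree ≤ t) :
    (intersectionMatrix ι p).rank ≤ #(smallSets ι t) := by
  let incl : Matrix (Finset ι) (Finset ι) R := Matrix.of fun S U => if U ⊆ S then 1 else 0
  let newton : Matrix (Finset ι) (Finset ι) R :=
    Matrix.of fun U T => if U ⊆ T then (fwdDiff 1)^[#U] p.eval 0 else 0
  have hfactor : intersectionMatrix ι p = incl * newton := by
    ext S T
    simp [intersectionMatrix, incl, newton, Matrix.mul_apply, eval_natCast_card_eq_sum_powerset,
      ← ite_and, ← subset_inter_iff, ← sum_filter, ← filter_subset_univ, inter_comm]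
  have hsupport : Function.support newton.row ⊆ smallSets ι t := by
    refine Function.support_subset_iff'.2 fun U hU => ?_
    have hlt : p.natDegree < #U := hp.trans_lt (by simpa using hU)
    ext T
    simp [newton, Polynomial.fwdDiff_iter_eq_zero_of_degree_lt hlt]
  rw [hfactor]
  exact (Matrix.rank_mul_le_right _ _).trans (Matrix.rank_le_card_of_support_subset _ _ hsupport)

end IntersectionMatrix

section SignInterpolant

lemma abs_choose_neg_natCast_le (n j : ℕ) : |Ring.choose (-n : ℝ) j| ≤ (n + j).choose j := by
  rcases n with _ | n
  · rcases j with _ | j <;> simp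
  · have hcast : ((n + 1 : ℕ) : ℝ) + j - 1 = ((n + j : ℕ) : ℝ) := by push_cast; ring
    rw [Ring.choose_neg, hcast, Ring.choose_natCast, Units.smul_def, zsmul_eq_mul, abs_mul,
      ← Int.cast_abs]
    simp only [Int.abs_negOnePow, Int.cast_one, one_mul, Nat.abs_cast, Nat.cast_le]
    exact Nat.choose_le_choose j (by lia)

/-- The polynomial of degree `t` that interpolates `z ↦ (-1) ^ z` at the nodes `a, …, a + t`: the
Newton series `(-1) ^ a * (1 - 2) ^ (z - a) = (-1) ^ a * ∑ j, (-2) ^ j * (z - a).choose j`,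
truncated after `j = t`. -/
noncomputable def signInterpolant (a t : ℕ) : ℝ[X] :=
  ∑ j ∈ range (t + 1),
    C ((-1) ^ a * (-2) ^ j * (j.factorial : ℝ)⁻¹) * (descPochhammer ℝ j).comp (X - C (a : ℝ))

lemma eval_signInterpolant (a t : ℕ) (z : ℝ) : (signInterpolant a t).eval z =
    (-1) ^ a * ∑ j ∈ range (t + 1), (-2) ^ j * Ring.choose (z - a) j := by
  have hchoose (j : ℕ) : Ring.choose (z - a) j =
      (j.factorial : ℝ)⁻¹ * (descPochhammer ℝ j).eval (z - a) := by
    rw [Ring.choose_eq_smul, smul_eq_mul, ← aeval_eq_smeval, aeval_def,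
      eval₂_eq_eval_map, descPochhammer_map]
  simp [signInterpolant, eval_finsetSum, hchoose, mul_sum, mul_assoc]

lemma natDegree_signInterpolant_le (a t : ℕ) : (signInterpolant a t).natDegree ≤ t := by
  refine natDegree_sum_le_of_forall_le _ _ fun j hj => (natDegree_C_mul_le _ _).trans ?_
  rw [natDegree_comp, natDegree_X_sub_C, mul_one, descPochhammer_natDegree]
  exact mem_range_succ_iff.1 hj

lemma eval_signInterpolant_of_mem_Icc {a t z : ℕ} (hz : z ∈ Icc a (a + t)) :
    (signInterpolant a t).eval (z : ℝ) = (-1) ^ z := by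
  obtain ⟨haz, hzt⟩ := mem_Icc.1 hz
  obtain ⟨d, rfl⟩ := Nat.exists_eq_add_of_le haz
  have hbinomial : ∑ j ∈ range (t + 1), (-2 : ℝ) ^ j * d.choose j = (-1) ^ d :=
    calc ∑ j ∈ range (t + 1), (-2 : ℝ) ^ j * d.choose j
        = ∑ j ∈ range (d + 1), (-2 : ℝ) ^ j * d.choose j := by
          refine (sum_subset (range_mono (by lia)) fun j _ hj => ?_).symm
          rw [Nat.choose_eq_zero_of_lt (by simpa using hj), Nat.cast_zero, mul_zero]
      _ = (-2 + 1) ^ d := by simp [add_pow]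
      _ = (-1) ^ d := by norm_num
  rw [eval_signInterpolant, pow_add, ← hbinomial]
  simp [Ring.choose_natCast]

lemma one_le_two_pow_mul_choose (a t : ℕ) : (1 : ℝ) ≤ 2 ^ (t + 1) * (a + t).choose t :=
  mod_cast Nat.mul_pos (by positivity) (Nat.choose_pos (Nat.le_add_left t a))

lemma abs_eval_signInterpolant_le {a t z : ℕ} (hz : z ≤ a + t) :
    |(signInterpolant a t).eval (z : ℝ)| ≤ 2 ^ (t + 1) * (a + t).choose t := by
  rcases le_total a z with haz | hza
  · rw [eval_signInterpolant_of_mem_Icc (mem_Icc.2 ⟨haz, hz⟩), abs_neg_one_pow]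
    exact one_le_two_pow_mul_choose a t
  obtain ⟨n, rfl⟩ := Nat.exists_eq_add_of_le hza
  have hterm : ∀ j ∈ range (t + 1), |(-2) ^ j * Ring.choose (z - (z + n : ℕ) : ℝ) j| ≤
      2 ^ j * (z + n + t).choose t := by
    intro j hj
    have hchoose : (n + j).choose j ≤ (z + n + t).choose t :=
      calc (n + j).choose j = (n + j).choose n := Nat.choose_symm_add.symm
        _ ≤ (n + t).choose n := Nat.choose_le_choose _ (by gcongr; exact mem_range_succ_iff.1 hj)
        _ = (n + t).choose t := Nat.choose_symm_add
        _ ≤ (z + n + t).choose t := Nat.choose_le_choose _ (by lia)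
    rw [Nat.cast_add, sub_add_cancel_left, abs_mul, abs_pow, abs_neg, abs_two]
    gcongr
    exact (abs_choose_neg_natCast_le n j).trans (mod_cast hchoose)
  rw [eval_signInterpolant, abs_mul, abs_neg_one_pow, one_mul]
  calc |∑ j ∈ range (t + 1), (-2) ^ j * Ring.choose (z - (z + n : ℕ) : ℝ) j|
      ≤ ∑ j ∈ range (t + 1), 2 ^ j * ((z + n + t).choose t : ℝ) :=
        (abs_sum_le_sum_abs _ _).trans (sum_le_sum hterm)
    _ = (2 ^ (t + 1) - 1) * (z + n + t).choose t := by
        rw [← sum_mul, geom_sum_eq (by norm_num)]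
        norm_num
    _ ≤ 2 ^ (t + 1) * (z + n + t).choose t := by
        gcongr
        exact sub_le_self _ zero_le_one

end SignInterpolant

section CorrectedInterpolant

variable (ι : Type*) [Fintype ι] [DecidableEq ι]

/-- The Walsh–Hadamard matrix with rows and columns indexed by subsets of `ι` in place of boolean
vectors. -/
def intersectionSign : Matrix (Finset ι) (Finset ι) ℝ := Matrix.of fun S T => (-1) ^ #(S ∩ T)

/-- The rows in which the true Walsh–Hadamard entries are restored: the sets that have size at most
`t` or whose complement has size at most `t`. -/
def unbalancedSets (t : ℕ) : Finset (Finset ι) := smallSets ι t ∪ (smallSets ι t).image compl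

/-- The low-rank approximation of the Walsh–Hadamard matrix: the entries `p(#(S ∩ T))` of the sign
interpolant `p`, replaced by the true ones in the unbalanced rows and in the columns of size at most
`t`. -/
noncomputable def correctedInterpolant (a t : ℕ) : Matrix (Finset ι) (Finset ι) ℝ :=
  Matrix.of fun S T =>
    if S ∈ unbalancedSets ι t ∨ T ∈ smallSets ι t then intersectionSign ι S T
    else intersectionMatrix ι (signInterpolant a t) S T

variable {ι}

lemma notMem_unbalancedSets {t : ℕ} {S : Finset ι} :
    S ∉ unbalancedSets ι t ↔ t < #S ∧ t < #Sᶜ := by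
  simp [unbalancedSets]

lemma card_unbalancedSets_le (t : ℕ) : #(unbalancedSets ι t) ≤ 2 * #(smallSets ι t) := by
  rw [two_mul]
  exact (card_union_le _ _).trans (Nat.add_le_add_left card_image_le _)

lemma rank_correctedInterpolant_le (a t : ℕ) :
    (correctedInterpolant ι a t).rank ≤ 4 * #(smallSets ι t) := by
  have hcorrect : (correctedInterpolant ι a t).rank ≤
      (intersectionMatrix ι (signInterpolant a t)).rank + #(unbalancedSets ι t) +
        #(smallSets ι t) :=
    rank_le_rank_add_card_add_card fun S hS T hT => by
      rw [correctedInterpolant, Matrix.of_apply, if_neg (by tauto)]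
  have hinterpolant : (intersectionMatrix ι (signInterpolant a t)).rank ≤ #(smallSets ι t) :=
    rank_intersectionMatrix_le (natDegree_signInterpolant_le a t)
  have hunbalanced := card_unbalancedSets_le (ι := ι) t
  lia

lemma card_inter_le_of_notMem_unbalancedSets {a t : ℕ} (hk : Fintype.card ι = a + 2 * t)
    {S : Finset ι} (hS : S ∉ unbalancedSets ι t) (T : Finset ι) : #(S ∩ T) ≤ a + t := by
  have hinter : #(S ∩ T) ≤ #S := card_le_card inter_subset_left
  have hcompl := card_add_card_compl S
  have hbalanced := notMem_unbalancedSets.1 hS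
  lia

lemma abs_correctedInterpolant_le {a t : ℕ} (hk : Fintype.card ι = a + 2 * t)
    (S T : Finset ι) : |correctedInterpolant ι a t S T| ≤ 2 ^ (t + 1) * (a + t).choose t := by
  rw [correctedInterpolant, Matrix.of_apply]
  split_ifs with h
  · rw [intersectionSign, Matrix.of_apply, abs_neg_one_pow]
    exact one_le_two_pow_mul_choose a t
  · exact abs_eval_signInterpolant_le
      (card_inter_le_of_notMem_unbalancedSets hk (not_or.1 h).1 T)

lemma card_symmDiff_compl_add_card_add_card (S T : Finset ι) :
    #(symmDiff T Sᶜ) + #S + #T = Fintype.card ι + 2 * #(S ∩ T) := by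
  have hsymmDiff : symmDiff T Sᶜ = (S ∩ T) ∪ (S ∪ T)ᶜ := by
    ext i
    simp only [mem_symmDiff, mem_compl, mem_union, mem_inter]
    tauto
  have hdisjoint : Disjoint (S ∩ T) (S ∪ T)ᶜ :=
    disjoint_compl_right.mono_left (inter_subset_left.trans subset_union_left)
  rw [hsymmDiff, card_union_of_disjoint hdisjoint]
  have hunion := card_union_add_card_inter S T
  have hcompl := card_add_card_compl (S ∪ T)
  lia

lemma symmDiff_compl_mem_smallSets {a t : ℕ} (hk : Fintype.card ι = a + 2 * t) {S T : Finset ι}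
    (hne : correctedInterpolant ι a t S T ≠ intersectionSign ι S T) :
    symmDiff T Sᶜ ∈ smallSets ι (3 * a) := by
  rw [correctedInterpolant, Matrix.of_apply] at hne
  split_ifs at hne with h
  · exact absurd rfl hne
  obtain ⟨hS, hT⟩ := not_or.1 h
  have hinter : #(S ∩ T) < a := by
    by_contra! hge
    exact hne (eval_signInterpolant_of_mem_Icc
      (mem_Icc.2 ⟨hge, card_inter_le_of_notMem_unbalancedSets hk hS T⟩))
  have hcard := card_symmDiff_compl_add_card_add_card S T
  rw [notMem_unbalancedSets] at hS
  rw [mem_smallSets] at hT ⊢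
  lia

lemma card_correctedInterpolant_ne_le {a t : ℕ} (hk : Fintype.card ι = a + 2 * t) (S : Finset ι) :
    Nat.card {T // correctedInterpolant ι a t S T ≠ intersectionSign ι S T} ≤
      #(smallSets ι (3 * a)) := by
  rw [← Nat.card_eq_finsetCard]
  exact Nat.card_le_card_of_injective
    (fun T => ⟨symmDiff T.1 Sᶜ, symmDiff_compl_mem_smallSets hk T.2⟩) fun T T' h =>
      Subtype.ext (symmDiff_left_injective _ (congrArg Subtype.val h))

end CorrectedInterpolant

section BooleanVectors

/-- The identification of boolean vectors with the sets they indicate. -/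
def trueSetEquiv (ι : Type*) [Fintype ι] [DecidableEq ι] : (ι → Bool) ≃ Finset ι where
  toFun x := {i | x i}
  invFun S i := decide (i ∈ S)
  left_inv x := by simp
  right_inv S := by simp

lemma walshHadamard_eq_submatrix (k : ℕ) : walshHadamard k =
    (intersectionSign (Fin k)).submatrix (trueSetEquiv (Fin k)) (trueSetEquiv (Fin k)) := by
  ext x y
  simp [walshHadamard, intersectionSign, trueSetEquiv, filter_and]

lemma card_submatrix_ne_walshHadamard {k : ℕ} (A : Matrix (Finset (Fin k)) (Finset (Fin k)) ℝ)
    (x : Fin k → Bool) :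
    Nat.card {y // A.submatrix (trueSetEquiv _) (trueSetEquiv _) x y ≠ walshHadamard k x y} =
      Nat.card {T // A (trueSetEquiv _ x) T ≠ intersectionSign (Fin k) (trueSetEquiv _ x) T} := by
  rw [walshHadamard_eq_submatrix]
  exact Nat.card_congr ((trueSetEquiv _).subtypeEquiv fun _ => Iff.rfl)

end BooleanVectors

section Parameters

variable {ε : ℝ} {k a t : ℕ}

lemma exists_eq_add_two_mul_of_le_mul (hε : ε ≤ 1 / 2) (hk : 2 ≤ ε * k) :
    ∃ a t : ℕ, k = a + 2 * t ∧ (t : ℝ) ≤ (1 / 2 - ε) * k ∧ (a : ℝ) ≤ 3 * (ε * k) := by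
  have hnonneg : 0 ≤ (1 / 2 - ε) * k := mul_nonneg (by linarith) k.cast_nonneg
  let t := ⌊(1 / 2 - ε) * k⌋₊
  have hle : (t : ℝ) ≤ (1 / 2 - ε) * k := Nat.floor_le hnonneg
  have hlt : (1 / 2 - ε) * k < t + 1 := Nat.lt_floor_add_one _
  have htk : 2 * t ≤ k := by
    have : (2 * t : ℝ) ≤ k := by linarith
    exact_mod_cast this
  refine ⟨k - 2 * t, t, by lia, hle, ?_⟩
  push_cast [htk]
  linarith

lemma two_pow_rpow_mul_logb (hε : 0 < ε) (c : ℝ) :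
    ((2 : ℝ) ^ k) ^ (c * ε * Real.logb 2 (1 / ε)) = ε⁻¹ ^ (c * (ε * k)) := by
  rw [one_div, ← Real.rpow_natCast, ← Real.rpow_mul two_pos.le,
    show k * (c * ε * Real.logb 2 ε⁻¹) = Real.logb 2 ε⁻¹ * (c * (ε * k)) by ring,
    Real.rpow_mul two_pos.le, Real.rpow_logb two_pos (by norm_num) (inv_pos.2 hε)]

lemma four_mul_two_pow_mul_exp_le (hk : 5 ≤ ε ^ 2 * k) :
    4 * (2 ^ k * Real.exp (-(2 * ε ^ 2 * k))) ≤ ((2 : ℝ) ^ k) ^ (1 - ε ^ 2) := by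
  have hfour : 4 ≤ Real.exp (ε ^ 2 * k) := by linarith [Real.add_one_le_exp (ε ^ 2 * k)]
  have hlog : Real.log 2 * (ε ^ 2 * k) ≤ ε ^ 2 * k :=
    mul_le_of_le_one_left (by positivity) (by linarith [Real.log_two_lt_d9])
  calc 4 * (2 ^ k * Real.exp (-(2 * ε ^ 2 * k)))
      ≤ Real.exp (ε ^ 2 * k) * (2 ^ k * Real.exp (-(2 * ε ^ 2 * k))) := by gcongr
    _ = 2 ^ k * Real.exp (-(ε ^ 2 * k)) := by
        rw [mul_left_comm, ← Real.exp_add]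
        ring_nf
    _ ≤ 2 ^ k * Real.exp (-(Real.log 2 * (ε ^ 2 * k))) := by
        gcongr 2 ^ k * Real.exp (-?_)
    _ = ((2 : ℝ) ^ k) ^ (1 - ε ^ 2) := by
        rw [sub_eq_add_neg, Real.rpow_add (by positivity), Real.rpow_one,
          Real.rpow_def_of_pos (by positivity), Real.log_pow]
        ring_nf

lemma two_pow_mul_choose_le (hε : 0 < ε) (hε2 : ε ≤ 1 / 2) (hk : k = a + 2 * t)
    (ha : a ≤ 3 * (ε * k)) (hεk : 1 ≤ 2 * (ε * k)) :
    2 ^ (t + 1) * ((a + t).choose t : ℝ) ≤ ((2 : ℝ) ^ k) ^ (1 / 2 : ℝ) * ε⁻¹ ^ (7 * (ε * k)) := by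
  have htwo : 2 ≤ ε⁻¹ := (le_inv_comm₀ two_pos hε).2 (by linarith)
  have hpow : 2 ^ t ≤ ((2 : ℝ) ^ k) ^ (1 / 2 : ℝ) := by
    rw [← Real.sqrt_eq_rpow]
    refine Real.le_sqrt_of_sq_le ?_
    rw [← pow_mul]
    exact pow_le_pow_right₀ one_le_two (by lia)
  have hchoose : ((a + t).choose t : ℝ) ≤ ε⁻¹ ^ (2 * (ε * k) + 3 * (ε * k)) :=
    calc ((a + t).choose t : ℝ) ≤ #(smallSets (Fin (a + t)) a) := by
          have := choose_le_card_smallSets (ι := Fin (a + t)) a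
          rw [Fintype.card_fin, Nat.choose_symm_add] at this
          exact_mod_cast this
      _ ≤ ε⁻¹ ^ (2 * (ε * (a + t : ℕ)) + 3 * (ε * k)) := by
          simpa using card_smallSets_le_inv_rpow (ι := Fin (a + t)) hε hε2 ha
      _ ≤ ε⁻¹ ^ (2 * (ε * k) + 3 * (ε * k)) := by
          gcongr
          · linarith
          · lia
  calc 2 ^ (t + 1) * ((a + t).choose t : ℝ)
      = 2 ^ t * (2 * (a + t).choose t) := by ring
    _ ≤ ((2 : ℝ) ^ k) ^ (1 / 2 : ℝ) *
        (ε⁻¹ ^ (2 * (ε * k)) * ε⁻¹ ^ (2 * (ε * k) + 3 * (ε * k))) := by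
        gcongr
        exact htwo.trans (Real.self_le_rpow_of_one_le (by linarith) hεk)
    _ = ((2 : ℝ) ^ k) ^ (1 / 2 : ℝ) * ε⁻¹ ^ (7 * (ε * k)) := by
        rw [← Real.rpow_add (by positivity)]
        ring_nf

end Parameters

/-- Alman–Williams: there are absolute constants `c₁, c₂, c₃ > 0` such that for every
`ε ∈ (0, 1/2)` and all sufficiently large `k` there is a matrix `B ∈ ℝ^{n×n}`, `n = 2^k`,
differing from `H^k` in at most `n^{c₁ ε log₂(1/ε)}` entries of each row, with
`rank B ≤ n^{1 - c₂ ε²}` and `max |B_{x,y}| ≤ n^{1/2 + c₃ ε log₂(1/ε)}`. -/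
theorem walsh_hadamard_nonrigid :
    ∃ c₁ : ℝ, 0 < c₁ ∧ ∃ c₂ : ℝ, 0 < c₂ ∧ ∃ c₃ : ℝ, 0 < c₃ ∧
      ∀ ε : ℝ, 0 < ε → ε < 1 / 2 → ∃ K : ℕ, ∀ k : ℕ, K ≤ k →
        ∃ B : Matrix (Fin k → Bool) (Fin k → Bool) ℝ,
          (∀ x, (Nat.card {y // B x y ≠ walshHadamard k x y} : ℝ) ≤
              ((2 : ℝ) ^ k) ^ (c₁ * ε * Real.logb 2 (1 / ε))) ∧
          (B.rank : ℝ) ≤ ((2 : ℝ) ^ k) ^ (1 - c₂ * ε ^ 2) ∧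
          (∀ x y, |B x y| ≤ ((2 : ℝ) ^ k) ^ ((1 : ℝ) / 2 + c₃ * ε * Real.logb 2 (1 / ε))) := by
  refine ⟨11, by norm_num, 1, one_pos, 7, by norm_num, fun ε hε hε2 => ?_⟩
  refine ⟨⌈5 / ε ^ 2⌉₊, fun k hK => ?_⟩
  have hε2k : 5 ≤ ε ^ 2 * k := (div_le_iff₀' (by positivity)).1 (Nat.ceil_le.1 hK)
  have hεk : 2 ≤ ε * k := by nlinarith [mul_nonneg hε.le k.cast_nonneg]
  obtain ⟨a, t, hk, ht, ha⟩ := exists_eq_add_two_mul_of_le_mul hε2.le hεk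
  have hcard : Fintype.card (Fin k) = a + 2 * t := by rwa [Fintype.card_fin]
  refine ⟨(correctedInterpolant (Fin k) a t).submatrix (trueSetEquiv _) (trueSetEquiv _),
    fun x => ?_, ?_, fun x y => ?_⟩
  · rw [card_submatrix_ne_walshHadamard, two_pow_rpow_mul_logb hε]
    calc _ ≤ (#(smallSets (Fin k) (3 * a)) : ℝ) := mod_cast card_correctedInterpolant_ne_le hcard _
      _ ≤ ε⁻¹ ^ (2 * (ε * Fintype.card (Fin k)) + 9 * (ε * k)) :=
          card_smallSets_le_inv_rpow hε hε2.le (by push_cast; linarith)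
      _ = ε⁻¹ ^ (11 * (ε * k)) := by rw [Fintype.card_fin]; ring_nf
  · rw [Matrix.rank_submatrix, one_mul]
    calc _ ≤ 4 * (#(smallSets (Fin k) t) : ℝ) := mod_cast rank_correctedInterpolant_le a t
      _ ≤ 4 * (2 ^ k * Real.exp (-(2 * ε ^ 2 * k))) := by
          gcongr
          simpa using card_smallSets_le_two_pow_mul_exp (ι := Fin k) hε.le (by simpa using ht)
      _ ≤ _ := four_mul_two_pow_mul_exp_le hε2k
  · rw [Real.rpow_add (by positivity), two_pow_rpow_mul_logb hε]
    exact (abs_correctedInterpolant_le hcard _ _).trans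
      (two_pow_mul_choose_le hε hε2.le hk ha (by linarith))
end

section
/- For every p ∈ [1,2) there exists δ = δ(p) > 0 such that for every sufficiently large k there exists a matrix B ∈ ℝ^{n×n}, n = 2^k, with rank(B) ≤ n^{1−δ} and, for every row index x ∈ {0,1}^k, (n^{−1} ∑_{y ∈ {0,1}^k} |B_{x,y} − H^k_{x,y}|^p)^{1/p} ≤ n^{−δ}. -/
/-!
`H^k` is the `k`-th Kronecker power of `M 1` for a `2 × 2` pencil `M t = t • E + A` with `E` and
`A` of rank one. Expanding `(M t)^{⊗ k}` gives `∑ t ^ #S • T S` over the sets `S` of tensor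
factors, each `T S` of rank one. If the weights `c i` and nodes `t i` satisfy `∑ c i * t i ^ m = 1`
for `j ≤ m ≤ k - j`, the matrix `H^k - ∑ c i • (M (t i))^{⊗ k}` therefore only involves sets with
`#S < j` or `#S > k - j`, and for `j ≤ (1 - ε) * k / 2` these are an exponentially small fraction
of all sets.

What is subtracted is small on every row of Hamming weight at least `j`: row moments of a Kronecker
power multiply, and for `p < 2` the pencil can be chosen so that near some `t > 1` the product of
its two row moments is below `t ^ p`. Multiplying the extrapolation weights by `t i ^ (-j)` turns
this into an exponential gain in `j`, which beats the weights, exponential only in the number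
`k + 1 - 2 * j` of nodes. The rows of weight below `j` are as few as the sets `S` with `#S < j`,
and are replaced by the exact ones.
-/

section

open Finset Filter Matrix Polynomial
open scoped BigOperators Nat

section Rank

variable {K m n σ : Type*} [Field K] [Fintype n]

lemma matrix_rank_add_le [Finite m] (A B : Matrix m n K) : (A + B).rank ≤ A.rank + B.rank := by
  have range_le : LinearMap.range (A + B).mulVecLin ≤
      LinearMap.range A.mulVecLin ⊔ LinearMap.range B.mulVecLin := by
    rw [mulVecLin_add]
    exact LinearMap.range_add_le _ _
  exact (Submodule.finrank_mono range_le).trans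
    (Submodule.finrank_add_le_finrank_add_finrank _ _)

lemma matrix_rank_sum_le [Finite m] (s : Finset σ) (A : σ → Matrix m n K) :
    (∑ i ∈ s, A i).rank ≤ ∑ i ∈ s, (A i).rank :=
  le_sum_of_subadditive _ rank_zero.le matrix_rank_add_le s A

lemma rank_of_ite_rows_le [Finite m] [DecidableEq m] (s : Finset m) (A B : Matrix m n K) :
    (of fun x => if x ∈ s then A x else B x : Matrix m n K).rank ≤ #s + B.rank := by
  classical
  have := Fintype.ofFinite m
  have eq_add : (of fun x => if x ∈ s then A x else B x : Matrix m n K) =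
      diagonal (fun x => if x ∈ s then (1 : K) else 0) * (A - B) + B := by
    ext x y
    by_cases hx : x ∈ s <;> simp [hx]
  have rank_diag : (diagonal fun x => if x ∈ s then (1 : K) else 0).rank = #s := by
    simp [rank_diagonal]
  rw [eq_add, ← rank_diag]
  exact (matrix_rank_add_le _ _).trans (by gcongr; exact rank_mul_le_left _ _)

end Rank

section KroneckerPi

variable {ι R : Type*} [Fintype ι] [CommSemiring R] {α β : ι → Type*}

/-- The Kronecker product of a finite family of matrices; a constant family gives a Kronecker
power. Its rows and columns are indexed by dependent functions. -/
def kroneckerPi (M : ∀ i, Matrix (α i) (β i) R) : Matrix (∀ i, α i) (∀ i, β i) R :=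
  of fun x y => ∏ i, M i (x i) (y i)

lemma kroneckerPi_vecMulVec (u : ∀ i, α i → R) (v : ∀ i, β i → R) :
    kroneckerPi (fun i => vecMulVec (u i) (v i)) =
      vecMulVec (fun x => ∏ i, u i (x i)) fun y => ∏ i, v i (y i) := by
  ext x y
  simp only [kroneckerPi, of_apply, vecMulVec_apply, prod_mul_distrib]

variable [DecidableEq ι]

lemma kroneckerPi_smul_add (t : R) (E A : ∀ i, Matrix (α i) (β i) R) :
    kroneckerPi (fun i => t • E i + A i) =
      ∑ S : Finset ι, t ^ #S • kroneckerPi (S.piecewise E A) := by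
  ext x y
  simp only [kroneckerPi, of_apply, Matrix.add_apply, Matrix.smul_apply, smul_eq_mul,
    Fintype.prod_add, prod_mul_distrib, prod_const, Matrix.sum_apply]
  refine sum_congr rfl fun S _ => ?_
  rw [mul_assoc, ← prod_mul_prod_compl S]
  congr 2 <;> refine prod_congr rfl fun i hi => ?_
  · rw [piecewise_eq_of_mem _ _ _ hi]
  · rw [piecewise_eq_of_notMem _ _ _ (mem_compl.1 hi)]

lemma rank_kroneckerPi_piecewise_vecMulVec_le [StrongRankCondition R] [∀ i, Fintype (β i)]
    (S : Finset ι) (u u' : ∀ i, α i → R) (v v' : ∀ i, β i → R) :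
    (kroneckerPi (S.piecewise (fun i => vecMulVec (u i) (v i))
      fun i => vecMulVec (u' i) (v' i))).rank ≤ 1 := by
  have factors : S.piecewise (fun i => vecMulVec (u i) (v i)) (fun i => vecMulVec (u' i) (v' i)) =
      fun i => vecMulVec (S.piecewise u u' i) (S.piecewise v v' i) := by
    ext1 i
    by_cases hi : i ∈ S <;> simp [hi]
  rw [factors, kroneckerPi_vecMulVec]
  exact rank_vecMulVec_le _ _

lemma rank_kroneckerPi_pencil_sub_sum_le {K σ : Type*} [Field K] [DecidableEq K]
    [∀ i, Finite (α i)] [∀ i, Fintype (β i)]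
    (u u' : ∀ i, α i → K) (v v' : ∀ i, β i → K) (s : Finset σ) (c t : σ → K) (z : K) :
    (kroneckerPi (fun i => z • vecMulVec (u i) (v i) + vecMulVec (u' i) (v' i)) -
      ∑ a ∈ s, c a •
        kroneckerPi (fun i => t a • vecMulVec (u i) (v i) + vecMulVec (u' i) (v' i))).rank ≤
      #{S : Finset ι | ∑ a ∈ s, c a * t a ^ #S ≠ z ^ #S} := by
  classical
  set T : Finset ι → Matrix (∀ i, α i) (∀ i, β i) K := fun S =>
    kroneckerPi (S.piecewise (fun i => vecMulVec (u i) (v i)) fun i => vecMulVec (u' i) (v' i))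
  set d : Finset ι → K := fun S => z ^ #S - ∑ a ∈ s, c a * t a ^ #S
  have rank_term (S : Finset ι) : (d S • T S).rank ≤ 1 := by
    rw [← Matrix.mul_one (T S), ← Matrix.mul_smul]
    exact (rank_mul_le_left _ _).trans (rank_kroneckerPi_piecewise_vecMulVec_le S u u' v v')
  have expansion : ∑ S, z ^ #S • T S - ∑ a ∈ s, c a • ∑ S, t a ^ #S • T S =
      ∑ S with ∑ a ∈ s, c a * t a ^ #S ≠ z ^ #S, d S • T S := by
    have drop_zero : ∑ S with ∑ a ∈ s, c a * t a ^ #S ≠ z ^ #S, d S • T S = ∑ S, d S • T S :=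
      sum_filter_of_ne fun S _ hS h => hS (by simp [d, h])
    rw [drop_zero]
    simp only [d, sub_smul, sum_sub_distrib, sum_smul, smul_sum, smul_smul]
    rw [sum_comm]
  simp only [kroneckerPi_smul_add]
  rw [expansion]
  calc _ ≤ ∑ S with ∑ a ∈ s, c a * t a ^ #S ≠ z ^ #S, (d S • T S).rank := matrix_rank_sum_le _ _
    _ ≤ _ := sum_le_card_nsmul _ _ 1 fun S _ => rank_term S
    _ = _ := mul_one _

end KroneckerPi

section Expect

variable {ι : Type*} [Fintype ι] [DecidableEq ι] {α β : ι → Type*} [∀ i, Fintype (β i)]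

lemma expect_pi_prod (f : ∀ i, β i → ℝ) :
    𝔼 y : ∀ i, β i, ∏ i, f i (y i) = ∏ i, 𝔼 b, f i b := by
  simp only [Fintype.expect_eq_sum_div_card, Fintype.card_pi, prod_div_distrib, Fintype.prod_sum,
    Nat.cast_prod]

lemma expect_abs_kroneckerPi_rpow (p : ℝ) (M : ∀ i, Matrix (α i) (β i) ℝ) (x : ∀ i, α i) :
    𝔼 y, |kroneckerPi M x y| ^ p = ∏ i, 𝔼 b, |M i (x i) b| ^ p := by
  simp only [kroneckerPi, of_apply, abs_prod, ← Real.finsetProd_rpow _ _ fun _ _ => abs_nonneg _]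
  exact expect_pi_prod fun i b => |M i (x i) b| ^ p

lemma abs_sum_rpow_le {σ : Type*} {p : ℝ} (hp : 0 < p) (s : Finset σ) (z : σ → ℝ) :
    |∑ i ∈ s, z i| ^ p ≤ (#s : ℝ) ^ p * ∑ i ∈ s, |z i| ^ p := by
  obtain rfl | hs := s.eq_empty_or_nonempty
  · simp [hp.ne']
  obtain ⟨m, hm, z_le⟩ := s.exists_max_image (fun i => |z i|) hs
  calc |∑ i ∈ s, z i| ^ p ≤ (#s * |z m|) ^ p := by
        gcongr
        exact (abs_sum_le_sum_abs _ _).trans <|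
          (sum_le_card_nsmul _ _ _ z_le).trans_eq (nsmul_eq_mul _ _)
    _ = (#s : ℝ) ^ p * |z m| ^ p := Real.mul_rpow (by positivity) (abs_nonneg _)
    _ ≤ (#s : ℝ) ^ p * ∑ i ∈ s, |z i| ^ p := by
        gcongr
        exact single_le_sum (f := fun i => |z i| ^ p) (fun i _ => by positivity) hm

lemma expect_abs_sum_mul_rpow_le {γ σ : Type*} [Fintype γ] {p : ℝ} (hp : 0 < p) (s : Finset σ)
    (c : σ → ℝ) (f : σ → γ → ℝ) :
    𝔼 y, |∑ i ∈ s, c i * f i y| ^ p ≤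
      (#s : ℝ) ^ p * ∑ i ∈ s, |c i| ^ p * 𝔼 y, |f i y| ^ p := by
  calc 𝔼 y, |∑ i ∈ s, c i * f i y| ^ p
      ≤ 𝔼 y, (#s : ℝ) ^ p * ∑ i ∈ s, |c i * f i y| ^ p :=
        expect_le_expect fun y _ => abs_sum_rpow_le hp s _
    _ = (#s : ℝ) ^ p * ∑ i ∈ s, |c i| ^ p * 𝔼 y, |f i y| ^ p := by
        simp only [← mul_expect, expect_sum_comm, abs_mul,
          Real.mul_rpow (abs_nonneg _) (abs_nonneg _)]

end Expect

section Subsets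

variable {ι : Type*} [Fintype ι]

lemma card_filter_two_mul_card_le_le (ε : ℝ) (hε : 0 ≤ ε) :
    (#{S : Finset ι | 2 * (#S : ℝ) ≤ (1 - ε) * Fintype.card ι} : ℝ) ≤
      2 ^ Fintype.card ι * Real.exp (-(ε ^ 2 / 2) * Fintype.card ι) := by
  set k := Fintype.card ι
  set w : Finset ι → ℝ := fun S => Real.exp (-ε) ^ #S * Real.exp ε ^ (k - #S)
  have exp_le_weight (S : Finset ι) (hS : 2 * (#S : ℝ) ≤ (1 - ε) * k) :
      Real.exp (ε ^ 2 * k) ≤ w S := by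
    have card_sub : ((k - #S : ℕ) : ℝ) = k - #S := Nat.cast_sub S.card_le_univ
    simp only [w, ← Real.exp_nat_mul, ← Real.exp_add, Real.exp_le_exp, card_sub]
    nlinarith
  have sum_weight_le : ∑ S, w S ≤ 2 ^ k * Real.exp (ε ^ 2 / 2 * k) := by
    have two_cosh : Real.exp (-ε) + Real.exp ε = 2 * Real.cosh ε := by rw [Real.cosh_eq]; ring
    rw [Fintype.sum_pow_mul_eq_add_pow, two_cosh, mul_pow, mul_comm _ (k : ℝ), Real.exp_nat_mul]
    gcongr
    exact Real.cosh_le_exp_half_sq ε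
  have markov : (#{S : Finset ι | 2 * (#S : ℝ) ≤ (1 - ε) * k} : ℝ) * Real.exp (ε ^ 2 * k) ≤
      2 ^ k * Real.exp (ε ^ 2 / 2 * k) := by
    rw [← nsmul_eq_mul]
    exact (card_nsmul_le_sum _ w _ fun S hS => exp_le_weight S (mem_filter.1 hS).2).trans <|
      (sum_le_univ_sum_of_nonneg fun S => by positivity).trans sum_weight_le
  rw [← le_div_iff₀ (Real.exp_pos _), mul_div_assoc, ← Real.exp_sub] at markov
  exact markov.trans_eq (by ring_nf)

lemma card_filter_card_lt_or_lt_card_add_le (j : ℕ) :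
    #{S : Finset ι | #S < j ∨ Fintype.card ι < #S + j} ≤ 2 * #{S : Finset ι | #S < j} := by
  classical
  have card_complements :
      #{S : Finset ι | Fintype.card ι < #S + j} ≤ #{S : Finset ι | #S < j} := by
    refine card_le_card_of_injOn compl (fun S hS => ?_) compl_injective.injOn
    simp only [coe_filter, mem_univ, true_and, Set.mem_ofPred_eq, card_compl] at hS ⊢
    have := S.card_le_univ
    omega
  rw [filter_or, two_mul]
  exact (card_union_le _ _).trans (by gcongr)

lemma card_filter_card_filter_lt [DecidableEq ι] (j : ℕ) :
    #{x : ι → Bool | #{i | x i} < j} = #{S : Finset ι | #S < j} := by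
  refine card_bijective (fun x : ι → Bool => ({i | x i} : Finset ι)) ⟨fun x y hxy => ?_,
    fun S => ⟨fun i => decide (i ∈ S), by simp⟩⟩ (by simp)
  ext i
  rw [Bool.eq_iff_iff]
  simpa only [mem_filter_univ] using Finset.ext_iff.1 hxy i

end Subsets

section Extrapolation

lemma prod_erase_abs_natCast_sub (i m : ℕ) :
    ∏ j ∈ (range (i + 1 + m)).erase i, |(i : ℝ) - j| = i ! * m ! := by
  have below : ∏ j ∈ range i, |(i : ℝ) - j| = i ! := by
    rw [← prod_range_reflect, ← prod_range_add_one_eq_factorial, Nat.cast_prod]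
    refine prod_congr rfl fun j hj => ?_
    have hj := mem_range.1 hj
    rw [Nat.sub_sub, Nat.cast_sub (by omega), sub_sub_cancel, Nat.abs_cast, add_comm]
  have above : ∏ j ∈ range m, |(i : ℝ) - (i + 1 + j : ℕ)| = m ! := by
    rw [← prod_range_add_one_eq_factorial, Nat.cast_prod]
    refine prod_congr rfl fun j _ => ?_
    rw [abs_sub_comm, ← Nat.cast_sub (by omega), Nat.abs_cast, add_assoc, Nat.add_sub_cancel_left,
      add_comm]
  have erase_eq : (range (i + 1 + m)).erase i =
      range i ∪ (range m).map (addLeftEmbedding (i + 1)) := by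
    ext j
    simp only [mem_erase, mem_range, mem_union, Finset.mem_map, addLeftEmbedding_apply]
    refine ⟨fun h => ?_, ?_⟩
    · rcases lt_or_gt_of_ne h.1 with hlt | hgt
      · exact .inl hlt
      · exact .inr ⟨j - (i + 1), by omega, by omega⟩
    · rintro (h | ⟨l, hl, rfl⟩) <;> omega
  have disjoint : Disjoint (range i) ((range m).map (addLeftEmbedding (i + 1))) := by
    rw [disjoint_left]
    simp only [mem_range, Finset.mem_map, addLeftEmbedding_apply]
    rintro j hj ⟨l, -, rfl⟩
    omega
  rw [erase_eq, prod_union disjoint, prod_map, below]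
  simp only [addLeftEmbedding_apply, above]

lemma add_one_pow_le_exp_mul_two_pow_mul_factorial (i m : ℕ) :
    ((i + m + 1 : ℕ) : ℝ) ^ (i + m) ≤ Real.exp (i + m + 1 : ℕ) * (2 ^ (i + m) * (i ! * m !)) := by
  have factorial_le : ((i + m)! : ℝ) ≤ 2 ^ (i + m) * (i ! * m !) := by
    rw [← Nat.add_choose_mul_factorial_mul_factorial, mul_assoc]
    push_cast
    gcongr
    exact_mod_cast Nat.choose_le_two_pow _ _
  have pow_le := Real.pow_div_factorial_le_exp _ (Nat.cast_nonneg (i + m + 1)) (i + m)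
  rw [div_le_iff₀ (by positivity)] at pow_le
  exact pow_le.trans (by gcongr)

lemma abs_eval_lagrangeBasis_equispaced_le {b h z r : ℝ} (hh : 0 < h) {n i : ℕ} (hi : i < n)
    (hr : ∀ j < n, |z - (b + h / n * j)| ≤ r) :
    |(Lagrange.basis (range n) (fun j : ℕ => b + h / n * j) i).eval z| ≤
      (2 * r / h) ^ (n - 1) * Real.exp n := by
  obtain ⟨m, rfl⟩ : ∃ m, n = i + m + 1 := ⟨n - (i + 1), by omega⟩
  set n : ℕ := i + m + 1 with hn
  have hr0 : 0 ≤ r := (abs_nonneg _).trans (hr i hi)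
  have factor_le : ∀ j ∈ (range n).erase i,
      |(b + h / n * i - (b + h / n * j))⁻¹ * (z - (b + h / n * j))| ≤
        r * n / h * |(i : ℝ) - j|⁻¹ := by
    intro j hj
    have denom : b + h / n * i - (b + h / n * j) = h / n * (i - j) := by ring
    rw [denom, mul_inv, inv_div, abs_mul, abs_mul, abs_inv, abs_of_pos (by positivity)]
    calc n / h * |(i : ℝ) - j|⁻¹ * |z - (b + h / n * j)| ≤ n / h * |(i : ℝ) - j|⁻¹ * r := by
          gcongr
          exact hr j (mem_range.1 (mem_of_mem_erase hj))
      _ = r * n / h * |(i : ℝ) - j|⁻¹ := by ring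
  have card_erase : #((range n).erase i) = i + m := by
    rw [card_erase_of_mem (mem_range.2 hi), card_range, hn, Nat.add_sub_cancel]
  have prod_dist : ∏ j ∈ (range n).erase i, |(i : ℝ) - j| = i ! * m ! := by
    rw [hn, add_right_comm, prod_erase_abs_natCast_sub]
  simp only [Lagrange.basis, Lagrange.basisDivisor, eval_prod, eval_mul, eval_C, eval_sub, eval_X,
    abs_prod]
  calc _ ≤ ∏ j ∈ (range n).erase i, (r * n / h * |(i : ℝ) - j|⁻¹) :=
        prod_le_prod (fun _ _ => abs_nonneg _) factor_le
    _ = (r / h) ^ (i + m) * (n : ℝ) ^ (i + m) / (i ! * m !) := by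
        rw [prod_mul_distrib, prod_const, card_erase, prod_inv_distrib, prod_dist, ← mul_pow]
        ring
    _ ≤ (r / h) ^ (i + m) * (Real.exp n * (2 ^ (i + m) * (i ! * m !))) / (i ! * m !) := by
        gcongr
        exact add_one_pow_le_exp_mul_two_pow_mul_factorial i m
    _ = (2 * r / h) ^ (i + m) * Real.exp n := by
        rw [mul_div_assoc 2 r h, mul_pow 2]
        field_simp

/-- Equispaced nodes keep the extrapolation weights exponentially bounded in the number of nodes;
nodes in general position need not. -/
lemma exists_extrapolation {b c : ℝ} (hbc : b < c) (z : ℝ) :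
    ∃ C : ℝ, 1 ≤ C ∧ ∀ n : ℕ, ∃ a t : ℕ → ℝ,
      (∀ i < n, t i ∈ Set.Icc b c) ∧ (∀ i < n, |a i| ≤ C ^ n) ∧
      ∀ P : ℝ[X], P.degree < n → ∑ i ∈ range n, a i * P.eval (t i) = P.eval z := by
  set h := c - b
  have hh : 0 < h := sub_pos.2 hbc
  set r := |z - b| + h with hr
  have base_ge : 1 ≤ 2 * r / h := by
    rw [le_div_iff₀ hh]
    linarith [abs_nonneg (z - b)]
  refine ⟨2 * r / h * Real.exp 1, one_le_mul_of_one_le_of_one_le base_ge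
    (Real.one_le_exp zero_le_one), fun n => ?_⟩
  set t : ℕ → ℝ := fun j => b + h / n * j
  have offset_mem : ∀ j < n, h / n * j ∈ Set.Icc 0 h := fun j hj => by
    have hn : (0 : ℝ) < n := by exact_mod_cast j.zero_le.trans_lt hj
    refine ⟨by positivity, ?_⟩
    rw [div_mul_eq_mul_div, div_le_iff₀ hn]
    gcongr
  refine ⟨fun i => (Lagrange.basis (range n) t i).eval z, t, fun i hi => ?_, fun i hi => ?_,
    fun P hP => ?_⟩
  · obtain ⟨h0, h1⟩ := offset_mem i hi
    constructor <;> simp only [t] <;> linarith [show h = c - b from rfl]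
  · have dist_le : ∀ j < n, |z - t j| ≤ r := fun j hj => by
      obtain ⟨h0, h1⟩ := offset_mem j hj
      calc |z - t j| = |z - b - h / n * j| := by simp only [t]; ring_nf
        _ ≤ |z - b| + |h / n * j| := abs_sub _ _
        _ ≤ r := by rw [abs_of_nonneg h0, hr]; gcongr
    calc _ ≤ (2 * r / h) ^ (n - 1) * Real.exp n :=
          abs_eval_lagrangeBasis_equispaced_le hh hi dist_le
      _ ≤ (2 * r / h) ^ n * Real.exp n := by gcongr; exact n.sub_le 1
      _ = (2 * r / h * Real.exp 1) ^ n := by rw [mul_pow, ← Real.exp_nat_mul, mul_one]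
  · have t_inj : Set.InjOn t (range n) := fun i hi j _ hij => by
      have hn : (0 : ℝ) < n := by exact_mod_cast i.zero_le.trans_lt (mem_range.1 hi)
      simpa [t, hn.ne', hh.ne'] using hij
    have interp := congrArg (eval z) (Lagrange.eq_interpolate t_inj (by simpa using hP))
    simp only [Lagrange.interpolate_apply, eval_finsetSum, eval_mul, eval_C] at interp
    simp only [interp, mul_comm]

lemma exists_extrapolation_pow {b c : ℝ} (hb : 0 < b) (hbc : b < c) (z : ℝ) :
    ∃ C : ℝ, 1 ≤ C ∧ ∀ j n : ℕ, ∃ a t : ℕ → ℝ,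
      (∀ i < n, t i ∈ Set.Icc b c) ∧ (∀ i < n, |a i| ≤ C ^ n * (|z| / t i) ^ j) ∧
      ∀ m, j ≤ m → m < j + n → ∑ i ∈ range n, a i * t i ^ m = z ^ m := by
  obtain ⟨C, hC, extrapolation⟩ := exists_extrapolation hbc z
  refine ⟨C, hC, fun j n => ?_⟩
  obtain ⟨a, t, t_mem, a_le, sum_eq⟩ := extrapolation n
  have t_pos : ∀ i < n, 0 < t i := fun i hi => hb.trans_le (t_mem i hi).1
  refine ⟨fun i => a i * (z / t i) ^ j, t, t_mem, fun i hi => ?_, fun m hjm hmn => ?_⟩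
  · rw [abs_mul, abs_pow, abs_div, abs_of_pos (t_pos i hi)]
    have := t_pos i hi
    gcongr
    exact a_le i hi
  · obtain ⟨l, rfl⟩ := Nat.exists_eq_add_of_le hjm
    have sum_pow := sum_eq (X ^ l) (by rw [degree_X_pow]; exact_mod_cast (by omega))
    simp only [eval_pow, eval_X] at sum_pow
    rw [pow_add, ← sum_pow, mul_sum]
    refine sum_congr rfl fun i hi => ?_
    have := t_pos i (mem_range.1 hi)
    simp only [div_pow, pow_add]
    field_simp

end Extrapolation

section WalshPencil

/-- The pencil `!![3 * t - 2, 1; 2 - t, -1]` of rank-one matrices, whose value at `t = 1` is the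
`2 × 2` Hadamard matrix. At `t = 5 / 3` its rows `(3, 1)` and `(1 / 3, -1)` have second moments
with product `t ^ 2`, so the product of their `p`-th moments is less than `t ^ p` for `p < 2`. -/
def walshPencil (t : ℝ) : Matrix Bool Bool ℝ :=
  t • vecMulVec (fun b => bif b then -1 else 3) (fun b => bif b then 0 else 1) +
    vecMulVec (fun b => bif b then -1 else 1) fun b => bif b then 1 else -2

lemma walshHadamard_eq_kroneckerPi (k : ℕ) :
    walshHadamard k = kroneckerPi fun _ : Fin k => walshPencil 1 := by
  have walshPencil_one (b c : Bool) : walshPencil 1 b c = if b && c then -1 else 1 := by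
    cases b <;> cases c <;> norm_num [walshPencil, vecMulVec_apply]
  ext x y
  simp only [walshHadamard, kroneckerPi, of_apply, walshPencil_one, prod_ite, prod_const, one_pow,
    mul_one]

lemma expect_abs_walshPencil_false (p t : ℝ) :
    𝔼 b, |walshPencil t false b| ^ p = (|3 * t - 2| ^ p + 1) / 2 := by
  rw [Fintype.expect_eq_sum_div_card, Fintype.sum_bool, Fintype.card_bool]
  norm_num [walshPencil, vecMulVec_apply, add_comm, sub_eq_add_neg, mul_comm]

lemma expect_abs_walshPencil_true (p t : ℝ) :
    𝔼 b, |walshPencil t true b| ^ p = (|2 - t| ^ p + 1) / 2 := by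
  rw [Fintype.expect_eq_sum_div_card, Fintype.sum_bool, Fintype.card_bool]
  norm_num [walshPencil, vecMulVec_apply, add_comm, sub_eq_add_neg]

lemma rpow_add_one_div_two_lt {a p : ℝ} (ha : 0 ≤ a) (ha1 : a ≠ 1) (hp0 : 0 < p) (hp2 : p < 2) :
    (a ^ p + 1) / 2 < ((a ^ 2 + 1) / 2) ^ (p / 2) := by
  have sq_ne_one : a ^ 2 ≠ 1 := by simpa [pow_eq_one_iff_of_nonneg ha] using ha1
  have concave := (Real.strictConcaveOn_rpow (p := p / 2) (by linarith) (by linarith)).2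
    (Set.mem_Ici.2 (sq_nonneg a)) (Set.mem_Ici.2 zero_le_one) sq_ne_one
    one_half_pos one_half_pos (add_halves 1)
  have sq_rpow : (a ^ 2) ^ (p / 2) = a ^ p := by
    rw [← Real.rpow_natCast_mul ha]
    congr 1
    push_cast
    ring
  simp only [smul_eq_mul, sq_rpow, Real.one_rpow] at concave
  calc (a ^ p + 1) / 2 = 1 / 2 * a ^ p + 1 / 2 * 1 := by ring
    _ < (1 / 2 * a ^ 2 + 1 / 2 * 1) ^ (p / 2) := concave
    _ = ((a ^ 2 + 1) / 2) ^ (p / 2) := by ring_nf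

lemma walshPencil_moment_mul_moment_lt {p : ℝ} (hp0 : 0 < p) (hp2 : p < 2) :
    (𝔼 b, |walshPencil (5 / 3) false b| ^ p) * (𝔼 b, |walshPencil (5 / 3) true b| ^ p) <
      (5 / 3) ^ p := by
  have row_false := rpow_add_one_div_two_lt (a := 3) (by norm_num) (by norm_num) hp0 hp2
  have row_true := rpow_add_one_div_two_lt (a := 1 / 3) (by norm_num) (by norm_num) hp0 hp2
  have second_moments :
      (((3 : ℝ) ^ 2 + 1) / 2) ^ (p / 2) * (((1 / 3 : ℝ) ^ 2 + 1) / 2) ^ (p / 2) = (5 / 3) ^ p := by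
    rw [← Real.mul_rpow (by norm_num) (by norm_num),
      show ((3 : ℝ) ^ 2 + 1) / 2 * (((1 / 3 : ℝ) ^ 2 + 1) / 2) = (5 / 3) ^ 2 by norm_num,
      ← Real.rpow_natCast_mul (by norm_num), Nat.cast_ofNat, mul_div_cancel₀ p two_ne_zero]
  rw [expect_abs_walshPencil_false, expect_abs_walshPencil_true,
    show |3 * (5 / 3 : ℝ) - 2| = 3 by norm_num, show |2 - (5 / 3 : ℝ)| = 1 / 3 by norm_num,
    ← second_moments]
  exact mul_lt_mul'' row_false row_true (by positivity) (by positivity)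

lemma exists_walshPencil_moment_mul_moment_le {p : ℝ} (hp0 : 0 < p) (hp2 : p < 2) :
    ∃ ρ ∈ Set.Ioo (0 : ℝ) 1, ∃ τ ∈ Set.Ico (1 : ℝ) (5 / 3), ∀ t ∈ Set.Icc τ (5 / 3),
      (𝔼 b, |walshPencil t false b| ^ p) * (𝔼 b, |walshPencil t true b| ^ p) ≤ ρ * t ^ p := by
  have g_lt_one := (div_lt_one (by positivity)).2 (walshPencil_moment_mul_moment_lt hp0 hp2)
  simp only [expect_abs_walshPencil_false, expect_abs_walshPencil_true] at g_lt_one ⊢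
  set g : ℝ → ℝ := fun t => (|3 * t - 2| ^ p + 1) / 2 * ((|2 - t| ^ p + 1) / 2) / t ^ p
  change g (5 / 3) < 1 at g_lt_one
  have g_cont : ContinuousAt g (5 / 3) := by
    have := hp0.le
    fun_prop (disch := positivity)
  obtain ⟨ρ, g_lt_ρ, ρ_lt_one⟩ := exists_between g_lt_one
  have ρ_pos : 0 < ρ := lt_of_le_of_lt (by positivity) g_lt_ρ
  have near : {t | g t < ρ} ∩ Set.Ici 1 ∈ nhdsWithin (5 / 3) (Set.Iic (5 / 3)) :=
    mem_nhdsWithin_of_mem_nhds <| inter_mem (g_cont.eventually_lt_const g_lt_ρ)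
      (Ici_mem_nhds (by norm_num))
  obtain ⟨τ, τ_lt, Icc_subset⟩ := mem_nhdsLE_iff_exists_Icc_subset.1 near
  refine ⟨ρ, ⟨ρ_pos, ρ_lt_one⟩, τ, ⟨(Icc_subset ⟨le_rfl, le_of_lt τ_lt⟩).2, τ_lt⟩, fun t ht => ?_⟩
  obtain ⟨g_lt, one_le⟩ := Icc_subset ht
  have t_pos : 0 < t := zero_lt_one.trans_le one_le
  exact ((div_lt_iff₀ (by positivity)).1 g_lt).le

lemma expect_abs_kroneckerPi_walshPencil_le {ι : Type*} [Fintype ι] [DecidableEq ι]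
    {p q t : ℝ} (hp : 0 < p) (ht : t ∈ Set.Icc 1 (5 / 3))
    (hq : (𝔼 b, |walshPencil t false b| ^ p) * (𝔼 b, |walshPencil t true b| ^ p) ≤ q)
    {j : ℕ} (hj : 2 * j ≤ Fintype.card ι) (x : ι → Bool) (hx : j ≤ #{i | x i}) :
    𝔼 y, |kroneckerPi (fun _ : ι => walshPencil t) x y| ^ p ≤
      q ^ j * (3 ^ p) ^ (Fintype.card ι - 2 * j) := by
  obtain ⟨ht1, ht2⟩ := ht
  set k := Fintype.card ι
  set m : Bool → ℝ := fun b => 𝔼 c, |walshPencil t b c| ^ p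
  have m_false : m false = (|3 * t - 2| ^ p + 1) / 2 := expect_abs_walshPencil_false p t
  have m_true : m true = (|2 - t| ^ p + 1) / 2 := expect_abs_walshPencil_true p t
  have one_le_m_false : 1 ≤ m false := by
    have := Real.one_le_rpow (x := |3 * t - 2|) (by rw [abs_of_pos] <;> linarith) hp.le
    linarith
  have m_false_le : m false ≤ 3 ^ p := by
    have := Real.rpow_le_rpow (abs_nonneg _)
      (show |3 * t - 2| ≤ 3 by rw [abs_of_pos] <;> linarith) hp.le
    have := Real.one_le_rpow (x := 3) (by norm_num) hp.le
    linarith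
  have m_true_le_one : m true ≤ 1 := by
    have := Real.rpow_le_one (abs_nonneg (2 - t)) (by rw [abs_of_pos] <;> linarith) hp.le
    linarith
  have m_true_nonneg : 0 ≤ m true := by rw [m_true]; positivity
  have q_nonneg : 0 ≤ q := le_trans (by positivity) hq
  have prod_eq : ∏ i, m (x i) = m true ^ #{i | x i} * m false ^ (k - #{i | x i}) := by
    have m_eq (b : Bool) : m b = if b then m true else m false := by cases b <;> rfl
    simp only [m_eq (x _), prod_ite, prod_const, filter_not, ← compl_eq_univ_sdiff, card_compl, k]
  rw [expect_abs_kroneckerPi_rpow]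
  calc ∏ i, m (x i) = m true ^ #{i | x i} * m false ^ (k - #{i | x i}) := prod_eq
    _ ≤ m true ^ j * m false ^ (j + (k - 2 * j)) :=
        mul_le_mul (pow_le_pow_of_le_one m_true_nonneg m_true_le_one hx)
          (pow_le_pow_right₀ one_le_m_false (by omega)) (by positivity) (by positivity)
    _ = (m false * m true) ^ j * m false ^ (k - 2 * j) := by ring
    _ ≤ q ^ j * (3 ^ p) ^ (k - 2 * j) := by gcongr

end WalshPencil

section Approximation

lemma rank_walshHadamard_sub_sum_le {σ : Type*} {k j : ℕ} (s : Finset σ) (c t : σ → ℝ)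
    (hct : ∀ m, j ≤ m → m + j ≤ k → ∑ i ∈ s, c i * t i ^ m = 1) :
    (walshHadamard k - ∑ i ∈ s, c i • kroneckerPi fun _ : Fin k => walshPencil (t i)).rank ≤
      2 * #{S : Finset (Fin k) | #S < j} := by
  classical
  rw [walshHadamard_eq_kroneckerPi]
  refine (rank_kroneckerPi_pencil_sub_sum_le _ _ _ _ s c t 1).trans <|
    (card_le_card fun S hS => ?_).trans (card_filter_card_lt_or_lt_card_add_le j)
  simp only [mem_filter_univ, one_pow, Fintype.card_fin] at hS ⊢
  contrapose! hS
  exact hct #S hS.1 hS.2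

variable {ι : Type*} [Fintype ι] [DecidableEq ι] {p ρ C : ℝ} {j n : ℕ}

lemma abs_rpow_mul_expect_abs_kroneckerPi_walshPencil_le {c t : ℝ} (hp : 0 < p) (hρ : 0 ≤ ρ)
    (hC : 0 ≤ C) (hj : 2 * j ≤ Fintype.card ι) (hn : Fintype.card ι ≤ n + 2 * j)
    (ht : t ∈ Set.Icc 1 (5 / 3)) (hc : |c| ≤ C ^ n * (1 / t) ^ j)
    (hρt : (𝔼 b, |walshPencil t false b| ^ p) * (𝔼 b, |walshPencil t true b| ^ p) ≤ ρ * t ^ p)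
    (x : ι → Bool) (hx : j ≤ #{i | x i}) :
    |c| ^ p * 𝔼 y, |kroneckerPi (fun _ : ι => walshPencil t) x y| ^ p ≤
      ((3 * C) ^ p) ^ n * ρ ^ j := by
  have t_pos : 0 < t := zero_lt_one.trans_le ht.1
  have weight_le : |c| ^ p ≤ (C ^ p) ^ n * ((t ^ p)⁻¹) ^ j := by
    refine (Real.rpow_le_rpow (abs_nonneg _) hc hp.le).trans_eq ?_
    rw [Real.mul_rpow (by positivity) (by positivity), ← Real.rpow_pow_comm hC,
      ← Real.rpow_pow_comm (by positivity), one_div, Real.inv_rpow t_pos.le]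
  have moment_le : 𝔼 y, |kroneckerPi (fun _ : ι => walshPencil t) x y| ^ p ≤
      (ρ * t ^ p) ^ j * (3 ^ p) ^ n := by
    refine (expect_abs_kroneckerPi_walshPencil_le hp ht hρt hj x hx).trans ?_
    gcongr
    · exact Real.one_le_rpow (by norm_num) hp.le
    · omega
  calc _ ≤ (C ^ p) ^ n * ((t ^ p)⁻¹) ^ j * ((ρ * t ^ p) ^ j * (3 ^ p) ^ n) := by gcongr
    _ = ((3 * C) ^ p) ^ n * ρ ^ j := by
      rw [Real.mul_rpow (by norm_num) hC, mul_pow, mul_pow, inv_pow]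
      field_simp

lemma expect_abs_sum_kroneckerPi_walshPencil_le {c t : ℕ → ℝ} (hp : 0 < p) (hρ : 0 ≤ ρ)
    (hC : 0 ≤ C) (hj : 2 * j ≤ Fintype.card ι) (hn : Fintype.card ι ≤ n + 2 * j)
    (ht : ∀ i < n, t i ∈ Set.Icc 1 (5 / 3)) (hc : ∀ i < n, |c i| ≤ C ^ n * (1 / t i) ^ j)
    (hρt : ∀ i < n, (𝔼 b, |walshPencil (t i) false b| ^ p) *
      (𝔼 b, |walshPencil (t i) true b| ^ p) ≤ ρ * t i ^ p)
    (x : ι → Bool) (hx : j ≤ #{i | x i}) :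
    𝔼 y, |∑ i ∈ range n, c i * kroneckerPi (fun _ : ι => walshPencil (t i)) x y| ^ p ≤
      (2 * (6 * C) ^ p) ^ n * ρ ^ j := by
  have n_le : (n : ℝ) ≤ 2 ^ n := by exact_mod_cast n.lt_two_pow_self.le
  have sum_le : ∑ i ∈ range n, |c i| ^ p *
      𝔼 y, |kroneckerPi (fun _ : ι => walshPencil (t i)) x y| ^ p ≤
        n * (((3 * C) ^ p) ^ n * ρ ^ j) := by
    have := sum_le_card_nsmul (range n) _ _ fun i hi =>
      have hi := mem_range.1 hi
      abs_rpow_mul_expect_abs_kroneckerPi_walshPencil_le hp hρ hC hj hn (ht i hi)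
        (hc i hi) (hρt i hi) x hx
    rwa [card_range, nsmul_eq_mul] at this
  calc _ ≤ (n : ℝ) ^ p * ∑ i ∈ range n, |c i| ^ p *
          𝔼 y, |kroneckerPi (fun _ : ι => walshPencil (t i)) x y| ^ p := by
        simpa only [card_range] using expect_abs_sum_mul_rpow_le hp (range n) c _
    _ ≤ (2 ^ n) ^ p * (2 ^ n * (((3 * C) ^ p) ^ n * ρ ^ j)) := by
        gcongr
        exact sum_le.trans (by gcongr)
    _ = (2 * (6 * C) ^ p) ^ n * ρ ^ j := by
        rw [← Real.rpow_pow_comm zero_le_two, show 6 * C = 2 * (3 * C) by ring,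
          Real.mul_rpow zero_le_two (by positivity)]
        ring

lemma exists_rank_le_expect_abs_sub_walshHadamard_le (hp0 : 0 < p) (hp2 : p < 2) :
    ∃ A ρ : ℝ, 1 ≤ A ∧ ρ ∈ Set.Ioo 0 1 ∧ ∀ k j : ℕ, 2 * j ≤ k →
      ∃ B : Matrix (Fin k → Bool) (Fin k → Bool) ℝ,
        B.rank ≤ 3 * #{S : Finset (Fin k) | #S < j} ∧
        ∀ x, 𝔼 y, |B x y - walshHadamard k x y| ^ p ≤ A ^ (k + 1 - 2 * j) * ρ ^ j := by
  obtain ⟨ρ, hρ, τ, ⟨one_le_τ, τ_lt⟩, moments_le⟩ := exists_walshPencil_moment_mul_moment_le hp0 hp2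
  obtain ⟨C, one_le_C, extrapolation⟩ :=
    exists_extrapolation_pow (zero_lt_one.trans_le one_le_τ) τ_lt 1
  have one_le_A : 1 ≤ 2 * (6 * C) ^ p := by
    linarith [Real.one_le_rpow (x := 6 * C) (by linarith) hp0.le]
  refine ⟨2 * (6 * C) ^ p, ρ, one_le_A, hρ, fun k j hjk => ?_⟩
  set n := k + 1 - 2 * j
  obtain ⟨c, t, t_mem, c_le, sum_eq⟩ := extrapolation j n
  set E := ∑ i ∈ range n, c i • kroneckerPi fun _ : Fin k => walshPencil (t i) with hE
  set light : Finset (Fin k → Bool) := {x | #{i | x i} < j} with hlight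
  refine ⟨of fun x => if x ∈ light then walshHadamard k x else (walshHadamard k - E) x, ?_,
    fun x => ?_⟩
  · have rank_le : (walshHadamard k - E).rank ≤ 2 * #{S : Finset (Fin k) | #S < j} :=
      rank_walshHadamard_sub_sum_le _ c t fun m hjm hmk => by
        rw [sum_eq m hjm (by omega), one_pow]
    have := rank_of_ite_rows_le light (walshHadamard k) (walshHadamard k - E)
    rw [hlight, card_filter_card_filter_lt, ← hlight] at this
    omega
  · by_cases hx : x ∈ light
    · have := hρ.1
      simp only [of_apply, hx, if_true, sub_self, abs_zero, Real.zero_rpow hp0.ne',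
        expect_const_zero]
      positivity
    · simp only [of_apply, hx, if_false, Matrix.sub_apply, sub_sub_cancel_left, abs_neg, hE,
        Matrix.sum_apply, Matrix.smul_apply, smul_eq_mul]
      refine expect_abs_sum_kroneckerPi_walshPencil_le hp0 hρ.1.le (by linarith)
        (by rwa [Fintype.card_fin]) (by rw [Fintype.card_fin]; omega)
        (fun i hi => ⟨one_le_τ.trans (t_mem i hi).1, (t_mem i hi).2⟩)
        (fun i hi => by simpa using c_le i hi) (fun i hi => moments_le _ (t_mem i hi)) x ?_
      simpa [hlight] using hx

end Approximation

section Asymptotics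

lemma eventually_mul_exp_le_exp {a b : ℝ} (hab : a < b) (c : ℝ) :
    ∀ᶠ k : ℕ in atTop, c * Real.exp (a * k) ≤ Real.exp (b * k) := by
  have tendsto : Tendsto (fun k : ℕ => Real.exp ((b - a) * k)) atTop atTop :=
    Real.tendsto_exp_atTop.comp <|
      tendsto_natCast_atTop_atTop.const_mul_atTop (sub_pos.2 hab)
  filter_upwards [tendsto.eventually_ge_atTop c] with k hk
  calc c * Real.exp (a * k) ≤ Real.exp ((b - a) * k) * Real.exp (a * k) := by gcongr
    _ = Real.exp (b * k) := by rw [← Real.exp_add]; ring_nf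

lemma exists_pow_mul_pow_le_exp {A ρ : ℝ} (hA : 1 ≤ A) (hρ : ρ ∈ Set.Ioo 0 1) :
    ∃ ε ∈ Set.Ioo (0 : ℝ) 1, ∃ γ > 0, ∃ D : ℝ, ∀ k j : ℕ,
      2 * j ≤ k → (1 - ε) * k / 2 ≤ j + 1 →
        A ^ (k + 1 - 2 * j) * ρ ^ j ≤ D * Real.exp (-γ * k) := by
  obtain ⟨ρ_pos, ρ_lt_one⟩ := hρ
  set a := Real.log A
  set l := -Real.log ρ with hl
  have a_nonneg : 0 ≤ a := Real.log_nonneg hA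
  have l_pos : 0 < l := neg_pos.2 (Real.log_neg ρ_pos ρ_lt_one)
  set ε := l / (2 * (l + 2 * a)) with hε
  have ε_mul : ε * (l / 2 + a) = l / 4 := by
    rw [hε]
    field_simp
    ring
  have ε_lt_one : ε < 1 := by
    rw [hε, div_lt_one (by positivity)]
    linarith
  refine ⟨ε, ⟨by positivity, ε_lt_one⟩, l / 4, by positivity, Real.exp (3 * a + l),
    fun k j hjk hj => ?_⟩
  have cast_sub : ((k + 1 - 2 * j : ℕ) : ℝ) = k + 1 - 2 * j := by
    rw [Nat.cast_sub (by omega)]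
    push_cast
    ring
  have exponent_le : a * (k + 1 - 2 * j) - l * j ≤ 3 * a + l - l / 4 * k := by
    have nodes_le := mul_le_mul_of_nonneg_left (show (k + 1 - 2 * j : ℝ) ≤ ε * k + 3 by linarith)
      a_nonneg
    have j_ge := mul_le_mul_of_nonneg_left hj l_pos.le
    linear_combination nodes_le + j_ge + k * ε_mul
  calc A ^ (k + 1 - 2 * j) * ρ ^ j = Real.exp (a * (k + 1 - 2 * j) - l * j) := by
        rw [sub_eq_add_neg, ← neg_mul, hl, neg_neg, Real.exp_add, ← cast_sub, mul_comm a,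
          mul_comm (Real.log ρ), Real.exp_nat_mul, Real.exp_nat_mul, Real.exp_log ρ_pos,
          Real.exp_log (by positivity)]
    _ ≤ Real.exp (3 * a + l - l / 4 * k) := Real.exp_le_exp.2 exponent_le
    _ = Real.exp (3 * a + l) * Real.exp (-(l / 4) * k) := by
        rw [← Real.exp_add, neg_mul, sub_eq_add_neg]

lemma exists_rank_le_exp_expect_abs_sub_walshHadamard_le_exp {p : ℝ} (hp0 : 0 < p) (hp2 : p < 2) :
    ∃ β > 0, ∃ γ > 0, ∃ D : ℝ, ∀ k : ℕ, ∃ B : Matrix (Fin k → Bool) (Fin k → Bool) ℝ,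
      (B.rank : ℝ) ≤ 2 ^ k * (3 * Real.exp (-β * k)) ∧
      ∀ x, 𝔼 y, |B x y - walshHadamard k x y| ^ p ≤ D * Real.exp (-γ * k) := by
  obtain ⟨A, ρ, hA, hρ, approx⟩ := exists_rank_le_expect_abs_sub_walshHadamard_le hp0 hp2
  obtain ⟨ε, ⟨ε_pos, ε_lt_one⟩, γ, γ_pos, D, error_le⟩ := exists_pow_mul_pow_le_exp hA hρ
  refine ⟨ε ^ 2 / 2, by positivity, γ, γ_pos, D, fun k => ?_⟩
  set j := ⌊(1 - ε) * k / 2⌋₊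
  have j_le : (j : ℝ) ≤ (1 - ε) * k / 2 :=
    Nat.floor_le (div_nonneg (mul_nonneg (by linarith) k.cast_nonneg) zero_le_two)
  have two_mul_j_le : 2 * j ≤ k := by
    have : 0 ≤ ε * k := by positivity
    exact_mod_cast (by linarith : 2 * (j : ℝ) ≤ k)
  obtain ⟨B, rank_le, expect_le⟩ := approx k j two_mul_j_le
  refine ⟨B, ?_, fun x =>
    (expect_le x).trans (error_le k j two_mul_j_le (Nat.lt_floor_add_one _).le)⟩
  have card_le : (#{S : Finset (Fin k) | #S < j} : ℝ) ≤ 2 ^ k * Real.exp (-(ε ^ 2 / 2) * k) := by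
    have tail := card_filter_two_mul_card_le_le (ι := Fin k) ε ε_pos.le
    rw [Fintype.card_fin] at tail
    refine le_trans (Nat.cast_le.2 (card_le_card fun S hS => ?_)) tail
    rw [mem_filter_univ] at hS ⊢
    have hS : (#S : ℝ) < j := Nat.cast_lt.2 hS
    linarith
  calc (B.rank : ℝ) ≤ 3 * #{S : Finset (Fin k) | #S < j} := by exact_mod_cast rank_le
    _ ≤ 2 ^ k * (3 * Real.exp (-(ε ^ 2 / 2) * k)) := by linarith

lemma two_pow_rpow_eq_exp (k : ℕ) (s : ℝ) : ((2 : ℝ) ^ k) ^ s = Real.exp (s * Real.log 2 * k) := by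
  rw [Real.rpow_def_of_pos (by positivity), Real.log_pow]
  ring_nf

end Asymptotics

theorem walsh_hadamard_lp_approx_general (p : ℝ) (hp0 : 0 < p) (hp2 : p < 2) :
    ∃ δ : ℝ, 0 < δ ∧ ∃ K : ℕ, ∀ k : ℕ, K ≤ k →
      ∃ B : Matrix (Fin k → Bool) (Fin k → Bool) ℝ,
        (B.rank : ℝ) ≤ ((2 : ℝ) ^ k) ^ (1 - δ) ∧
        ∀ x, (((2 : ℝ) ^ k)⁻¹ * ∑ y, |B x y - walshHadamard k x y| ^ p) ^ (1 / p) ≤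
          ((2 : ℝ) ^ k) ^ (-δ) := by
  obtain ⟨β, β_pos, γ, γ_pos, D, approx⟩ :=
    exists_rank_le_exp_expect_abs_sub_walshHadamard_le_exp hp0 hp2
  have log_two_pos : 0 < Real.log 2 := Real.log_pos one_lt_two
  obtain ⟨δ, δ_pos, δ_lt⟩ : ∃ δ > 0, δ < min (β / Real.log 2) (γ / (p * Real.log 2)) :=
    exists_between (lt_min (by positivity) (by positivity))
  obtain ⟨δ_lt_β, δ_lt_γ⟩ : δ * Real.log 2 < β ∧ δ * (p * Real.log 2) < γ := by
    rwa [lt_min_iff, lt_div_iff₀ log_two_pos, lt_div_iff₀ (by positivity)] at δ_lt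
  obtain ⟨K, hK⟩ := eventually_atTop.1 <|
    (eventually_mul_exp_le_exp (neg_lt_neg δ_lt_β) 3).and
      (eventually_mul_exp_le_exp (neg_lt_neg δ_lt_γ) D)
  refine ⟨δ, δ_pos, K, fun k hk => ?_⟩
  obtain ⟨B, rank_le, expect_le⟩ := approx k
  obtain ⟨rank_rate, error_rate⟩ := hK k hk
  refine ⟨B, ?_, fun x => ?_⟩
  · rw [sub_eq_add_neg, Real.rpow_add (by positivity), Real.rpow_one, two_pow_rpow_eq_exp, neg_mul]
    exact rank_le.trans (by gcongr)
  · have mean_eq : ((2 : ℝ) ^ k)⁻¹ * ∑ y, |B x y - walshHadamard k x y| ^ p =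
        𝔼 y, |B x y - walshHadamard k x y| ^ p := by
      simp [Fintype.expect_eq_sum_div_card, div_eq_inv_mul]
    rw [mean_eq, one_div, Real.rpow_inv_le_iff_of_pos (by positivity) (by positivity) hp0,
      ← Real.rpow_mul (by positivity), two_pow_rpow_eq_exp, neg_mul, neg_mul, mul_assoc]
    exact (expect_le x).trans error_rate

end

/-- For every `p ∈ [1,2)` there is `δ > 0` such that for all sufficiently large `k` there
is a matrix `B` of rank at most `n^{1-δ}`, `n = 2^k`, approximating each row of `H^k`
in normalized `ℓ_p` within `n^{-δ}`. -/
theorem walsh_hadamard_lp_approx (p : ℝ) (hp1 : 1 ≤ p) (hp2 : p < 2) :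
    ∃ δ : ℝ, 0 < δ ∧ ∃ K : ℕ, ∀ k : ℕ, K ≤ k →
      ∃ B : Matrix (Fin k → Bool) (Fin k → Bool) ℝ,
        (B.rank : ℝ) ≤ ((2 : ℝ) ^ k) ^ (1 - δ) ∧
        ∀ x, (((2 : ℝ) ^ k)⁻¹ * ∑ y, |B x y - walshHadamard k x y| ^ p) ^ (1 / p) ≤
          ((2 : ℝ) ^ k) ^ (-δ) :=
  walsh_hadamard_lp_approx_general p (by linarith) hp2
end

section
/- Let A ∈ ℝ^{n×n} be a Hadamard matrix, i.e. all entries of A equal ±1 and A Aᵀ = n·I. Then for every matrix B ∈ ℝ^{n×n} with rank(B) ≤ m ≤ n one has max_{i,j} |A_{i,j} − B_{i,j}| ≥ (1 − m/n)^{1/2}. In particular, if rank(B) ≤ εn with ε ∈ (0,1), then max_{i,j} |A_{i,j} − B_{i,j}| ≥ (1 − ε)^{1/2}. -/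
/-!
If `A Aᴴ = c • 1`, then `Aᴴ` scales the squared length of every vector by `c`. On the kernel of
`Bᴴ`, whose dimension is the number of rows minus `rank B`, the operators `Aᴴ` and `(A - B)ᴴ`
coincide. By Bessel's inequality the squared Frobenius norm of `A - B` dominates the sum of
`‖(A - B)ᴴ u‖²` over an orthonormal basis of that kernel, and some entry of `A - B` is at least
as large as the quadratic mean of its entries.
-/

open Matrix Module

section InnerProductSpace

variable {𝕜 E F : Type*} [RCLike 𝕜]
  [NormedAddCommGroup E] [InnerProductSpace 𝕜 E] [FiniteDimensional 𝕜 E]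
  [NormedAddCommGroup F] [InnerProductSpace 𝕜 F] [FiniteDimensional 𝕜 F]

theorem sum_norm_apply_sq_le_sum_norm_adjoint_apply_sq {ι κ : Type*} [Fintype ι] [Fintype κ]
    {u : κ → E} (hu : Orthonormal 𝕜 u) (b : OrthonormalBasis ι 𝕜 F) (T : E →ₗ[𝕜] F) :
    ∑ k, ‖T (u k)‖ ^ 2 ≤ ∑ i, ‖T.adjoint (b i)‖ ^ 2 :=
  calc ∑ k, ‖T (u k)‖ ^ 2
      = ∑ k, ∑ i, ‖inner 𝕜 (u k) (T.adjoint (b i))‖ ^ 2 := by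
        simp only [LinearMap.adjoint_inner_right, b.sum_sq_norm_inner_left]
    _ = ∑ i, ∑ k, ‖inner 𝕜 (u k) (T.adjoint (b i))‖ ^ 2 := Finset.sum_comm
    _ ≤ ∑ i, ‖T.adjoint (b i)‖ ^ 2 := Finset.sum_le_sum fun _ _ ↦ hu.sum_inner_products_le _

theorem mul_finrank_sub_finrank_range_le_sum_norm_adjoint_sub_sq {ι : Type*} [Fintype ι] {c : ℝ}
    {T : E →ₗ[𝕜] F} (hT : ∀ x, ‖T x‖ ^ 2 = c * ‖x‖ ^ 2) (S : E →ₗ[𝕜] F)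
    (b : OrthonormalBasis ι 𝕜 F) :
    c * (finrank 𝕜 E - finrank 𝕜 S.range) ≤ ∑ i, ‖(T - S).adjoint (b i)‖ ^ 2 := by
  let u := stdOrthonormalBasis 𝕜 S.ker
  have hu : Orthonormal 𝕜 fun k ↦ (u k : E) := u.orthonormal.comp_linearIsometry S.ker.subtypeₗᵢ
  have norm_sub_apply_sq (k) : ‖(T - S) (u k)‖ ^ 2 = c := by
    rw [LinearMap.sub_apply, LinearMap.mem_ker.1 (u k).2, sub_zero, hT, hu.1 k, one_pow, mul_one]
  have finrank_ker : (finrank 𝕜 E - finrank 𝕜 S.range : ℝ) = finrank 𝕜 S.ker := by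
    rw [← S.finrank_range_add_finrank_ker, Nat.cast_add, add_sub_cancel_left]
  calc c * (finrank 𝕜 E - finrank 𝕜 S.range)
      = ∑ k, ‖(T - S) (u k)‖ ^ 2 := by
        simp only [norm_sub_apply_sq, finrank_ker, Finset.sum_const, Finset.card_univ,
          Fintype.card_fin, nsmul_eq_mul, mul_comm]
    _ ≤ ∑ i, ‖(T - S).adjoint (b i)‖ ^ 2 :=
        sum_norm_apply_sq_le_sum_norm_adjoint_apply_sq hu b (T - S)

end InnerProductSpace

section Matrix

variable {𝕜 m n : Type*} [RCLike 𝕜] [Fintype n]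

theorem finrank_range_toEuclideanLin [Finite m] [DecidableEq n] (A : Matrix m n 𝕜) :
    finrank 𝕜 (toEuclideanLin A).range = A.rank :=
  (A.rank_eq_finrank_range_toLin (PiLp.basisFun 2 𝕜 m) (PiLp.basisFun 2 𝕜 n)).symm

variable [Fintype m]

theorem norm_toEuclideanLin_apply_sq_of_conjTranspose_mul_self [DecidableEq n]
    {A : Matrix m n 𝕜} {c : ℝ} (hA : Aᴴ * A = c • (1 : Matrix n n 𝕜)) (x : EuclideanSpace 𝕜 n) :
    ‖toEuclideanLin A x‖ ^ 2 = c * ‖x‖ ^ 2 := by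
  classical
  have adjoint_apply : (toEuclideanLin A).adjoint (toEuclideanLin A x) = (c : 𝕜) • x := by
    rw [← toEuclideanLin_conjTranspose_eq_adjoint, ← LinearMap.comp_apply,
      ← toLpLin_mul_same, hA, RCLike.real_smul_eq_coe_smul (K := 𝕜), map_smul, toLpLin_one,
      LinearMap.smul_apply, LinearMap.id_apply]
  rw [@norm_sq_eq_re_inner 𝕜, ← LinearMap.adjoint_inner_right, adjoint_apply, inner_smul_right,
    RCLike.re_ofReal_mul, ← norm_sq_eq_re_inner]

theorem norm_toEuclideanLin_basisFun_sq [DecidableEq n] (A : Matrix m n 𝕜) (j : n) :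
    ‖toEuclideanLin A (EuclideanSpace.basisFun n 𝕜 j)‖ ^ 2 = ∑ i, ‖A i j‖ ^ 2 := by
  simp [EuclideanSpace.norm_sq_eq]

open scoped ComplexOrder in
theorem mul_card_sub_rank_le_sum_norm_sub_sq [DecidableEq m] {A : Matrix m n 𝕜} {c : ℝ}
    (hA : A * Aᴴ = c • (1 : Matrix m m 𝕜)) (B : Matrix m n 𝕜) :
    c * (Fintype.card m - B.rank) ≤ ∑ i, ∑ j, ‖A i j - B i j‖ ^ 2 := by
  classical
  have adjoint_sub : (toEuclideanLin Aᴴ - toEuclideanLin Bᴴ).adjoint = toEuclideanLin (A - B) := by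
    rw [← map_sub, ← toEuclideanLin_conjTranspose_eq_adjoint, ← conjTranspose_sub,
      conjTranspose_conjTranspose]
  have norm_sq := norm_toEuclideanLin_apply_sq_of_conjTranspose_mul_self (A := Aᴴ)
    (by rwa [conjTranspose_conjTranspose])
  have bound := mul_finrank_sub_finrank_range_le_sum_norm_adjoint_sub_sq norm_sq
    (toEuclideanLin Bᴴ) (EuclideanSpace.basisFun n 𝕜)
  simp only [adjoint_sub, norm_toEuclideanLin_basisFun_sq, finrank_range_toEuclideanLin,
    rank_conjTranspose, finrank_euclideanSpace, Matrix.sub_apply] at bound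
  rwa [Finset.sum_comm]

theorem exists_sqrt_le_norm_of_le_sum_norm_sq [Nonempty m] [Nonempty n] {α : Type*}
    [SeminormedAddGroup α] {M : Matrix m n α} {s : ℝ} (hs : s ≤ ∑ i, ∑ j, ‖M i j‖ ^ 2) :
    ∃ i j, √(s / (Fintype.card m * Fintype.card n)) ≤ ‖M i j‖ := by
  have sum_mean : ∑ _p : m × n, s / (Fintype.card m * Fintype.card n) = s := by
    simp [mul_div_cancel₀]
  obtain ⟨⟨i, j⟩, -, hij⟩ := Finset.exists_le_of_sum_le Finset.univ_nonempty
    (sum_mean.trans_le (hs.trans_eq (Fintype.sum_prod_type' fun i j ↦ ‖M i j‖ ^ 2).symm))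
  exact ⟨i, j, Real.sqrt_le_iff.2 ⟨norm_nonneg _, hij⟩⟩

theorem hadamard_linfty_rigid_general [Nonempty m] [Nonempty n] [DecidableEq m]
    {A : Matrix m n 𝕜} {c : ℝ} (hA : A * Aᴴ = c • (1 : Matrix m m 𝕜)) (B : Matrix m n 𝕜) :
    ∃ i j, √(c / Fintype.card n * (1 - B.rank / Fintype.card m)) ≤ ‖A i j - B i j‖ := by
  have mean_eq : c * (Fintype.card m - B.rank) / (Fintype.card m * Fintype.card n)
      = c / Fintype.card n * (1 - B.rank / Fintype.card m) := by
    field_simp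
  rw [← mean_eq]
  exact exists_sqrt_le_norm_of_le_sum_norm_sq (M := A - B)
    (mul_card_sub_rank_le_sum_norm_sub_sq hA B)

end Matrix

/-- A Hadamard matrix (±1 entries, `A Aᵀ = n·I`) cannot be approximated entrywise by
low-rank matrices: if `rank B ≤ m ≤ n` then `max |A_{ij} - B_{ij}| ≥ √(1 - m/n)`;
in particular, if `rank B ≤ εn` with `ε ∈ (0,1)`, then `max |A_{ij} - B_{ij}| ≥ √(1-ε)`. -/
theorem hadamard_linfty_rigid (n : ℕ) (hn : 0 < n) (A : Matrix (Fin n) (Fin n) ℝ)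
    (hA : ∀ i j, A i j = 1 ∨ A i j = -1)
    (hAA : A * A.transpose = (n : ℝ) • (1 : Matrix (Fin n) (Fin n) ℝ)) :
    (∀ m : ℕ, m ≤ n → ∀ B : Matrix (Fin n) (Fin n) ℝ, B.rank ≤ m →
      ∃ i j, Real.sqrt (1 - (m : ℝ) / n) ≤ |A i j - B i j|) ∧
    (∀ ε : ℝ, 0 < ε → ε < 1 → ∀ B : Matrix (Fin n) (Fin n) ℝ, (B.rank : ℝ) ≤ ε * n →
      ∃ i j, Real.sqrt (1 - ε) ≤ |A i j - B i j|) := by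
  have : NeZero n := ⟨hn.ne'⟩
  have rigid (t : ℝ) (B : Matrix (Fin n) (Fin n) ℝ) (hB : B.rank / (n : ℝ) ≤ t) :
      ∃ i j, √(1 - t) ≤ |A i j - B i j| := by
    obtain ⟨i, j, hij⟩ := hadamard_linfty_rigid_general hAA B
    rw [Fintype.card_fin, div_self (NeZero.ne _), one_mul] at hij
    exact ⟨i, j, (Real.sqrt_le_sqrt (sub_le_sub_left hB 1)).trans hij⟩
  exact ⟨fun m _ B hB ↦ rigid _ B (by gcongr),
    fun ε _ _ B hB ↦ rigid ε B ((div_le_iff₀ (Nat.cast_pos.2 hn)).2 hB)⟩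
end

section
/- There is an absolute constant c > 0 with the following property. Let ε ∈ (0,1), n ∈ ℕ, and let R be a linear subspace of ℝ^n with dim R ≤ (1−ε)n. Then 2^{−n} ∑_{u ∈ {−1,1}^n} dist_{ℓ_1^n}(u, R) ≥ c ε² n, where dist_{ℓ_1^n}(u, R) = inf_{v ∈ R} ∑_{i=1}^n |u_i − v_i|. -/
/-!
Let `k = n - dim R`. Moving `x - v`, `v ∈ R`, along lines of `R` towards a vertex of the
corresponding linear program shows that the `ℓ¹` distance from `x` to `R` is at least `‖π_S x‖₁`
for one of the at most `n.choose k` coordinate subspaces `ℝ^S` complementary to `R`, where `π_S` is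
the projection onto `ℝ^S` along `R`. On the coordinates in `S`, `π_S` acts as a translation, so for
`x` uniform in `[-1, 1]^n` Fubini gives `𝔼 exp (-θ dist(x, R)) ≤ n.choose k * θ⁻¹ ^ k`. The distance
is convex, hence its mean over the cube is at most its mean `D` over the vertices, and Jensen's
inequality yields `exp (-θ D) ≤ n.choose k * θ⁻¹ ^ k`. As `n.choose k ≤ (e n / k) ^ k`, taking
`θ = e² n / k` gives `D ≥ k² / (e² n)`.
-/

open Finset MeasureTheory ProbabilityTheory

section CoordinateSubspaces

variable {ι K : Type*} [Field K]

variable (K) in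
/-- The subspace `K^S ⊆ K^ι` of vectors supported on `S`, as an intersection of kernels of
coordinate projections. -/
def coordSubspace (S : Finset ι) : Submodule K (ι → K) :=
  ⨅ i ∈ (S : Set ι)ᶜ, LinearMap.ker (LinearMap.proj i : (ι → K) →ₗ[K] K)

lemma mem_coordSubspace {S : Finset ι} {z : ι → K} :
    z ∈ coordSubspace K S ↔ ∀ i ∉ S, z i = 0 := by
  simp [coordSubspace, Submodule.mem_iInf]

lemma finrank_coordSubspace (S : Finset ι) :
    Module.finrank K (coordSubspace K S) = #S := by
  classical
  have e := LinearMap.iInfKerProjEquiv K (fun _ : ι ↦ K) (I := S) (J := (S : Set ι)ᶜ)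
    disjoint_compl_right (by simp)
  exact e.finrank_eq.trans (by simp)

lemma coordSubspace_insert_le [DecidableEq ι] (S : Finset ι) (j : ι) :
    coordSubspace K (insert j S) ≤ coordSubspace K S ⊔ K ∙ (Pi.single j 1 : ι → K) := by
  intro z hz
  rw [mem_coordSubspace] at hz
  refine Submodule.mem_sup.2 ⟨z - z j • Pi.single j 1, mem_coordSubspace.2 fun i hi ↦ ?_,
    z j • Pi.single j 1, Submodule.smul_mem _ _ (Submodule.mem_span_singleton_self _), by simp⟩
  rcases eq_or_ne i j with rfl | hij
  · simp
  · simp [hij, hz i (by simp [hij, hi])]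

variable {R : Submodule K (ι → K)}

lemma exists_superset_isCompl_coordSubspace [Finite ι] {T : Finset ι}
    (hT : Disjoint (coordSubspace K T) R) : ∃ S ⊇ T, IsCompl (coordSubspace K S) R := by
  classical
  have := Fintype.ofFinite ι
  obtain ⟨S, hTS, hS⟩ :=
    Finite.exists_le_maximal (p := fun S : Finset ι ↦ Disjoint (coordSubspace K S) R) hT
  refine ⟨S, hTS, hS.prop, codisjoint_iff.2 (eq_top_iff.2 fun z _ ↦ ?_)⟩
  suffices hsingle : ∀ j, (Pi.single j 1 : ι → K) ∈ coordSubspace K S ⊔ R by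
    rw [pi_eq_sum_univ' z]
    exact Submodule.sum_mem _ fun j _ ↦ Submodule.smul_mem _ _ (hsingle j)
  intro j
  by_contra hj
  have hspan : Disjoint (R ⊔ coordSubspace K S) (K ∙ (Pi.single j 1 : ι → K)) := by
    rw [Submodule.disjoint_span_singleton' (by simp), sup_comm]
    exact hj
  have hinsert : Disjoint (coordSubspace K (insert j S)) R :=
    ((hS.prop.symm.disjoint_sup_right_of_disjoint_sup_left hspan).mono_right
      (coordSubspace_insert_le S j)).symm
  have hjS : j ∈ S := hS.le_of_ge hinsert (subset_insert j S) (mem_insert_self j S)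
  exact hj (Submodule.mem_sup_left (mem_coordSubspace.2 fun i hi ↦
    Pi.single_eq_of_ne (ne_of_mem_of_not_mem hjS hi).symm 1))

variable [Fintype ι]

lemma card_of_isCompl_coordSubspace {S : Finset ι} (h : IsCompl (coordSubspace K S) R) :
    #S = Fintype.card ι - Module.finrank K R := by
  have hdim := Submodule.finrank_add_eq_of_isCompl h
  rw [finrank_coordSubspace, Module.finrank_fintype_fun_eq_card] at hdim
  lia

variable (R) in
lemma card_isCompl_coordSubspace_le [Fintype {S : Finset ι // IsCompl (coordSubspace K S) R}] :
    Fintype.card {S : Finset ι // IsCompl (coordSubspace K S) R} ≤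
      (Fintype.card ι).choose (Fintype.card ι - Module.finrank K R) := by
  classical
  rw [← card_univ (α := ι), ← card_powersetCard, Fintype.card_subtype]
  exact card_le_card fun S hS ↦ mem_powersetCard.2
    ⟨subset_univ S, card_of_isCompl_coordSubspace (mem_filter_univ S |>.1 hS)⟩

end CoordinateSubspaces

section BasicSolutions

variable {ι : Type*} [Fintype ι]

lemma exists_forall_sum_abs_add_mul_le (z r : ι → ℝ) :
    ∃ t, ∀ s, ∑ i, |z i + t * r i| ≤ ∑ i, |z i + s * r i| := by
  rcases eq_or_ne r 0 with rfl | hr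
  · exact ⟨0, by simp⟩
  obtain ⟨j, hj⟩ := Function.ne_iff.1 hr
  have hcont : Continuous fun t ↦ ∑ i, |z i + t * r i| := by fun_prop
  refine hcont.exists_forall_le ?_
  have hcoord : Filter.Tendsto (fun t ↦ |z j + t * r j|) (Filter.cocompact ℝ) Filter.atTop :=
    (tendsto_norm_cocompact_atTop (E := ℝ)).comp <| Topology.IsClosedEmbedding.tendsto_cocompact
      ((Homeomorph.mulRight₀ (r j) hj).trans (Homeomorph.addLeft (z j))).isClosedEmbedding
  refine Filter.tendsto_atTop_mono (fun t ↦ ?_) hcoord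
  exact single_le_sum (f := fun i ↦ |z i + t * r i|) (fun _ _ ↦ abs_nonneg _) (mem_univ j)

lemma abs_add_add_abs_sub_of_abs_le {a b : ℝ} (h : |b| ≤ |a|) : |a + b| + |a - b| = 2 * |a| := by
  cases abs_cases a <;> cases abs_cases b <;> cases abs_cases (a + b) <;>
    cases abs_cases (a - b) <;> linarith

/-- At a minimizer `w` of the `ℓ¹` norm along the line, the norm is affine on a segment `w ± s • r`
until a coordinate vanishes, hence constant there. -/
lemma exists_sum_abs_add_mul_le_and_eq_zero (z : ι → ℝ) {r : ι → ℝ} (hr : r ≠ 0) :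
    ∃ t, ∑ i, |z i + t * r i| ≤ ∑ i, |z i| ∧ ∃ i, r i ≠ 0 ∧ z i + t * r i = 0 := by
  obtain ⟨t, ht⟩ := exists_forall_sum_abs_add_mul_le z r
  set w := fun i ↦ z i + t * r i with hw
  have hsupp : ({i | r i ≠ 0} : Finset ι).Nonempty := by
    simpa [Finset.Nonempty] using Function.ne_iff.1 hr
  obtain ⟨j, hj, hmin⟩ := exists_min_image _ (fun i ↦ |w i| / |r i|) hsupp
  simp only [mem_filter_univ] at hj hmin
  set s := w j / r j with hs
  have hle : ∀ i, |s * r i| ≤ |w i| := by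
    intro i
    rcases eq_or_ne (r i) 0 with hi | hi
    · simp [hi]
    · rw [abs_mul, hs, abs_div, ← le_div_iff₀ (abs_pos.2 hi)]
      exact hmin i hi
  have hsum : ∑ i, |w i + s * r i| + ∑ i, |w i - s * r i| = 2 * ∑ i, |w i| := by
    simp only [← sum_add_distrib, mul_sum, abs_add_add_abs_sub_of_abs_le (hle _)]
  have hplus : ∑ i, |w i| ≤ ∑ i, |w i + s * r i| := by
    simpa [hw, add_assoc, ← add_mul] using ht (t + s)
  have hsub : ∀ i, z i + (t - s) * r i = w i - s * r i := fun i ↦ by simp only [hw]; ring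
  refine ⟨t - s, ?_, j, hj, ?_⟩
  · have hzero : ∑ i, |w i| ≤ ∑ i, |z i| := by simpa using ht 0
    simp only [hsub]
    linarith
  · rw [hsub, hs, div_mul_cancel₀ _ hj, sub_self]

lemma exists_isCompl_sum_abs_projection_le (R : Submodule ℝ (ι → ℝ)) (z : ι → ℝ) :
    ∃ (S : Finset ι) (h : IsCompl (coordSubspace ℝ S) R),
      ∑ i, |(coordSubspace ℝ S).projection R h z i| ≤ ∑ i, |z i| := by
  induction hm : #{i | z i ≠ 0} using Nat.strong_induction_on generalizing z with
  | _ m ih =>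
    by_cases hdisj : Disjoint (coordSubspace ℝ {i | z i ≠ 0}) R
    · obtain ⟨S, hTS, h⟩ := exists_superset_isCompl_coordSubspace hdisj
      have hz : z ∈ coordSubspace ℝ S := mem_coordSubspace.2 fun i hi ↦ by
        by_contra hzi
        exact hi (hTS (by simpa using hzi))
      exact ⟨S, h, by rw [Submodule.projection_apply_of_mem_left h hz]⟩
    · obtain ⟨r, hrT, hrR, hr⟩ : ∃ r ∈ coordSubspace ℝ {i | z i ≠ 0}, r ∈ R ∧ r ≠ 0 := by
        simpa [Submodule.disjoint_def] using hdisj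
      have hrz : ∀ i, z i = 0 → r i = 0 := by simpa [mem_coordSubspace] using hrT
      obtain ⟨t, hle, j, hrj, hj⟩ := exists_sum_abs_add_mul_le_and_eq_zero z hr
      have hlt : #{i | (z + t • r) i ≠ 0} < m := by
        rw [← hm]
        refine card_lt_card (ssubset_iff_of_subset ?_ |>.2 ⟨j, ?_, ?_⟩)
        · refine monotone_filter_right _ fun i _ hi hzi ↦ hi ?_
          simp [hzi, hrz i hzi]
        · simpa using mt (hrz j) hrj
        · simpa using hj
      obtain ⟨S, h, hS⟩ := ih _ hlt (z + t • r) rfl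
      have hproj : (coordSubspace ℝ S).projection R h r = 0 :=
        (Submodule.projection_apply_eq_zero_iff h).2 hrR
      refine ⟨S, h, ?_⟩
      rw [map_add, map_smul, hproj, smul_zero, add_zero] at hS
      exact hS.trans hle

end BasicSolutions

section L1Dist

variable {ι : Type*} [Fintype ι] (R : Submodule ℝ (ι → ℝ))

/-- The `ℓ¹` distance from `x` to the subspace `R`, spelled out on `ι → ℝ` because the norm that
Mathlib puts on this type is the sup norm. -/
noncomputable def l1Dist (x : ι → ℝ) : ℝ :=
  ⨅ v : R, ∑ i, |x i - (v : ι → ℝ) i|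

lemma l1Dist_nonneg (x : ι → ℝ) : 0 ≤ l1Dist R x :=
  Real.iInf_nonneg fun _ ↦ sum_nonneg fun _ _ ↦ abs_nonneg _

variable {R} in
lemma l1Dist_le_of_mem {v : ι → ℝ} (hv : v ∈ R) (x : ι → ℝ) : l1Dist R x ≤ ∑ i, |x i - v i| :=
  ciInf_le ⟨0, Set.forall_mem_range.2 fun _ ↦ sum_nonneg fun _ _ ↦ abs_nonneg _⟩ (⟨v, hv⟩ : R)

lemma convexOn_l1Dist : ConvexOn ℝ Set.univ (l1Dist R) := by
  refine ⟨convex_univ, fun x _ y _ a b ha hb hab ↦ le_of_forall_pos_le_add fun δ hδ ↦ ?_⟩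
  obtain ⟨v, hv⟩ := exists_lt_of_ciInf_lt (lt_add_of_pos_right (l1Dist R x) hδ)
  obtain ⟨w, hw⟩ := exists_lt_of_ciInf_lt (lt_add_of_pos_right (l1Dist R y) hδ)
  calc l1Dist R (a • x + b • y)
      ≤ ∑ i, |(a • x + b • y) i - (a • v + b • w : R).1 i| := l1Dist_le_of_mem (Subtype.prop _) _
    _ = ∑ i, |a * (x i - v.1 i) + b * (y i - w.1 i)| := by
        refine sum_congr rfl fun i _ ↦ congrArg _ ?_
        simp only [Pi.add_apply, Pi.smul_apply, smul_eq_mul, Submodule.coe_add, Submodule.coe_smul]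
        ring
    _ ≤ ∑ i, (a * |x i - v.1 i| + b * |y i - w.1 i|) := by
        refine sum_le_sum fun i _ ↦ (abs_add_le _ _).trans_eq ?_
        rw [abs_mul, abs_mul, abs_of_nonneg ha, abs_of_nonneg hb]
    _ = a * ∑ i, |x i - v.1 i| + b * ∑ i, |y i - w.1 i| := by
        rw [sum_add_distrib, mul_sum, mul_sum]
    _ ≤ a * (l1Dist R x + δ) + b * (l1Dist R y + δ) := by gcongr
    _ = a • l1Dist R x + b • l1Dist R y + δ := by
        rw [smul_eq_mul, smul_eq_mul]
        linear_combination δ * hab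

lemma continuous_l1Dist : Continuous (l1Dist R) :=
  continuousOn_univ.1 ((convexOn_l1Dist R).continuousOn isOpen_univ)

lemma exists_isCompl_sum_abs_projection_le_l1Dist (x : ι → ℝ) :
    ∃ S : {S : Finset ι // IsCompl (coordSubspace ℝ S) R},
      ∑ i, |(coordSubspace ℝ S.1).projection R S.2 x i| ≤ l1Dist R x := by
  have hproj : ∀ v : R, ∃ S : {S : Finset ι // IsCompl (coordSubspace ℝ S) R},
      ∑ i, |(coordSubspace ℝ S.1).projection R S.2 x i| ≤ ∑ i, |x i - v.1 i| := by
    intro v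
    obtain ⟨S, h, hS⟩ := exists_isCompl_sum_abs_projection_le R (x - v)
    rw [map_sub, (Submodule.projection_apply_eq_zero_iff h).2 v.2, sub_zero] at hS
    exact ⟨⟨S, h⟩, hS⟩
  have : Nonempty {S : Finset ι // IsCompl (coordSubspace ℝ S) R} := ⟨(hproj 0).choose⟩
  obtain ⟨S, hS⟩ := Finite.exists_min
    fun S : {S : Finset ι // IsCompl (coordSubspace ℝ S) R} ↦
      ∑ i, |(coordSubspace ℝ S.1).projection R S.2 x i|
  refine ⟨S, le_ciInf fun v ↦ ?_⟩
  obtain ⟨T, hT⟩ := hproj v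
  exact (hS T).trans hT

end L1Dist

section Laplace

variable {ι : Type*} [Fintype ι] {ν : Measure ℝ} [IsProbabilityMeasure ν] {θ B : ℝ}

lemma integrable_exp_neg_mul {Ω : Type*} [MeasurableSpace Ω] {μ : Measure Ω} [IsFiniteMeasure μ]
    {f : Ω → ℝ} (hθ : 0 ≤ θ) (hf : Measurable f) (hf0 : ∀ ω, 0 ≤ f ω) :
    Integrable (fun ω ↦ Real.exp (-(θ * f ω))) μ := by
  refine .of_bound (by fun_prop) 1 (.of_forall fun ω ↦ ?_)
  rw [Real.norm_of_nonneg (Real.exp_pos _).le, Real.exp_le_one_iff, neg_nonpos]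
  exact mul_nonneg hθ (hf0 ω)

lemma integral_exp_neg_mul_sum_abs_sub_le
    (hB : ∀ c, ∫ t, Real.exp (-(θ * |t - c|)) ∂ν ≤ B) (c : ι → ℝ) :
    ∫ y, Real.exp (-(θ * ∑ i, |y i - c i|)) ∂Measure.pi (fun _ : ι ↦ ν) ≤
      B ^ Fintype.card ι := by
  calc ∫ y, Real.exp (-(θ * ∑ i, |y i - c i|)) ∂Measure.pi (fun _ : ι ↦ ν)
      = ∏ i, ∫ t, Real.exp (-(θ * |t - c i|)) ∂ν := by
        simp only [mul_sum, ← sum_neg_distrib, Real.exp_sum]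
        exact integral_fintype_prod_eq_prod fun i t ↦ Real.exp (-(θ * |t - c i|))
    _ ≤ ∏ _i : ι, B :=
        prod_le_prod (fun _ _ ↦ integral_nonneg fun _ ↦ (Real.exp_pos _).le) fun i _ ↦ hB (c i)
    _ = B ^ Fintype.card ι := by simp

variable {R : Submodule ℝ (ι → ℝ)} {S : Finset ι}

lemma sum_abs_projection_updateFinset [DecidableEq ι] (h : IsCompl (coordSubspace ℝ S) R)
    (x : ι → ℝ) (y : S → ℝ) :
    ∑ i, |(coordSubspace ℝ S).projection R h (Function.updateFinset x S y) i| =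
      ∑ i : S, |y i - (x i - (coordSubspace ℝ S).projection R h x i)| := by
  set p := (coordSubspace ℝ S).projection R h
  have hdiff : Function.updateFinset x S y - x ∈ coordSubspace ℝ S :=
    mem_coordSubspace.2 fun i hi ↦ by simp [Function.updateFinset, hi]
  have hp : p (Function.updateFinset x S y) = p x + (Function.updateFinset x S y - x) := by
    rw [← Submodule.projection_apply_of_mem_left h hdiff, ← map_add, add_sub_cancel]
  have hmem : p (Function.updateFinset x S y) ∈ coordSubspace ℝ S :=
    Submodule.projection_apply_mem h _
  calc ∑ i, |p (Function.updateFinset x S y) i|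
      = ∑ i ∈ S, |p (Function.updateFinset x S y) i| :=
        (sum_subset (subset_univ S) fun i _ hi ↦ by
          rw [mem_coordSubspace.1 hmem i hi, abs_zero]).symm
    _ = ∑ i : S, |p (Function.updateFinset x S y) i| := (sum_coe_sort S _).symm
    _ = ∑ i : S, |y i - (x i - p x i)| := by
        refine sum_congr rfl fun i _ ↦ congrArg _ ?_
        simp only [hp, Pi.add_apply, Pi.sub_apply, Function.updateFinset, i.2, dite_true]
        ring

lemma integral_exp_neg_mul_sum_abs_projection_le (hθ : 0 ≤ θ)
    (hB : ∀ c, ∫ t, Real.exp (-(θ * |t - c|)) ∂ν ≤ B) (h : IsCompl (coordSubspace ℝ S) R) :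
    ∫ x, Real.exp (-(θ * ∑ i, |(coordSubspace ℝ S).projection R h x i|))
      ∂Measure.pi (fun _ : ι ↦ ν) ≤ B ^ #S := by
  classical
  set p := (coordSubspace ℝ S).projection R h
  have hB0 : 0 ≤ B := (integral_nonneg fun _ ↦ (Real.exp_pos _).le).trans (hB 0)
  have : Continuous p := p.continuous_of_finiteDimensional
  rw [integral_eq_lintegral_of_nonneg_ae (.of_forall fun _ ↦ (Real.exp_pos _).le) (by fun_prop)]
  refine ENNReal.toReal_le_of_le_ofReal (by positivity) ?_
  calc ∫⁻ x, ENNReal.ofReal (Real.exp (-(θ * ∑ i, |p x i|))) ∂Measure.pi (fun _ : ι ↦ ν)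
      ≤ ∫⁻ _, ENNReal.ofReal (B ^ #S) ∂Measure.pi (fun _ : ι ↦ ν) := by
        refine lintegral_le_of_lmarginal_le S (by fun_prop) measurable_const fun x ↦ ?_
        simp only [lmarginal, lintegral_const, measure_univ, mul_one,
          p, sum_abs_projection_updateFinset]
        rw [← ofReal_integral_eq_lintegral_ofReal
          (integrable_exp_neg_mul hθ (by fun_prop) fun _ ↦ sum_nonneg fun _ _ ↦ abs_nonneg _)
          (.of_forall fun _ ↦ (Real.exp_pos _).le)]
        refine ENNReal.ofReal_le_ofReal ?_
        simpa using integral_exp_neg_mul_sum_abs_sub_le hB fun i : S ↦ x i - p x i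
    _ = ENNReal.ofReal (B ^ #S) := by simp

lemma integral_exp_neg_mul_l1Dist_le (R : Submodule ℝ (ι → ℝ)) (hθ : 0 ≤ θ)
    (hB : ∀ c, ∫ t, Real.exp (-(θ * |t - c|)) ∂ν ≤ B) :
    ∫ x, Real.exp (-(θ * l1Dist R x)) ∂Measure.pi (fun _ : ι ↦ ν) ≤
      (Fintype.card ι).choose (Fintype.card ι - Module.finrank ℝ R) *
        B ^ (Fintype.card ι - Module.finrank ℝ R) := by
  classical
  have hB0 : 0 ≤ B := (integral_nonneg fun _ ↦ (Real.exp_pos _).le).trans (hB 0)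
  let 𝓢 := {S : Finset ι // IsCompl (coordSubspace ℝ S) R}
  let F : 𝓢 → (ι → ℝ) → ℝ := fun S x ↦
    Real.exp (-(θ * ∑ i, |(coordSubspace ℝ S.1).projection R S.2 x i|))
  have hF : ∀ S ∈ univ, Integrable (F S) (Measure.pi fun _ ↦ ν) := fun S _ ↦ by
    have hcont := ((coordSubspace ℝ S.1).projection R S.2).continuous_of_finiteDimensional
    exact integrable_exp_neg_mul hθ (by fun_prop) fun _ ↦ sum_nonneg fun _ _ ↦ abs_nonneg _
  have hpoint : ∀ x, Real.exp (-(θ * l1Dist R x)) ≤ ∑ S, F S x := fun x ↦ by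
    obtain ⟨S, hS⟩ := exists_isCompl_sum_abs_projection_le_l1Dist R x
    calc Real.exp (-(θ * l1Dist R x)) ≤ F S x := by dsimp only [F]; gcongr
      _ ≤ ∑ S, F S x :=
        single_le_sum (f := (F · x)) (fun _ _ ↦ (Real.exp_pos _).le) (mem_univ S)
  calc ∫ x, Real.exp (-(θ * l1Dist R x)) ∂Measure.pi (fun _ : ι ↦ ν)
      ≤ ∫ x, ∑ S, F S x ∂Measure.pi (fun _ : ι ↦ ν) :=
        integral_mono (integrable_exp_neg_mul hθ (continuous_l1Dist R).measurable
          (l1Dist_nonneg R)) (integrable_finsetSum _ hF) hpoint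
    _ = ∑ S, ∫ x, F S x ∂Measure.pi (fun _ : ι ↦ ν) := integral_finsetSum _ hF
    _ ≤ ∑ S : 𝓢, B ^ #S.1 :=
        sum_le_sum fun S _ ↦ integral_exp_neg_mul_sum_abs_projection_le hθ hB S.2
    _ = Fintype.card 𝓢 * B ^ (Fintype.card ι - Module.finrank ℝ R) := by
        simp only [fun S : 𝓢 ↦ card_of_isCompl_coordSubspace S.2, sum_const, card_univ,
          nsmul_eq_mul]
    _ ≤ _ := by
        gcongr
        exact card_isCompl_coordSubspace_le R

end Laplace

section CubeVertices

variable {ι : Type*}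

/-- The vertex of the cube `[-1, 1]^ι` with sign pattern `s`, where `true` encodes `+1`. -/
def cubeVertex (s : ι → Bool) : ι → ℝ := fun i ↦ if s i then 1 else -1

lemma cubeVertex_mem_Icc (s : ι → Bool) : cubeVertex s ∈ Set.Icc (-1 : ι → ℝ) 1 := by
  constructor <;> intro i <;> simp only [cubeVertex] <;> split_ifs <;> norm_num

variable [Fintype ι]

/-- The multi-affine interpolation weight of the vertex `cubeVertex s` at the point `x`: the
probability of `s` when the signs are independent with means `x i`. -/
noncomputable def vertexWeight (x : ι → ℝ) (s : ι → Bool) : ℝ :=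
  ∏ i, (1 + cubeVertex s i * x i) / 2

lemma vertexWeight_nonneg {x : ι → ℝ} (hx : x ∈ Set.Icc (-1) 1) (s : ι → Bool) :
    0 ≤ vertexWeight x s := by
  refine prod_nonneg fun i _ ↦ div_nonneg ?_ zero_le_two
  have hlower : -1 ≤ x i := hx.1 i
  have hupper : x i ≤ 1 := hx.2 i
  unfold cubeVertex
  split_ifs <;> linarith

variable {ν : Measure ℝ} [IsProbabilityMeasure ν]

lemma integrable_vertexWeight (hint : Integrable (fun t ↦ t) ν) (s : ι → Bool) :
    Integrable (vertexWeight · s) (Measure.pi fun _ : ι ↦ ν) :=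
  .fintype_prod (f := fun i t ↦ (1 + cubeVertex s i * t) / 2) fun i ↦
    ((integrable_const 1).add (hint.const_mul (cubeVertex s i))).div_const 2

lemma integral_vertexWeight (hint : Integrable (fun t ↦ t) ν) (hmean : ∫ t, t ∂ν = 0)
    (s : ι → Bool) :
    ∫ x, vertexWeight x s ∂Measure.pi (fun _ : ι ↦ ν) = (2 ^ Fintype.card ι)⁻¹ := by
  have hcoord : ∀ i, ∫ t, (1 + cubeVertex s i * t) / 2 ∂ν = 2⁻¹ := fun i ↦ by
    rw [integral_div, integral_add (integrable_const 1) (hint.const_mul _), integral_const_mul,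
      hmean]
    simp
  calc ∫ x, vertexWeight x s ∂Measure.pi (fun _ : ι ↦ ν)
      = ∏ i, ∫ t, (1 + cubeVertex s i * t) / 2 ∂ν :=
        integral_fintype_prod_eq_prod fun i t ↦ (1 + cubeVertex s i * t) / 2
    _ = (2 ^ Fintype.card ι)⁻¹ := by simp [hcoord]

variable [DecidableEq ι]

lemma sum_vertexWeight (x : ι → ℝ) : ∑ s, vertexWeight x s = 1 := by
  have hprod := Fintype.prod_sum fun (i : ι) (b : Bool) ↦ (1 + (if b then 1 else -1) * x i) / 2
  refine hprod.symm.trans (prod_eq_one fun i _ ↦ ?_)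
  simp only [Fintype.sum_bool, if_true, Bool.false_eq_true, if_false]
  ring

lemma sum_vertexWeight_smul_cubeVertex (x : ι → ℝ) :
    ∑ s, vertexWeight x s • cubeVertex s = x := by
  funext j
  let g (i : ι) (b : Bool) : ℝ :=
    (1 + (if b then 1 else -1) * x i) / 2 * if i = j then (if b then 1 else -1) else 1
  have hg : ∀ s, vertexWeight x s * cubeVertex s j = ∏ i, g i (s i) := fun s ↦ by
    simp only [g, vertexWeight, cubeVertex, prod_mul_distrib, prod_ite_eq', mem_univ, if_true]
  calc (∑ s, vertexWeight x s • cubeVertex s) j = ∑ s : ι → Bool, ∏ i, g i (s i) := by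
        simp only [Finset.sum_apply, Pi.smul_apply, smul_eq_mul, hg]
    _ = ∏ i, ∑ b, g i b := (Fintype.prod_sum g).symm
    _ = ∏ i, if i = j then x i else 1 := by
        refine prod_congr rfl fun i _ ↦ ?_
        simp only [g, Fintype.sum_bool, if_true, Bool.false_eq_true, if_false]
        split_ifs <;> ring
    _ = x j := by simp

lemma le_sum_vertexWeight_mul_of_convexOn {f : (ι → ℝ) → ℝ} (hf : ConvexOn ℝ (Set.Icc (-1) 1) f)
    {x : ι → ℝ} (hx : x ∈ Set.Icc (-1) 1) :
    f x ≤ ∑ s, vertexWeight x s * f (cubeVertex s) := by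
  have hjensen := hf.map_sum_le (t := univ) (w := vertexWeight x) (p := cubeVertex)
    (fun s _ ↦ vertexWeight_nonneg hx s) (sum_vertexWeight x) fun s _ ↦ cubeVertex_mem_Icc s
  rwa [sum_vertexWeight_smul_cubeVertex] at hjensen

lemma integral_le_average_cubeVertex_of_convexOn {f : (ι → ℝ) → ℝ}
    (hf : ConvexOn ℝ (Set.Icc (-1) 1) f) (hfint : Integrable f (Measure.pi fun _ : ι ↦ ν))
    (hν : ∀ᵐ t ∂ν, t ∈ Set.Icc (-1) 1) (hmean : ∫ t, t ∂ν = 0) :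
    ∫ x, f x ∂Measure.pi (fun _ : ι ↦ ν) ≤
      (2 ^ Fintype.card ι)⁻¹ * ∑ s : ι → Bool, f (cubeVertex s) := by
  have hcube : ∀ᵐ x ∂Measure.pi (fun _ : ι ↦ ν), x ∈ Set.Icc (-1) 1 := by
    have hcoord : ∀ᵐ x ∂Measure.pi (fun _ : ι ↦ ν), ∀ i, x i ∈ Set.Icc (-1) 1 :=
      ae_all_iff.2 fun i ↦ (Measure.tendsto_eval_ae_ae (μ := fun _ : ι ↦ ν)).eventually hν
    filter_upwards [hcoord] with x hx
    exact ⟨fun i ↦ (hx i).1, fun i ↦ (hx i).2⟩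
  have hint : Integrable (fun t ↦ t) ν := .of_mem_Icc (-1) 1 aemeasurable_id hν
  have hterm : ∀ s ∈ univ, Integrable (fun x ↦ vertexWeight x s * f (cubeVertex s))
      (Measure.pi fun _ : ι ↦ ν) :=
    fun s _ ↦ (integrable_vertexWeight hint s).mul_const _
  calc ∫ x, f x ∂Measure.pi (fun _ : ι ↦ ν)
      ≤ ∫ x, ∑ s, vertexWeight x s * f (cubeVertex s) ∂Measure.pi (fun _ : ι ↦ ν) :=
        integral_mono_ae hfint (integrable_finsetSum _ hterm)
          (hcube.mono fun x hx ↦ le_sum_vertexWeight_mul_of_convexOn hf hx)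
    _ = ∑ s, (∫ x, vertexWeight x s ∂Measure.pi (fun _ : ι ↦ ν)) * f (cubeVertex s) := by
        rw [integral_finsetSum _ hterm]
        simp only [integral_mul_const]
    _ = (2 ^ Fintype.card ι)⁻¹ * ∑ s : ι → Bool, f (cubeVertex s) := by
        simp only [integral_vertexWeight hint hmean, mul_sum]

end CubeVertices

section UniformInterval

/-- The uniform probability measure on `[-1, 1]`. -/
noncomputable def uniformInterval : Measure ℝ :=
  volume[|Set.Icc (-1) 1]

instance : IsProbabilityMeasure uniformInterval :=
  cond_isProbabilityMeasure_of_finite (by norm_num) (by simp)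

lemma ae_uniformInterval_mem_Icc : ∀ᵐ t ∂uniformInterval, t ∈ Set.Icc (-1) 1 :=
  ae_cond_mem measurableSet_Icc

lemma integral_uniformInterval (f : ℝ → ℝ) :
    ∫ t, f t ∂uniformInterval = 2⁻¹ * ∫ t in Set.Icc (-1) 1, f t := by
  have hvol : (volume (Set.Icc (-1 : ℝ) 1))⁻¹.toReal = 2⁻¹ := by norm_num
  rw [uniformInterval, ProbabilityTheory.cond, integral_smul_measure, hvol, smul_eq_mul]

lemma integral_id_uniformInterval : ∫ t, t ∂uniformInterval = 0 := by
  rw [integral_uniformInterval, integral_Icc_eq_integral_Ioc,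
    ← intervalIntegral.integral_of_le (by norm_num)]
  simp

lemma integral_exp_neg_mul_abs_sub {θ : ℝ} (hθ : 0 < θ) (c : ℝ) :
    ∫ t, Real.exp (-(θ * |t - c|)) = 2 / θ := by
  rw [integral_sub_right_eq_self (fun t ↦ Real.exp (-(θ * |t|))) c,
    integral_comp_abs (f := fun t ↦ Real.exp (-(θ * t)))]
  simp only [← neg_mul]
  rw [integral_exp_mul_Ioi (neg_lt_zero.2 hθ)]
  simp [div_eq_mul_inv]

lemma integral_exp_neg_mul_abs_sub_uniformInterval_le {θ : ℝ} (hθ : 0 < θ) (c : ℝ) :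
    ∫ t, Real.exp (-(θ * |t - c|)) ∂uniformInterval ≤ θ⁻¹ := by
  have hint : Integrable fun t ↦ Real.exp (-(θ * |t - c|)) :=
    .of_integral_ne_zero (by rw [integral_exp_neg_mul_abs_sub hθ]; positivity)
  calc ∫ t, Real.exp (-(θ * |t - c|)) ∂uniformInterval
      = 2⁻¹ * ∫ t in Set.Icc (-1) 1, Real.exp (-(θ * |t - c|)) := integral_uniformInterval _
    _ ≤ 2⁻¹ * ∫ t, Real.exp (-(θ * |t - c|)) := by
        gcongr
        · exact .of_forall fun _ ↦ (Real.exp_pos _).le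
        · exact Measure.restrict_le_self
    _ = θ⁻¹ := by
        rw [integral_exp_neg_mul_abs_sub hθ]
        field_simp

end UniformInterval

section ExponentialBound

lemma choose_le_exp_one_mul_div_pow (n k : ℕ) :
    (n.choose k : ℝ) ≤ (Real.exp 1 * n / k) ^ k := by
  rcases k.eq_zero_or_pos with rfl | hk
  · simp
  have hexp : (k : ℝ) ^ k / k.factorial ≤ Real.exp 1 ^ k := by
    simpa [← Real.exp_nat_mul] using Real.pow_div_factorial_le_exp (k : ℝ) k.cast_nonneg k
  calc (n.choose k : ℝ) ≤ n ^ k / k.factorial := Nat.choose_le_pow_div k n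
    _ = k ^ k / k.factorial * (n / k) ^ k := by
        rw [div_pow]
        field_simp
    _ ≤ Real.exp 1 ^ k * (n / k) ^ k := by gcongr
    _ = (Real.exp 1 * n / k) ^ k := by rw [← mul_pow, mul_div_assoc]

lemma sq_le_exp_two_mul_of_forall_exp_neg_mul_le {n k : ℕ} {D : ℝ}
    (h : ∀ θ, 0 < θ → Real.exp (-(θ * D)) ≤ n.choose k * θ⁻¹ ^ k) :
    (k : ℝ) ^ 2 ≤ Real.exp 2 * n * D := by
  rcases k.eq_zero_or_pos with rfl | hk
  · have hD : 0 ≤ D := by simpa using h 1 one_pos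
    simpa using by positivity
  have hk' : (0 : ℝ) < k := by exact_mod_cast hk
  have hn : 0 < n := by
    rw [Nat.pos_iff_ne_zero]
    rintro rfl
    exact (h 1 one_pos).not_gt (by simp [Nat.choose_eq_zero_of_lt hk, Real.exp_pos])
  have hexp : Real.exp (-(Real.exp 2 * n / k * D)) ≤ Real.exp (-k) :=
    calc Real.exp (-(Real.exp 2 * n / k * D))
        ≤ n.choose k * (Real.exp 2 * n / k)⁻¹ ^ k := h _ (by positivity)
      _ ≤ (Real.exp 1 * n / k) ^ k * (Real.exp 2 * n / k)⁻¹ ^ k := by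
          gcongr
          exact choose_le_exp_one_mul_div_pow n k
      _ = Real.exp (-1) ^ k := by
          rw [← mul_pow, Real.exp_neg, ← one_add_one_eq_two, Real.exp_add]
          congr 1
          field_simp
      _ = Real.exp (-k) := by rw [← Real.exp_nat_mul, mul_neg_one]
  rw [Real.exp_le_exp, neg_le_neg_iff, div_mul_eq_mul_div, le_div_iff₀ hk'] at hexp
  rwa [sq]

end ExponentialBound

section VertexAverage

variable {ι : Type*} [Fintype ι] (R : Submodule ℝ (ι → ℝ))

lemma integrable_l1Dist {ν : Measure ℝ} [IsProbabilityMeasure ν]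
    (hint : Integrable (fun t ↦ t) ν) : Integrable (l1Dist R) (Measure.pi fun _ : ι ↦ ν) := by
  have hsum : Integrable (fun x : ι → ℝ ↦ ∑ i, |x i|) (Measure.pi fun _ ↦ ν) :=
    integrable_finsetSum _ fun i _ ↦ (integrable_comp_eval (μ := fun _ : ι ↦ ν) hint).abs
  refine hsum.mono' (continuous_l1Dist R).aestronglyMeasurable (.of_forall fun x ↦ ?_)
  rw [Real.norm_of_nonneg (l1Dist_nonneg R x)]
  simpa using l1Dist_le_of_mem R.zero_mem x

variable [DecidableEq ι]

lemma exp_neg_mul_average_l1Dist_cubeVertex_le {θ : ℝ} (hθ : 0 < θ) :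
    Real.exp (-(θ * ((2 ^ Fintype.card ι)⁻¹ * ∑ s, l1Dist R (cubeVertex s)))) ≤
      (Fintype.card ι).choose (Fintype.card ι - Module.finrank ℝ R) *
        θ⁻¹ ^ (Fintype.card ι - Module.finrank ℝ R) := by
  set μ := Measure.pi fun _ : ι ↦ uniformInterval
  have hint : Integrable (l1Dist R) μ :=
    integrable_l1Dist R (.of_mem_Icc (-1) 1 aemeasurable_id ae_uniformInterval_mem_Icc)
  have hmean : ∫ x, l1Dist R x ∂μ ≤ (2 ^ Fintype.card ι)⁻¹ * ∑ s, l1Dist R (cubeVertex s) :=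
    integral_le_average_cubeVertex_of_convexOn
      ((convexOn_l1Dist R).subset (Set.subset_univ _) (convex_Icc _ _)) hint
      ae_uniformInterval_mem_Icc integral_id_uniformInterval
  calc Real.exp (-(θ * ((2 ^ Fintype.card ι)⁻¹ * ∑ s, l1Dist R (cubeVertex s))))
      ≤ Real.exp (-(θ * ∫ x, l1Dist R x ∂μ)) := by gcongr
    _ = Real.exp (∫ x, -(θ * l1Dist R x) ∂μ) := by rw [integral_neg, integral_const_mul]
    _ ≤ ∫ x, Real.exp (-(θ * l1Dist R x)) ∂μ :=
        convexOn_exp.map_integral_le Real.continuous_exp.continuousOn isClosed_univ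
          (.of_forall fun _ ↦ Set.mem_univ _) (hint.const_mul θ).neg
          (integrable_exp_neg_mul hθ.le (continuous_l1Dist R).measurable (l1Dist_nonneg R))
    _ ≤ _ := integral_exp_neg_mul_l1Dist_le R hθ.le
        (integral_exp_neg_mul_abs_sub_uniformInterval_le hθ)

lemma codim_sq_le_exp_two_mul_average_l1Dist_cubeVertex :
    ((Fintype.card ι - Module.finrank ℝ R : ℕ) : ℝ) ^ 2 ≤ Real.exp 2 * Fintype.card ι *
      ((2 ^ Fintype.card ι)⁻¹ * ∑ s, l1Dist R (cubeVertex s)) :=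
  sq_le_exp_two_mul_of_forall_exp_neg_mul_le fun _ hθ ↦
    exp_neg_mul_average_l1Dist_cubeVertex_le R hθ

end VertexAverage

/-- There is an absolute constant `c > 0` such that for every `ε ∈ (0,1)`, `n ∈ ℕ`, and
every subspace `R ⊆ ℝ^n` with `dim R ≤ (1-ε)n`, the average `ℓ_1`-distance of the `2^n`
sign vectors `u ∈ {-1,1}^n` to `R` is at least `c ε² n`. -/
theorem cube_vertices_l1_width :
    ∃ c : ℝ, 0 < c ∧
      ∀ ε : ℝ, 0 < ε → ε < 1 → ∀ n : ℕ,
        ∀ R : Submodule ℝ (Fin n → ℝ), (Module.finrank ℝ R : ℝ) ≤ (1 - ε) * n →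
          c * ε ^ 2 * n ≤ ((2 : ℝ) ^ n)⁻¹ *
            ∑ s : Fin n → Bool,
              ⨅ v : R, ∑ i, |(if s i then (1 : ℝ) else -1) - (v : Fin n → ℝ) i| := by
  refine ⟨Real.exp (-2), Real.exp_pos _, fun ε hε _ n R hR ↦ ?_⟩
  change _ ≤ ((2 : ℝ) ^ n)⁻¹ * ∑ s, l1Dist R (cubeVertex s)
  set D := ((2 : ℝ) ^ n)⁻¹ * ∑ s, l1Dist R (cubeVertex s)
  have hD : 0 ≤ D := mul_nonneg (by positivity) (sum_nonneg fun s _ ↦ l1Dist_nonneg R _)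
  rcases n.eq_zero_or_pos with rfl | hn
  · simpa using hD
  have hcodim : ε * n ≤ (n - Module.finrank ℝ R : ℕ) := by
    have hsub : (n : ℝ) ≤ (n - Module.finrank ℝ R : ℕ) + Module.finrank ℝ R := by
      exact_mod_cast le_tsub_add
    linarith
  have hsq : ((n - Module.finrank ℝ R : ℕ) : ℝ) ^ 2 ≤ Real.exp 2 * n * D := by
    simpa only [Fintype.card_fin] using codim_sq_le_exp_two_mul_average_l1Dist_cubeVertex R
  have hbound : n * (ε ^ 2 * n) ≤ n * (Real.exp 2 * D) :=
    calc n * (ε ^ 2 * n) = (ε * n) ^ 2 := by ring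
      _ ≤ ((n - Module.finrank ℝ R : ℕ) : ℝ) ^ 2 := by gcongr
      _ ≤ n * (Real.exp 2 * D) := hsq.trans_eq (by ring)
  rw [Real.exp_neg, mul_assoc, inv_mul_le_iff₀ (Real.exp_pos 2)]
  exact le_of_mul_le_mul_left hbound (by exact_mod_cast hn)
end

section
/- Let d, m, n_1, …, n_d ∈ ℕ. Then the number S_m(n_1,…,n_d) of signum tensors S ∈ {−1,1}^{n_1×⋯×n_d} with signum rank rank_±(S) ≤ m satisfies S_m(n_1,…,n_d) ≤ Z_max(m(n_1+⋯+n_d), n_1⋯n_d, d). -/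
/-- A tensor `T ∈ ℝ^{n₁×⋯×n_d}` has rank at most `m` if it is a sum of `m` tensors of
the form `u¹_{i₁} ⋯ u^d_{i_d}`. -/
def tensorRankLE {d : ℕ} {n : Fin d → ℕ} (T : ((i : Fin d) → Fin (n i)) → ℝ) (m : ℕ) :
    Prop :=
  ∃ u : Fin m → (i : Fin d) → Fin (n i) → ℝ, ∀ I, T I = ∑ s, ∏ i, u s i (I i)

/-- A signum tensor: all entries are `±1`. -/
def IsSignTensor {d : ℕ} {n : Fin d → ℕ} (S : ((i : Fin d) → Fin (n i)) → ℝ) : Prop :=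
  ∀ I, S I = 1 ∨ S I = -1

/-- The signum rank of a signum tensor `S` is at most `m` if there is a tensor `T` of
rank at most `m`, all of whose entries are nonzero and satisfy `sign(T_I) = S_I`. -/
def signumRankLE {d : ℕ} {n : Fin d → ℕ} (S : ((i : Fin d) → Fin (n i)) → ℝ) (m : ℕ) :
    Prop :=
  ∃ T : ((i : Fin d) → Fin (n i)) → ℝ,
    tensorRankLE T m ∧ ∀ I, T I ≠ 0 ∧ Real.sign (T I) = S I

/-- `Zmax k l s`: the maximal number of sign vectors `(sign p₁(x), …, sign p_l(x))` with
all coordinates nonzero, over `l`-tuples of real polynomials in `k` variables of total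
degree at most `s`. -/
noncomputable def Zmax (k l s : ℕ) : ℕ :=
  sSup {z : ℕ | ∃ p : Fin l → MvPolynomial (Fin k) ℝ,
    (∀ i, (p i).totalDegree ≤ s) ∧
    z = Nat.card {v : Fin l → ℝ | ∃ x : Fin k → ℝ,
      (∀ i, MvPolynomial.eval x (p i) ≠ 0) ∧
      v = fun i => Real.sign (MvPolynomial.eval x (p i))}}

/-!
The entries of a tensor of rank at most `m` are the values, at the coordinates of the `m` tuples of
factors, of the polynomials `∑ s, ∏ i, X (s, i, I i)`: these have degree `d`, there are `n₁⋯n_d` of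
them, and they involve `m(n₁+⋯+n_d)` variables. So the signum tensors of signum rank at most `m` are
precisely the nonzero sign vectors of this one family of polynomials.
-/

open MvPolynomial

section SignVectors

variable {σ τ ι κ : Type*}

/-- The sign vectors `(sign p_i(x))_i` of a family of real polynomials, taken over the points `x`
at which no `p_i` vanishes. The index types of variables and polynomials are arbitrary, whereas
`Zmax` uses `Fin k` and `Fin l`. -/
def signVectors (p : ι → MvPolynomial σ ℝ) : Set (ι → ℝ) :=
  {v | ∃ x : σ → ℝ, (∀ i, eval x (p i) ≠ 0) ∧ v = fun i => Real.sign (eval x (p i))}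

theorem signVectors_subset_pi (p : ι → MvPolynomial σ ℝ) :
    signVectors p ⊆ Set.univ.pi fun _ => {1, -1} := by
  rintro _ ⟨x, hx, rfl⟩ i -
  exact (Real.sign_apply_eq_of_ne_zero _ (hx i)).symm

theorem signVectors_rename {e : σ → τ} (he : e.Injective) (p : ι → MvPolynomial σ ℝ) :
    signVectors (fun i => rename e (p i)) = signVectors p := by
  ext v
  constructor
  · rintro ⟨x, hx, rfl⟩
    simp only [eval_rename] at hx ⊢
    exact ⟨x ∘ e, hx, rfl⟩
  · rintro ⟨x, hx, rfl⟩
    obtain ⟨y, rfl⟩ := he.surjective_comp_right x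
    exact ⟨y, by simpa only [eval_rename] using hx, by simp only [eval_rename]⟩

theorem signVectors_comp {f : κ → ι} (hf : f.Surjective) (p : ι → MvPolynomial σ ℝ) :
    signVectors (p ∘ f) = (· ∘ f) '' signVectors p := by
  ext v
  constructor
  · rintro ⟨x, hx, rfl⟩
    exact ⟨_, ⟨x, hf.forall.2 hx, rfl⟩, rfl⟩
  · rintro ⟨_, ⟨x, hx, rfl⟩, rfl⟩
    exact ⟨x, fun j => hx (f j), rfl⟩

theorem card_signVectors_comp {f : κ → ι} (hf : f.Surjective) (p : ι → MvPolynomial σ ℝ) :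
    Nat.card (signVectors (p ∘ f)) = Nat.card (signVectors p) := by
  rw [signVectors_comp hf, Nat.card_image_of_injective hf.injective_comp_right]

theorem card_signVectors_le_Zmax_fin {k l s : ℕ} (p : Fin l → MvPolynomial (Fin k) ℝ)
    (hp : ∀ i, (p i).totalDegree ≤ s) : Nat.card (signVectors p) ≤ Zmax k l s := by
  refine le_csSup ⟨Nat.card (Set.univ.pi fun _ : Fin l => ({1, -1} : Set ℝ)), ?_⟩ ⟨p, hp, rfl⟩
  rintro _ ⟨q, -, rfl⟩
  exact Nat.card_mono (Set.Finite.pi fun _ => Set.toFinite _) (signVectors_subset_pi q)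

theorem card_signVectors_le_Zmax [Finite σ] [Finite ι] {s : ℕ} (p : ι → MvPolynomial σ ℝ)
    (hp : ∀ i, (p i).totalDegree ≤ s) :
    Nat.card (signVectors p) ≤ Zmax (Nat.card σ) (Nat.card ι) s := by
  let e := Finite.equivFin σ
  let f := (Finite.equivFin ι).symm
  calc Nat.card (signVectors p)
      = Nat.card (signVectors (p ∘ f)) := (card_signVectors_comp f.surjective p).symm
    _ = Nat.card (signVectors fun j => rename e (p (f j))) := by
        rw [← signVectors_rename e.injective (p ∘ f)]
        rfl
    _ ≤ Zmax (Nat.card σ) (Nat.card ι) s :=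
        card_signVectors_le_Zmax_fin _ fun j => (totalDegree_rename_le e _).trans (hp (f j))

end SignVectors

section GenericTensor

/-- The generic sum of rank-one tensors indexed by `α`: the variable `X (s, ⟨i, j⟩)` stands for
the `j`-th coordinate of the `i`-th factor of the `s`-th summand. -/
noncomputable def genericTensor (R α : Type*) {ι : Type*} {κ : ι → Type*} [CommSemiring R]
    [Fintype α] [Fintype ι] (I : (i : ι) → κ i) : MvPolynomial (α × (i : ι) × κ i) R :=
  ∑ s, ∏ i, X (s, ⟨i, I i⟩)

variable {R α ι : Type*} {κ : ι → Type*} [CommSemiring R] [Fintype α] [Fintype ι]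

theorem isHomogeneous_genericTensor (I : (i : ι) → κ i) :
    (genericTensor R α I).IsHomogeneous (Fintype.card ι) := by
  refine IsHomogeneous.sum _ _ _ fun s _ => ?_
  simpa using IsHomogeneous.prod Finset.univ (fun i => X (R := R) (s, (⟨i, I i⟩ : (i : ι) × κ i)))
    (fun _ => 1) fun i _ => isHomogeneous_X R _

theorem eval_genericTensor (x : α × ((i : ι) × κ i) → R) (I : (i : ι) → κ i) :
    eval x (genericTensor R α I) = ∑ s, ∏ i, x (s, ⟨i, I i⟩) := by
  simp [genericTensor]

end GenericTensor

section SignumRank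

variable {d m : ℕ} {n : Fin d → ℕ}

theorem tensorRankLE_iff_exists_eval_genericTensor {T : ((i : Fin d) → Fin (n i)) → ℝ} :
    tensorRankLE T m ↔ ∃ x, ∀ I, T I = eval x (genericTensor ℝ (Fin m) I) := by
  simp only [eval_genericTensor]
  constructor
  · rintro ⟨u, hu⟩
    exact ⟨fun a => u a.1 a.2.1 a.2.2, hu⟩
  · rintro ⟨x, hx⟩
    exact ⟨fun s i j => x (s, ⟨i, j⟩), hx⟩

theorem signumRankLE_iff_mem_signVectors {S : ((i : Fin d) → Fin (n i)) → ℝ} :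
    signumRankLE S m ↔ S ∈ signVectors (genericTensor ℝ (Fin m)) := by
  simp only [signumRankLE, tensorRankLE_iff_exists_eval_genericTensor]
  constructor
  · rintro ⟨T, ⟨x, hT⟩, hS⟩
    exact ⟨x, fun I => hT I ▸ (hS I).1, funext fun I => hT I ▸ (hS I).2.symm⟩
  · rintro ⟨x, hx, rfl⟩
    exact ⟨_, ⟨x, fun _ => rfl⟩, fun I => ⟨hx I, rfl⟩⟩

theorem signumRankLE.isSignTensor {S : ((i : Fin d) → Fin (n i)) → ℝ} (hS : signumRankLE S m) :
    IsSignTensor S := fun I =>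
  signVectors_subset_pi _ (signumRankLE_iff_mem_signVectors.1 hS) I trivial

theorem setOf_signumRankLE_eq_signVectors :
    {S : ((i : Fin d) → Fin (n i)) → ℝ | IsSignTensor S ∧ signumRankLE S m} =
      signVectors (genericTensor ℝ (Fin m)) :=
  Set.ext fun _ => (and_iff_right_of_imp signumRankLE.isSignTensor).trans
    signumRankLE_iff_mem_signVectors

end SignumRank

/-- Alon–Frankl–Rödl-type bound for tensors: the number of signum tensors in
`{−1,1}^{n₁×⋯×n_d}` of signum rank at most `m` is at most
`Zmax (m(n₁+⋯+n_d), n₁⋯n_d, d)`. -/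
theorem count_low_signum_rank_tensors (d m : ℕ) (n : Fin d → ℕ) :
    Nat.card {S : ((i : Fin d) → Fin (n i)) → ℝ | IsSignTensor S ∧ signumRankLE S m} ≤
      Zmax (m * ∑ i, n i) (∏ i, n i) d := by
  have totalDegree_le (I : (i : Fin d) → Fin (n i)) :
      (genericTensor ℝ (Fin m) I).totalDegree ≤ d := by
    simpa using (isHomogeneous_genericTensor (R := ℝ) (α := Fin m) I).totalDegree_le
  have card_variables : Nat.card (Fin m × (i : Fin d) × Fin (n i)) = m * ∑ i, n i := by simp
  have card_entries : Nat.card ((i : Fin d) → Fin (n i)) = ∏ i, n i := by simp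
  rw [setOf_signumRankLE_eq_signVectors, ← card_variables, ← card_entries]
  exact card_signVectors_le_Zmax _ totalDegree_le
end

section
/- For every d ∈ ℕ there exist constants c(d) > 0 and ε₀(d) > 0 such that for every ε ∈ (0, ε₀(d)) and all n_1, …, n_d ∈ ℕ, setting N = n_1 ⋯ n_d, the number of signum tensors S ∈ {−1,1}^{n_1×⋯×n_d} with rank_±(S) ≤ ε N / max_j{n_j} is at most 2^{N c(d) ε log₂(1/ε)}. -/
/-!
The entries of a sum of `m` rank-one tensors are `N` polynomials of degree at most `d` in
`m (n₁ + ⋯ + n_d) ≤ d ε N` variables, so the claim follows from a bound of Warren type on the number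
of sign patterns of polynomials `f i`, `i ∈ ι`, of degree at most `D` in `K` variables.

All sign patterns `S` are attained with a common margin `η`. Choose real numbers `p` in `(0, η)`
that are algebraically independent over the coefficient field, one for each variable and one for
each `f i`, and let `x` be the point nearest to the centre `(p l)` in the closed set where
`S i * f i ≥ p i` for all `i`. By genericity of `p`, the gradients of the constraints active at `x`
are linearly independent (Jacobian criterion), so at most `K` of them are active and `x` is part of
a solution of a square Lagrange system of degree at most `D + 1` with right-hand side `p`. A square
polynomial system in `M` unknowns of degree at most `D + 1` with generic right-hand side has at most
`(D + 1) ^ M` solutions: a linear form separating the solutions satisfies a nontrivial polynomial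
equation of that degree, found by counting dimensions. Hence there are at most
`(2 (D + 1) ^ 2) ^ K` sign patterns for each active set, and the number of sets of size at most `K`
is at most `ε ^ (-K) (1 + ε) ^ N`.
-/

open MvPolynomial

section JacobianCriterion

variable {k L ι σ : Type*} [Field k] [Field L] [Algebra k L]

open scoped IntermediateField.algebraAdjoinAdjoin in
theorem formallyEtale_aeval_of_isTranscendenceBasis [CharZero k] {v : ι → L}
    (hv : IsTranscendenceBasis k v) :
    (aeval v : MvPolynomial ι k →ₐ[k] L).toRingHom.FormallyEtale := by
  let A := Algebra.adjoin k (Set.range v)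
  let F := IntermediateField.adjoin k (Set.range v)
  have : Algebra.IsAlgebraic F L := hv.isAlgebraic_field
  have : Algebra.FormallyEtale A F := .of_isLocalization (nonZeroDivisors A)
  have : Algebra.FormallyEtale F L := .of_isSeparable F L
  have hAL : (algebraMap A L).FormallyEtale :=
    RingHom.formallyEtale_algebraMap.2 (.comp A F L)
  have hequiv : hv.1.aevalEquiv.toRingEquiv.toRingHom.FormallyEtale :=
    (RingHom.Etale.of_bijective hv.1.aevalEquiv.bijective).toAlgebra.formallyEtale
  convert hequiv.comp hAL using 1
  ext i <;> simp

theorem exists_derivation_apply_eq_of_isTranscendenceBasis [CharZero k] {v : ι → L}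
    (hv : IsTranscendenceBasis k v) (m : ι → L) :
    ∃ D : Derivation k L L, ∀ i, D (v i) = m i := by
  let := (aeval v : MvPolynomial ι k →ₐ[k] L).toAlgebra
  have : Algebra.FormallyEtale (MvPolynomial ι k) L :=
    formallyEtale_aeval_of_isTranscendenceBasis hv
  let hbase := KaehlerDifferential.isBaseChange_of_formallyEtale k (MvPolynomial ι k) L
  refine ⟨(hbase.lift (mkDerivation k m).liftKaehlerDifferential).compDer
    (KaehlerDifferential.D k L), fun i => ?_⟩
  have hvi : v i = algebraMap (MvPolynomial ι k) L (X i) := (aeval_X v i).symm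
  rw [hvi]
  change hbase.lift _ (KaehlerDifferential.D k L (algebraMap _ L (X i))) = m i
  rw [← KaehlerDifferential.map_D k k, hbase.lift_eq,
    Derivation.liftKaehlerDifferential_comp_D, mkDerivation_X]

theorem exists_derivation_apply_eq [CharZero k] {y : ι → L} (hy : AlgebraicIndependent k y)
    (m : ι → L) : ∃ D : Derivation k L L, ∀ i, D (y i) = m i := by
  obtain ⟨B, hyB, hB⟩ := exists_isTranscendenceBasis_superset hy.coe_range
  obtain ⟨D, hD⟩ := exists_derivation_apply_eq_of_isTranscendenceBasis hB
    fun b => Function.extend y m 0 b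
  exact ⟨D, fun i => (hD ⟨y i, hyB ⟨i, rfl⟩⟩).trans (hy.injective.extend_apply m 0 i)⟩

theorem derivation_aeval {R A M : Type*} [CommSemiring R] [CommSemiring A] [Algebra R A]
    [AddCommMonoid M] [Module A M] [Module R M] [Fintype σ] (D : Derivation R A M) (x : σ → A)
    (f : MvPolynomial σ R) : D (aeval x f) = ∑ l, aeval x (pderiv l f) • D (x l) := by
  classical
  induction f using MvPolynomial.induction_on with
  | C a => simp
  | add p q hp hq => simp only [map_add, hp, hq, add_smul, Finset.sum_add_distrib]
  | mul_X p i hp =>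
    simp only [map_mul, aeval_X, Derivation.leibniz, pderiv_X, hp, map_add, smul_eq_mul, add_smul,
      Finset.sum_add_distrib, Finset.smul_sum, Pi.single_apply, apply_ite (aeval x), map_one,
      map_zero]
    simp [smul_smul]

theorem linearIndependent_aeval_pderiv [CharZero k] [Finite ι] [Finite σ]
    (f : ι → MvPolynomial σ k) (x : σ → L)
    (hx : AlgebraicIndependent k fun i => aeval x (f i)) :
    LinearIndependent L (fun i l => aeval x (pderiv l (f i)) : ι → σ → L) := by
  classical
  have := Fintype.ofFinite ι
  have := Fintype.ofFinite σ
  rw [Fintype.linearIndependent_iff]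
  intro c hc j
  obtain ⟨D, hD⟩ := exists_derivation_apply_eq hx (Pi.single j 1)
  calc c j = ∑ i, c i * D (aeval x (f i)) := by simp [hD, Pi.single_apply]
    _ = ∑ l, (∑ i, c i • fun l => aeval x (pderiv l (f i))) l * D (x l) := by
      simp only [derivation_aeval, Finset.mul_sum, Finset.sum_apply, Finset.sum_mul,
        Pi.smul_apply, smul_eq_mul, mul_assoc]
      exact Finset.sum_comm
    _ = 0 := by simp only [hc, Pi.zero_apply, zero_mul, Finset.sum_const_zero]

end JacobianCriterion

section Bezout

theorem totalDegree_aeval_le {R σ τ : Type*} [CommSemiring R] {Φ : τ → MvPolynomial σ R} {D : ℕ}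
    (hΦ : ∀ t, (Φ t).totalDegree ≤ D) (q : MvPolynomial τ R) :
    (aeval Φ q).totalDegree ≤ D * q.totalDegree := by
  rw [aeval_def, eval₂_eq]
  refine totalDegree_finsetSum_le fun α hα => ?_
  calc (algebraMap R (MvPolynomial σ R) (coeff α q) * ∏ t ∈ α.support, Φ t ^ α t).totalDegree
      ≤ 0 + ∑ t ∈ α.support, (Φ t ^ α t).totalDegree := by
        grw [totalDegree_mul, algebraMap_eq, totalDegree_C, totalDegree_finsetProd]
    _ ≤ 0 + ∑ t ∈ α.support, α t * D := by
        gcongr with t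
        grw [totalDegree_pow, hΦ t]
    _ = D * ∑ t ∈ α.support, α t := by rw [zero_add, ← Finset.sum_mul, mul_comm]
    _ ≤ D * q.totalDegree := by
        gcongr
        exact le_totalDegree hα

theorem finrank_restrictTotalDegree (σ R : Type*) [Fintype σ] [CommRing R] [Nontrivial R] (n : ℕ) :
    Module.finrank R (restrictTotalDegree σ R n) =
      (n + Fintype.card σ).choose (Fintype.card σ) := by
  classical
  let S : Finset (σ →₀ ℕ) := (Finset.range (n + 1)).biUnion (Finset.univ.finsuppAntidiag ·)
  have hS : {e : σ →₀ ℕ | (e.sum fun _ m => m) ≤ n} = S := by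
    ext e
    simp [S, Finset.mem_finsuppAntidiag, Finsupp.sum_fintype]
  have hdisj : ((Finset.range (n + 1) : Finset ℕ) : Set ℕ).PairwiseDisjoint
      ((Finset.univ : Finset σ).finsuppAntidiag ·) := fun i _ j _ hij =>
    Finset.disjoint_left.2 fun e hi hj =>
      hij ((Finset.mem_finsuppAntidiag.1 hi).1.symm.trans (Finset.mem_finsuppAntidiag.1 hj).1)
  rw [restrictTotalDegree, hS, ← Nat.sum_range_multichoose,
    Module.finrank_eq_card_basis (basisRestrictSupport R (S : Set (σ →₀ ℕ)))]
  simp only [Finset.coe_sort_coe, Fintype.card_coe, S, Finset.card_biUnion hdisj,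
    Finset.card_finsuppAntidiag_nat_eq_multichoose, Finset.card_univ]

theorem exists_choose_lt_mul_choose {D r M : ℕ} (hr : D ^ M ≤ r) :
    ∃ n : ℕ, (D * n + r + M).choose M < (r + 1) * (n + M).choose M := by
  have hlim : Filter.Tendsto (fun n : ℕ => ((D : ℝ) + ((r + M : ℕ) : ℝ) / n) ^ M) Filter.atTop
      (nhds (((D : ℝ) + 0) ^ M)) :=
    (tendsto_const_nhds.add (tendsto_const_div_atTop_nhds_zero_nat _)).pow M
  have hlt : ((D : ℝ) + 0) ^ M < r + 1 := by
    rw [add_zero]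
    exact_mod_cast Nat.lt_succ_of_le hr
  obtain ⟨n, hn, hn0⟩ :=
    ((hlim.eventually (gt_mem_nhds hlt)).and (Filter.eventually_gt_atTop 0)).exists
  have hpow : (D * n + r + M) ^ M < (r + 1) * n ^ M := by
    have hn' : (0 : ℝ) < n := by exact_mod_cast hn0
    have hdiv : (D : ℝ) + ((r + M : ℕ) : ℝ) / n = (D * n + r + M) / n := by
      field_simp
      push_cast
      ring
    rw [hdiv, div_pow, div_lt_iff₀ (by positivity)] at hn
    exact_mod_cast hn
  refine ⟨n, lt_of_mul_lt_mul_left (a := M.factorial) ?_ (Nat.zero_le _)⟩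
  calc M.factorial * (D * n + r + M).choose M
      = (D * n + r + M).descFactorial M := (Nat.descFactorial_eq_factorial_mul_choose _ _).symm
    _ ≤ (D * n + r + M) ^ M := Nat.descFactorial_le_pow _ _
    _ < (r + 1) * n ^ M := hpow
    _ ≤ (r + 1) * (n + 1).ascFactorial M := by
        gcongr
        exact (Nat.pow_le_pow_left n.le_succ M).trans (Nat.pow_succ_le_ascFactorial _ _)
    _ = M.factorial * ((r + 1) * (n + M).choose M) := by
        rw [Nat.ascFactorial_eq_factorial_mul_choose, mul_left_comm]

theorem exists_injOn_sum_smul {k V τ : Type*} [Field k] [Infinite k] [AddCommGroup V]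
    [Module k V] [Fintype τ] {Z : Set (τ → V)} (hZ : Z.Finite) :
    ∃ c : τ → k, Set.InjOn (fun z => ∑ t, c t • z t) Z := by
  classical
  have := hZ.to_subtype
  by_contra! hcon
  let Λ : {y : Z × Z // y.1 ≠ y.2} → (τ → k) →ₗ[k] V := fun y =>
    Fintype.linearCombination k (y.1.1.1 - y.1.2.1)
  have hcov : ⋃ y, (LinearMap.ker (Λ y) : Set (τ → k)) = Set.univ := by
    refine Set.eq_univ_of_forall fun c => ?_
    obtain ⟨z, hz, z', hz', heq, hne⟩ := by simpa only [Set.InjOn, not_forall] using hcon c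
    refine Set.mem_iUnion.2 ⟨⟨(⟨z, hz⟩, ⟨z', hz'⟩), fun h => hne (congrArg Subtype.val h)⟩, ?_⟩
    simpa [Λ, Fintype.linearCombination_apply, smul_sub, sub_eq_zero] using heq
  obtain ⟨y, hy⟩ := Subspace.exists_eq_top_of_iUnion_eq_univ hcov
  refine y.2 (Subtype.ext (funext fun t => sub_eq_zero.1 ?_))
  have hmem : Pi.single t 1 ∈ LinearMap.ker (Λ y) := hy ▸ Submodule.mem_top
  simpa [Λ, Fintype.linearCombination_apply_single] using hmem

variable {k L τ : Type*} [Field k] [Field L] [Algebra k L] [Fintype τ]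
  {Φ : τ → MvPolynomial τ k} {D : ℕ}

theorem exists_ne_zero_sum_aeval_mul_pow_eq_zero (hΦ : ∀ t, (Φ t).totalDegree ≤ D)
    {g : MvPolynomial τ k} (hg : g.totalDegree ≤ 1) :
    ∃ q : Fin (D ^ Fintype.card τ + 1) → MvPolynomial τ k,
      q ≠ 0 ∧ ∑ j, aeval Φ (q j) * g ^ (j : ℕ) = 0 := by
  -- The map `q ↦ ∑ j, aeval Φ (q j) * g ^ j` from `r + 1` polynomials of degree `≤ n` to
  -- polynomials of degree `≤ D * n + r` has a kernel for large `n`, by comparing dimensions.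
  set r := D ^ Fintype.card τ
  obtain ⟨n, hn⟩ := exists_choose_lt_mul_choose (le_refl r)
  let V := restrictTotalDegree τ k n
  let W := restrictTotalDegree τ k (D * n + r)
  let Ψ : (Fin (r + 1) → V) →ₗ[k] MvPolynomial τ k :=
    ∑ j : Fin (r + 1), LinearMap.mulRight k (g ^ (j : ℕ)) ∘ₗ (aeval Φ).toLinearMap ∘ₗ
      V.subtype ∘ₗ LinearMap.proj j
  have hΨ (q) : Ψ q = ∑ j, aeval Φ (q j : MvPolynomial τ k) * g ^ (j : ℕ) := by simp [Ψ]
  have hmem (q) : Ψ q ∈ W := by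
    rw [mem_restrictTotalDegree, hΨ]
    refine totalDegree_finsetSum_le fun j _ => ?_
    have hq := (mem_restrictTotalDegree τ n _).1 (q j).2
    have hj : (j : ℕ) ≤ r := Nat.le_of_lt_succ j.2
    grw [totalDegree_mul, totalDegree_aeval_le hΦ, totalDegree_pow, hq, hg, hj, mul_one]
  have hker : LinearMap.ker (Ψ.codRestrict W hmem) ≠ ⊥ := by
    apply LinearMap.ker_ne_bot_of_finrank_lt
    rw [Module.finrank_pi_fintype, Finset.sum_const, Finset.card_univ, Fintype.card_fin,
      smul_eq_mul, finrank_restrictTotalDegree, finrank_restrictTotalDegree]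
    exact hn
  obtain ⟨q, hq, hq0⟩ := (Submodule.ne_bot_iff _).1 hker
  refine ⟨fun j => q j, fun h => hq0 (funext fun j => Subtype.ext (congrFun h j)), ?_⟩
  rw [← hΨ]
  exact congrArg Subtype.val (LinearMap.mem_ker.1 hq)

theorem exists_polynomial_eval₂_aeval_eq_zero (hΦ : ∀ t, (Φ t).totalDegree ≤ D)
    {g : MvPolynomial τ k} (hg : g.totalDegree ≤ 1) :
    ∃ R : Polynomial (MvPolynomial τ k), R ≠ 0 ∧ R.natDegree ≤ D ^ Fintype.card τ ∧
      R.eval₂ (aeval Φ : MvPolynomial τ k →ₐ[k] MvPolynomial τ k).toRingHom g = 0 := by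
  obtain ⟨q, hq0, hq⟩ := exists_ne_zero_sum_aeval_mul_pow_eq_zero hΦ hg
  refine ⟨∑ j, Polynomial.monomial j.val (q j), fun h => hq0 (funext fun j => ?_), ?_, ?_⟩
  · simpa [Polynomial.finsetSum_coeff, Polynomial.coeff_monomial, Fin.val_inj]
      using congrArg (Polynomial.coeff · j) h
  · exact Polynomial.natDegree_sum_le_of_forall_le _ _ fun j _ =>
      (Polynomial.natDegree_monomial_le _).trans (Nat.le_of_lt_succ j.2)
  · simpa [Polynomial.eval₂_finsetSum] using hq

theorem exists_polynomial_eval_aeval_eq_zero (hΦ : ∀ t, (Φ t).totalDegree ≤ D)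
    {g : MvPolynomial τ k} (hg : g.totalDegree ≤ 1) {p : τ → L} (hp : AlgebraicIndependent k p) :
    ∃ R : Polynomial L, R ≠ 0 ∧ R.natDegree ≤ D ^ Fintype.card τ ∧
      ∀ z, (∀ t, aeval z (Φ t) = p t) → R.eval (aeval z g) = 0 := by
  obtain ⟨R, hR0, hRdeg, hR⟩ := exists_polynomial_eval₂_aeval_eq_zero hΦ hg
  refine ⟨R.map (aeval p : MvPolynomial τ k →ₐ[k] L).toRingHom,
    (Polynomial.map_ne_zero_iff hp).2 hR0, Polynomial.natDegree_map_le.trans hRdeg, fun z hz => ?_⟩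
  have hcomp : (aeval z : MvPolynomial τ k →ₐ[k] L).toRingHom.comp (aeval Φ).toRingHom =
      (aeval p : MvPolynomial τ k →ₐ[k] L).toRingHom := by
    ext t <;> simp [hz]
  have hRz := congrArg (aeval z : MvPolynomial τ k →ₐ[k] L).toRingHom hR
  rw [Polynomial.hom_eval₂, hcomp, map_zero] at hRz
  rw [Polynomial.eval_map]
  exact hRz

theorem encard_setOf_aeval_eq_le [Infinite k] (hΦ : ∀ t, (Φ t).totalDegree ≤ D) {p : τ → L}
    (hp : AlgebraicIndependent k p) :
    {z : τ → L | ∀ t, aeval z (Φ t) = p t}.encard ≤ (D ^ Fintype.card τ : ℕ) := by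
  classical
  by_contra! hlt
  obtain ⟨Z, hZsub, hZcard⟩ := Set.exists_subset_encard_eq (Order.add_one_le_of_lt hlt)
  have hZfin : Z.Finite := Set.finite_of_encard_eq_coe (k := D ^ Fintype.card τ + 1) hZcard
  obtain ⟨c, hc⟩ := exists_injOn_sum_smul (k := k) hZfin
  have hg : (∑ t, c t • X t : MvPolynomial τ k).totalDegree ≤ 1 :=
    totalDegree_finsetSum_le fun t _ => (totalDegree_smul_le _ _).trans (totalDegree_X t).le
  obtain ⟨R, hR0, hRdeg, hR⟩ := exists_polynomial_eval_aeval_eq_zero hΦ hg hp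
  have hroots : Set.MapsTo (fun z => ∑ t, c t • z t) Z R.roots.toFinset := fun z hz => by
    simpa [hR0] using hR z (hZsub hz)
  refine absurd (Set.encard_le_encard_of_injOn hroots hc) (not_le_of_gt ?_)
  rw [hZcard, Set.encard_coe_eq_coe_finsetCard]
  exact_mod_cast Nat.lt_succ_of_le
    ((Multiset.toFinset_card_le _).trans ((Polynomial.card_roots' R).trans hRdeg))

end Bezout

section GenericPoints

variable {k L ι : Type*} [Field k] [Field L] [Algebra k L]

theorem algebraicIndependent_smul {p : ι → L} (hp : AlgebraicIndependent k p) {c : ι → k}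
    (hc : ∀ i, c i ≠ 0) : AlgebraicIndependent k fun i => c i • p i := by
  have htrans (i) : Transcendental k (Polynomial.C (c i) * Polynomial.X) :=
    Polynomial.transcendental _ (by simp [Polynomial.natDegree_C_mul_X _ (hc i)]) (by simp [hc i])
  simpa [Algebra.smul_def] using hp.polynomial_aeval_of_transcendental htrans

theorem uncountable_of_isTranscendenceBasis [Countable k] [Uncountable L] {v : ι → L}
    (hv : IsTranscendenceBasis k v) : Uncountable ι := by
  by_contra hι
  have := not_uncountable_iff.1 hι
  have : Countable (MvPolynomial ι k) := by
    grw [← Cardinal.mk_le_aleph0_iff, cardinalMk_le_max_lift]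
    simp [Cardinal.mk_le_aleph0]
  have : Countable (Algebra.adjoin k (Set.range v)) :=
    hv.1.aevalEquiv.symm.injective.countable
  have hcount := Algebraic.countable (Algebra.adjoin k (Set.range v)) L
  have huniv : {x : L | IsAlgebraic (Algebra.adjoin k (Set.range v)) x} = Set.univ :=
    Set.eq_univ_of_forall hv.isAlgebraic.isAlgebraic
  exact Set.not_countable_univ (huniv ▸ hcount)

theorem exists_rat_mul_mem_Ioo {x η : ℝ} (hx : x ≠ 0) (hη : 0 < η) :
    ∃ q : ℚ, q ≠ 0 ∧ (q : ℝ) * x ∈ Set.Ioo 0 η := by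
  obtain ⟨q, hq⟩ := Rat.denseRange_cast.exists_mem_open
    (isOpen_Ioo.preimage (continuous_mul_const x) : IsOpen ((· * x) ⁻¹' Set.Ioo 0 η))
    ⟨η / 2 / x, by simp [hx, hη]⟩
  exact ⟨q, by rintro rfl; simp at hq, hq⟩

theorem exists_algebraicIndependent_mem_Ioo (k ι : Type*) [Field k] [Countable k] [Algebra k ℝ]
    [Finite ι] {η : ℝ} (hη : 0 < η) :
    ∃ p : ι → ℝ, AlgebraicIndependent k p ∧ ∀ i, p i ∈ Set.Ioo 0 η := by
  obtain ⟨s, hs⟩ := exists_isTranscendenceBasis k ℝ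
  have := uncountable_of_isTranscendenceBasis hs
  have := (algebraMap k ℝ).charZero
  let e : ι ↪ s := (Finite.equivFin ι).toEmbedding.trans
    (Fin.valEmbedding.trans (Infinite.natEmbedding s))
  have hv := hs.1.comp e e.injective
  choose q hq0 hq using fun i => exists_rat_mul_mem_Ioo (hv.ne_zero i) hη
  have hscaled := algebraicIndependent_smul hv (c := fun i => (q i : k)) (by simpa using hq0)
  exact ⟨_, hscaled, fun i => by simpa [Algebra.smul_def] using hq i⟩

end GenericPoints

section Lagrange

theorem totalDegree_pderiv_le {R σ : Type*} [CommSemiring R] (l : σ) (f : MvPolynomial σ R) :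
    (pderiv l f).totalDegree ≤ f.totalDegree := by
  classical
  conv_lhs => rw [f.as_sum, map_sum]
  refine totalDegree_finsetSum_le fun m hm => ?_
  grw [pderiv_monomial, totalDegree_monomial_le, ← le_totalDegree hm]
  exact Finsupp.degree_mono (tsub_le_self : m - Finsupp.single l 1 ≤ m)

theorem hasStrictFDerivAt_aeval {R 𝕜 σ : Type*} [CommSemiring R] [NontriviallyNormedField 𝕜]
    [Algebra R 𝕜] [Fintype σ] (f : MvPolynomial σ R) (x : σ → 𝕜) :
    HasStrictFDerivAt (fun y : σ → 𝕜 => aeval y f)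
      (∑ l, aeval x (pderiv l f) • (ContinuousLinearMap.proj l : (σ → 𝕜) →L[𝕜] 𝕜)) x := by
  classical
  induction f using MvPolynomial.induction_on with
  | C a =>
    convert! hasStrictFDerivAt_const (𝕜 := 𝕜) (algebraMap R 𝕜 a) x using 1
    · ext y; simp
    · ext v; simp
  | add p q hp hq =>
    convert! hp.add hq using 1
    · ext y; simp
    · ext v; simp [add_mul, Finset.sum_add_distrib]
  | mul_X p i hp =>
    have hi := (ContinuousLinearMap.proj i : (σ → 𝕜) →L[𝕜] 𝕜).hasStrictFDerivAt (x := x)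
    convert! hp.mul hi using 1
    · ext y; simp
    · ext v
      simp [add_mul, Finset.sum_add_distrib, Finset.mul_sum, Pi.single_apply,
        apply_ite (aeval x), mul_assoc]

theorem exists_isMinOn_sum_sq_sub {σ : Type*} [Fintype σ] {C : Set (σ → ℝ)} (hC : IsClosed C)
    (hne : C.Nonempty) (c : σ → ℝ) : ∃ x ∈ C, IsMinOn (fun y => ∑ l, (y l - c l) ^ 2) C x := by
  obtain ⟨x, hx, hdist⟩ :=
    (hC.preimage (PiLp.continuous_ofLp 2 fun _ => ℝ)).exists_infDist_eq_dist
      (hne.preimage (WithLp.ofLp_surjective 2)) (WithLp.toLp 2 c)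
  refine ⟨x.ofLp, hx, fun y hy => ?_⟩
  have hle : dist (WithLp.toLp 2 c) x ≤ dist (WithLp.toLp 2 c) (WithLp.toLp 2 y) :=
    hdist ▸ Metric.infDist_le_dist_of_mem hy
  rw [dist_comm, dist_comm _ (WithLp.toLp 2 y), EuclideanSpace.dist_eq, EuclideanSpace.dist_eq,
    Real.sqrt_le_sqrt_iff (by positivity)] at hle
  simpa [Real.dist_eq] using hle

theorem isLocalMinOn_activeSet {X β γ ι : Type*} [TopologicalSpace X] [LinearOrder β]
    [TopologicalSpace β] [OrderTopology β] [Preorder γ] [Finite ι] {h : ι → X → β} {b : ι → β}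
    {φ : X → γ} {x : X} {A : Finset ι} (hcont : ∀ i, ContinuousAt (h i) x)
    (hA : ∀ i ∉ A, b i < h i x) (hx : ∀ i, b i ≤ h i x)
    (hmin : IsMinOn φ {y | ∀ i, b i ≤ h i y} x) :
    IsLocalMinOn φ {y | ∀ i : A, h i y = h i x} x := by
  have hinactive : ∀ᶠ y in nhds x, ∀ i ∉ A, b i < h i y := by
    simp_rw [Filter.eventually_all]
    exact fun i hi => (hcont i).eventually_const_lt (hA i hi)
  filter_upwards [nhdsWithin_le_nhds hinactive, self_mem_nhdsWithin] with y hlt heq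
  refine hmin fun i => ?_
  by_cases hi : i ∈ A
  · exact (hx i).trans_eq (heq ⟨i, hi⟩).symm
  · exact (hlt i hi).le

variable {k σ α ι : Type*} [Field k] [Fintype α]

theorem exists_sub_sum_mul_pderiv_eq [Fintype σ] [Algebra k ℝ]
    {g : α → MvPolynomial σ k} {x c : σ → ℝ} (hg : AlgebraicIndependent k fun i => aeval x (g i))
    (hx : IsLocalMinOn (fun y => ∑ l, (y l - c l) ^ 2)
      {y | ∀ i, aeval y (g i) = aeval x (g i)} x) :
    ∃ μ : α → ℝ, ∀ l, x l - ∑ i, μ i * aeval x (pderiv l (g i)) = c l := by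
  classical
  have := (algebraMap k ℝ).charZero
  have hφ : HasStrictFDerivAt (fun y : σ → ℝ => ∑ l, (y l - c l) ^ 2) (∑ l, (2 * (x l - c l)) •
      (ContinuousLinearMap.proj l : (σ → ℝ) →L[ℝ] ℝ)) x :=
    HasStrictFDerivAt.fun_sum fun l _ => by
      simpa using (((ContinuousLinearMap.proj l : (σ → ℝ) →L[ℝ] ℝ).hasStrictFDerivAt
        (x := x)).sub_const (c l)).pow 2
  obtain ⟨Λ, Λ₀, hne, heq⟩ := IsLocalExtrOn.exists_multipliers_of_hasStrictFDerivAt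
    (Or.inl hx) (fun i => hasStrictFDerivAt_aeval (g i) x) hφ
  have hcoord (l) : ∑ i, Λ i * aeval x (pderiv l (g i)) = -(Λ₀ * (2 * (x l - c l))) := by
    rw [eq_neg_iff_add_eq_zero]
    simpa [Pi.single_apply] using DFunLike.congr_fun heq (Pi.single l 1)
  have hΛ₀ : Λ₀ ≠ 0 := by
    rintro rfl
    refine hne (Prod.mk_eq_zero.2 ⟨funext (Fintype.linearIndependent_iff.1
      (linearIndependent_aeval_pderiv g x hg) Λ (funext fun l => ?_)), rfl⟩)
    simpa using hcoord l
  refine ⟨fun i => -(2 * Λ₀)⁻¹ * Λ i, fun l => ?_⟩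
  simp_rw [mul_assoc, ← Finset.mul_sum, hcoord]
  field_simp
  ring

/-- The Lagrange conditions for a critical point of the squared distance to a centre on a fibre of
`g`, as polynomials in the coordinates `Sum.inl l` and the multipliers `Sum.inr i`. The system is
to be solved against the centre on `Sum.inl` and the prescribed values of `g` on `Sum.inr`; a
factor `2` is absorbed into the multipliers. -/
noncomputable def lagrangeSystem (g : α → MvPolynomial σ k) :
    σ ⊕ α → MvPolynomial (σ ⊕ α) k :=
  Sum.elim (fun l => X (.inl l) - ∑ i, X (.inr i) * rename .inl (pderiv l (g i)))
    fun i => rename .inl (g i)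

theorem totalDegree_lagrangeSystem_le {g : α → MvPolynomial σ k} {D : ℕ}
    (hg : ∀ i, (g i).totalDegree ≤ D) (t : σ ⊕ α) :
    (lagrangeSystem g t).totalDegree ≤ D + 1 := by
  obtain l | i := t
  · refine (totalDegree_sub _ _).trans (max_le (by simp [totalDegree_X]) ?_)
    refine totalDegree_finsetSum_le fun i _ => ?_
    grw [totalDegree_mul, totalDegree_X, totalDegree_rename_le, totalDegree_pderiv_le, hg i,
      add_comm]
  · grw [lagrangeSystem, Sum.elim_inr, totalDegree_rename_le, hg i]
    exact D.le_succ

theorem exists_aeval_lagrangeSystem_eq [Fintype σ] [Finite ι] [Algebra k ℝ]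
    (g : ι → MvPolynomial σ k) {p : σ ⊕ ι → ℝ} (hp : AlgebraicIndependent k p)
    (hfeas : ∃ x : σ → ℝ, ∀ i, p (.inr i) ≤ aeval x (g i)) :
    ∃ A : Finset ι, A.card ≤ Fintype.card σ ∧ ∃ z : σ ⊕ A → ℝ,
      (∀ i, p (.inr i) ≤ aeval (z ∘ Sum.inl) (g i)) ∧
      ∀ t, aeval z (lagrangeSystem (fun i : A => g i) t) = p (t.map id (↑)) := by
  classical
  have := Fintype.ofFinite ι
  have := (algebraMap k ℝ).charZero
  have hcont (i) : Continuous fun y : σ → ℝ => aeval y (g i) :=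
    continuous_iff_continuousAt.2 fun y => (hasStrictFDerivAt_aeval (g i) y).continuousAt
  have hclosed : IsClosed {y : σ → ℝ | ∀ i, p (.inr i) ≤ aeval y (g i)} := by
    simp only [Set.ofPred_forall]
    exact isClosed_iInter fun i => isClosed_le continuous_const (hcont i)
  obtain ⟨x, hx, hmin⟩ := exists_isMinOn_sum_sq_sub hclosed hfeas fun l => p (.inl l)
  let A : Finset ι := {i | aeval x (g i) = p (.inr i)}
  have hA (i : A) : aeval x (g i) = p (.inr i) := (Finset.mem_filter.1 i.2).2
  have hindep : AlgebraicIndependent k fun i : A => aeval x (g i) := by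
    simpa only [hA, Function.comp_def] using hp.comp (fun i : A => Sum.inr (i : ι))
      (Sum.inr_injective.comp Subtype.val_injective)
  have hinactive (i) (hi : i ∉ A) : p (.inr i) < aeval x (g i) :=
    lt_of_le_of_ne (hx i) fun h => hi (by simp [A, h])
  obtain ⟨μ, hμ⟩ := exists_sub_sum_mul_pderiv_eq hindep
    (isLocalMinOn_activeSet (fun i => (hcont i).continuousAt) hinactive hx hmin)
  refine ⟨A, ?_, Sum.elim x μ, hx, ?_⟩
  · simpa using (linearIndependent_aeval_pderiv _ x hindep).fintype_card_le_finrank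
  · rintro (l | i)
    · simpa [lagrangeSystem, aeval_rename] using hμ l
    · simpa [lagrangeSystem, aeval_rename] using hA i

end Lagrange

section SignPatterns

theorem totalDegree_units_smul {R σ : Type*} [CommRing R] (s : ℤˣ) (f : MvPolynomial σ R) :
    (s • f).totalDegree = f.totalDegree := by
  obtain rfl | rfl := Int.units_eq_one_or s
  · rw [one_smul]
  · rw [Units.neg_smul, one_smul, totalDegree_neg]

theorem aeval_units_smul {R A σ : Type*} [CommRing R] [CommRing A] [Algebra R A] (s : ℤˣ)
    (x : σ → A) (f : MvPolynomial σ R) : aeval x (s • f) = s • aeval x f := by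
  rw [Units.smul_def, Units.smul_def, map_zsmul]

theorem eq_ite_of_pos_units_smul {G : Type*} [AddCommGroup G] [LinearOrder G]
    [IsOrderedAddMonoid G] {s : ℤˣ} {y : G} (h : 0 < s • y) : s = if 0 < y then 1 else -1 := by
  obtain rfl | rfl := Int.units_eq_one_or s
  · rw [one_smul] at h
    rw [if_pos h]
  · rw [Units.neg_smul, one_smul, neg_pos] at h
    rw [if_neg h.le.not_gt]

variable {k σ ι : Type*} [Field k] [Algebra k ℝ]

/-- The sign patterns that the family `f` attains at real points where no `f i` vanishes; signs are
encoded as units of `ℤ`, so that they act on polynomials and on real numbers. -/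
def signPatterns (f : ι → MvPolynomial σ k) : Set (ι → ℤˣ) :=
  {S | ∃ x : σ → ℝ, ∀ i, 0 < S i • aeval x (f i)}

theorem exists_pos_forall_signPatterns_lt [Finite ι] (f : ι → MvPolynomial σ k) :
    ∃ η : ℝ, 0 < η ∧ ∀ S ∈ signPatterns f, ∃ x : σ → ℝ, ∀ i, η < S i • aeval x (f i) := by
  have hmargin : ∀ᶠ η in nhdsWithin (0 : ℝ) (Set.Ioi 0), ∀ S ∈ signPatterns f,
      ∃ x : σ → ℝ, ∀ i, η < S i • aeval x (f i) := by
    refine (Set.toFinite (signPatterns f)).eventually_all.2 fun S ⟨x, hx⟩ => ?_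
    have hlt : ∀ᶠ η in nhdsWithin 0 (Set.Ioi 0), ∀ i, η < S i • aeval x (f i) :=
      Filter.eventually_all.2 fun i => nhdsWithin_le_nhds (gt_mem_nhds (hx i))
    exact hlt.mono fun η hη => ⟨x, hη⟩
  exact (eventually_mem_nhdsWithin.and hmargin).exists

theorem encard_setOf_exists_aeval_lagrangeSystem_eq_le [Fintype σ] {f : ι → MvPolynomial σ k}
    {D : ℕ} (hf : ∀ i, (f i).totalDegree ≤ D) {A : Finset ι} {p : σ ⊕ A → ℝ}
    (hp : AlgebraicIndependent k p) :
    {S : ι → ℤˣ | ∃ z : σ ⊕ A → ℝ, (∀ i, 0 < S i • aeval (z ∘ Sum.inl) (f i)) ∧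
      ∀ t, aeval z (lagrangeSystem (fun i : A => S i • f i) t) = p t}.encard ≤
      (2 ^ A.card * (D + 1) ^ (Fintype.card σ + A.card) : ℕ) := by
  classical
  have := (algebraMap k ℝ).charZero
  let signAt (z : σ ⊕ A → ℝ) (i : ι) : ℤˣ := if 0 < aeval (z ∘ Sum.inl) (f i) then 1 else -1
  let solutions (s : A → ℤˣ) : Set (σ ⊕ A → ℝ) :=
    {z | ∀ t, aeval z (lagrangeSystem (fun i : A => s i • f i) t) = p t}
  have hsolutions (s : A → ℤˣ) :
      (solutions s).encard ≤ ((D + 1) ^ (Fintype.card σ + A.card) : ℕ) := by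
    have hdeg := totalDegree_lagrangeSystem_le fun i : A =>
      (totalDegree_units_smul (s i) (f i)).trans_le (hf i)
    grw [encard_setOf_aeval_eq_le hdeg hp, Fintype.card_sum, Fintype.card_coe]
  calc
    _ ≤ (⋃ s, signAt '' solutions s).encard := by
        refine Set.encard_le_encard ?_
        rintro S ⟨z, hpos, hz⟩
        exact Set.mem_iUnion.2 ⟨fun i => S i, z, hz,
          funext fun i => (eq_ite_of_pos_units_smul (hpos i)).symm⟩
    _ ≤ ∑ s, (signAt '' solutions s).encard := Set.encard_iUnion_le_of_fintype _
    _ ≤ ∑ _s : A → ℤˣ, (((D + 1) ^ (Fintype.card σ + A.card) : ℕ) : ℕ∞) :=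
        Finset.sum_le_sum fun s _ => (Set.encard_image_le _ _).trans (hsolutions s)
    _ = (2 ^ A.card * (D + 1) ^ (Fintype.card σ + A.card) : ℕ) := by simp

theorem ncard_signPatterns_le [Countable k] [Fintype σ] [Fintype ι] {f : ι → MvPolynomial σ k}
    {D : ℕ} (hf : ∀ i, (f i).totalDegree ≤ D) :
    (signPatterns f).ncard ≤ (2 * (D + 1) ^ 2) ^ Fintype.card σ *
      ({A | A.card ≤ Fintype.card σ} : Finset (Finset ι)).card := by
  obtain ⟨η, hη, hmargin⟩ := exists_pos_forall_signPatterns_lt f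
  obtain ⟨p, hp, hpη⟩ := exists_algebraicIndependent_mem_Ioo k (σ ⊕ ι) hη
  have hpA (A : Finset ι) : AlgebraicIndependent k fun t : σ ⊕ A => p (t.map id (↑)) :=
    hp.comp _ (Sum.map_injective.2 ⟨Function.injective_id, Subtype.val_injective⟩)
  have hcover : signPatterns f ⊆ ⋃ A ∈ ({A | A.card ≤ Fintype.card σ} : Finset (Finset ι)),
      {S : ι → ℤˣ | ∃ z : σ ⊕ A → ℝ, (∀ i, 0 < S i • aeval (z ∘ Sum.inl) (f i)) ∧
        ∀ t, aeval z (lagrangeSystem (fun i : A => S i • f i) t) = p (t.map id (↑))} := by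
    intro S hS
    obtain ⟨x, hx⟩ := hmargin S hS
    obtain ⟨A, hA, z, hfeas, hz⟩ := exists_aeval_lagrangeSystem_eq (fun i => S i • f i) hp
      ⟨x, fun i => (aeval_units_smul (S i) x (f i)).symm ▸ ((hpη _).2.trans (hx i)).le⟩
    refine Set.mem_biUnion (by simpa using hA) ⟨z, fun i => ?_, hz⟩
    exact aeval_units_smul (S i) (z ∘ Sum.inl) (f i) ▸ (hpη (.inr i)).1.trans_le (hfeas i)
  rw [← Nat.cast_le (α := ℕ∞), (Set.toFinite _).cast_ncard_eq]
  grw [hcover, Finset.set_encard_biUnion_le]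
  rw [mul_comm, Nat.cast_mul, ← nsmul_eq_mul]
  refine Finset.sum_le_card_nsmul _ _ _ fun A hA => ?_
  grw [encard_setOf_exists_aeval_lagrangeSystem_eq_le hf (hpA A)]
  have hA' : A.card ≤ Fintype.card σ := (Finset.mem_filter.1 hA).2
  norm_cast
  calc 2 ^ A.card * (D + 1) ^ (Fintype.card σ + A.card)
      ≤ 2 ^ Fintype.card σ * (D + 1) ^ (Fintype.card σ + Fintype.card σ) := by
        gcongr <;> omega
    _ = (2 * (D + 1) ^ 2) ^ Fintype.card σ := by rw [← two_mul, pow_mul, ← mul_pow]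

end SignPatterns

section EntropyBound

theorem exp_le_two_rpow {x : ℝ} (hx : 0 ≤ x) : Real.exp x ≤ 2 ^ (2 * x) := by
  have he : Real.exp 1 ≤ 2 ^ (2 : ℝ) := by
    rw [Real.rpow_two]
    linarith [Real.exp_one_lt_three]
  calc Real.exp x = Real.exp 1 ^ x := (Real.exp_one_rpow x).symm
    _ ≤ (2 ^ (2 : ℝ)) ^ x := by gcongr
    _ = 2 ^ (2 * x) := (Real.rpow_mul zero_le_two 2 x).symm

theorem card_filter_card_le_mul_pow_le_exp (ι : Type*) [Fintype ι] (K : ℕ) {ε : ℝ} (hε : 0 ≤ ε)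
    (hε1 : ε ≤ 1) :
    ({A | A.card ≤ K} : Finset (Finset ι)).card * ε ^ K ≤ Real.exp (ε * Fintype.card ι) := by
  calc ({A | A.card ≤ K} : Finset (Finset ι)).card * ε ^ K
      = ∑ A : Finset ι with A.card ≤ K, ε ^ K := by rw [Finset.sum_const, nsmul_eq_mul]
    _ ≤ ∑ A : Finset ι with A.card ≤ K, ε ^ A.card :=
        Finset.sum_le_sum fun A hA => pow_le_pow_of_le_one hε hε1 (Finset.mem_filter.1 hA).2
    _ ≤ ∑ A : Finset ι, ε ^ A.card :=
        Finset.sum_le_sum_of_subset_of_nonneg (Finset.filter_subset _ _) fun _ _ _ => by positivity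
    _ = (ε + 1) ^ Fintype.card ι := by simpa using Fintype.sum_pow_mul_eq_add_pow ι ε 1
    _ ≤ Real.exp ε ^ Fintype.card ι := by
        gcongr
        exact Real.add_one_le_exp ε
    _ = Real.exp (ε * Fintype.card ι) := by rw [← Real.exp_nat_mul, mul_comm]

theorem card_filter_card_le_le_two_rpow (ι : Type*) [Fintype ι] (K : ℕ) {ε : ℝ} (hε : 0 < ε)
    (hε1 : ε ≤ 1) :
    (({A | A.card ≤ K} : Finset (Finset ι)).card : ℝ) ≤
      2 ^ (Real.logb 2 (1 / ε) * K + 2 * (ε * Fintype.card ι)) := by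
  have hpow : (2 : ℝ) ^ (Real.logb 2 (1 / ε) * K) = (ε ^ K)⁻¹ := by
    rw [Real.rpow_mul zero_le_two, Real.rpow_logb two_pos (by norm_num) (by positivity),
      Real.rpow_natCast, one_div, inv_pow]
  rw [Real.rpow_add two_pos, hpow, inv_mul_eq_div, le_div_iff₀ (by positivity)]
  exact (card_filter_card_le_mul_pow_le_exp ι K hε.le hε1).trans (exp_le_two_rpow (by positivity))

theorem one_le_logb_two_one_div {ε : ℝ} (hε : 0 < ε) (hε2 : ε ≤ 1 / 2) :
    1 ≤ Real.logb 2 (1 / ε) := by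
  rw [Real.le_logb_iff_rpow_le one_lt_two (by positivity), Real.rpow_one]
  exact (le_one_div two_pos hε).2 hε2

theorem logb_two_mul_add_one_sq_nonneg (D : ℕ) : 0 ≤ Real.logb 2 (2 * ((D : ℝ) + 1) ^ 2) :=
  Real.logb_nonneg one_lt_two (mod_cast Nat.succ_le_of_lt (by positivity))

theorem ncard_signPatterns_le_two_rpow {k σ ι : Type*} [Field k] [Countable k] [Algebra k ℝ]
    [Fintype σ] [Fintype ι] {f : ι → MvPolynomial σ k} {D : ℕ}
    (hf : ∀ i, (f i).totalDegree ≤ D) {a ε : ℝ} (hε : 0 < ε) (hε2 : ε ≤ 1 / 2)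
    (hσ : (Fintype.card σ : ℝ) ≤ a * (ε * Fintype.card ι)) :
    ((signPatterns f).ncard : ℝ) ≤ 2 ^ (Fintype.card ι *
      (a * Real.logb 2 (2 * (D + 1) ^ 2) + a + 2) * ε * Real.logb 2 (1 / ε)) := by
  set K := Fintype.card σ
  set N := Fintype.card ι
  set G := Real.logb 2 (2 * (D + 1) ^ 2)
  set L := Real.logb 2 (1 / ε)
  have hL : 1 ≤ L := one_le_logb_two_one_div hε hε2
  have hbase : (2 : ℝ) ^ G = 2 * (D + 1) ^ 2 :=
    Real.rpow_logb two_pos (by norm_num) (by positivity)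
  have hG : 0 ≤ G := logb_two_mul_add_one_sq_nonneg D
  have hexponent : G * K + (L * K + 2 * (ε * N)) ≤ N * (a * G + a + 2) * ε * L :=
    calc G * K + (L * K + 2 * (ε * N))
        ≤ G * K * L + (L * K + 2 * (ε * N) * L) := by
          gcongr ?_ + (_ + ?_) <;> exact le_mul_of_one_le_right (by positivity) hL
      _ ≤ G * (a * (ε * N)) * L + (L * (a * (ε * N)) + 2 * (ε * N) * L) := by gcongr
      _ = N * (a * G + a + 2) * ε * L := by ring
  calc ((signPatterns f).ncard : ℝ)
      ≤ (2 * (D + 1) ^ 2) ^ K * ({A | A.card ≤ K} : Finset (Finset ι)).card :=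
        mod_cast ncard_signPatterns_le hf
    _ ≤ (2 * (D + 1) ^ 2) ^ K * 2 ^ (L * K + 2 * (ε * N)) := by
        gcongr
        exact card_filter_card_le_le_two_rpow ι K hε (by linarith)
    _ = 2 ^ (G * K + (L * K + 2 * (ε * N))) := by
        rw [Real.rpow_add two_pos (G * K), Real.rpow_mul zero_le_two G, hbase, Real.rpow_natCast]
    _ ≤ 2 ^ (N * (a * G + a + 2) * ε * L) :=
        Real.rpow_le_rpow_of_exponent_le one_le_two hexponent

end EntropyBound

section SignumRank

variable {d : ℕ} {n : Fin d → ℕ}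

theorem tensorRankLE.mono [NeZero d] {T : ((i : Fin d) → Fin (n i)) → ℝ} {m M : ℕ}
    (hT : tensorRankLE T m) (hmM : m ≤ M) : tensorRankLE T M := by
  obtain ⟨u, hu⟩ := hT
  obtain ⟨r, rfl⟩ := Nat.exists_eq_add_of_le hmM
  refine ⟨Fin.append u 0, fun I => ?_⟩
  rw [hu, Fin.sum_univ_add]
  simp [NeZero.ne d]

theorem signumRankLE.mono {S : ((i : Fin d) → Fin (n i)) → ℝ} {m M : ℕ}
    (hS : signumRankLE S m) (hmM : m ≤ M) : signumRankLE S M := by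
  obtain ⟨T, hT, hTS⟩ := hS
  obtain rfl | hd := eq_or_ne d 0
  · -- Every term is the empty product `1`, so `T` is the scalar `m` and zero padding is impossible.
    obtain ⟨u, hu⟩ := hT
    have hTm (I) : T I = m := by simp [hu]
    refine ⟨fun _ => M, ⟨fun _ _ _ => 0, by simp⟩, fun I => ?_⟩
    obtain ⟨hne, hsign⟩ := hTS I
    rw [hTm] at hne hsign
    have hm : 0 < m := Nat.pos_of_ne_zero (mod_cast hne)
    have hM : 0 < M := hm.trans_le hmM
    rw [Real.sign_of_pos (mod_cast hm)] at hsign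
    exact ⟨Nat.cast_ne_zero.2 hM.ne', (Real.sign_of_pos (Nat.cast_pos.2 hM)).trans hsign⟩
  · have : NeZero d := ⟨hd⟩
    exact ⟨T, hT.mono hmM, hTS⟩

/-- The entry at `I` of a sum of `m` rank-one tensors, as a polynomial in the entries
`X (s, ⟨i, j⟩) = uₛⁱ(j)` of their factors. -/
noncomputable def tensorEntry (m : ℕ) (I : (i : Fin d) → Fin (n i)) :
    MvPolynomial (Fin m × Σ i, Fin (n i)) ℚ :=
  ∑ s, ∏ i, X (s, ⟨i, I i⟩)

theorem totalDegree_tensorEntry_le (m : ℕ) (I : (i : Fin d) → Fin (n i)) :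
    (tensorEntry m I).totalDegree ≤ d := by
  refine totalDegree_finsetSum_le fun s _ => (totalDegree_finsetProd _ _).trans ?_
  simp [totalDegree_X]

theorem aeval_tensorEntry {m : ℕ} (u : Fin m → (i : Fin d) → Fin (n i) → ℝ)
    (I : (i : Fin d) → Fin (n i)) :
    aeval (fun q : Fin m × Σ i, Fin (n i) => u q.1 q.2.1 q.2.2) (tensorEntry m I) =
      ∑ s, ∏ i, u s i (I i) := by
  simp [tensorEntry]

theorem exists_units_eq_sign_smul_pos {t : ℝ} (ht : t ≠ 0) :
    ∃ s : ℤˣ, ((s : ℤ) : ℝ) = Real.sign t ∧ 0 < s • t := by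
  obtain hneg | hpos := ht.lt_or_gt
  · exact ⟨-1, by simp [Real.sign_of_neg hneg], by simpa⟩
  · exact ⟨1, by simp [Real.sign_of_pos hpos], by simpa⟩

theorem setOf_signumRankLE_subset_image_signPatterns (n : Fin d → ℕ) (m : ℕ) :
    {S | signumRankLE S m} ⊆
      (fun s I => ((s I : ℤ) : ℝ)) '' signPatterns (tensorEntry (n := n) m) := by
  rintro S ⟨T, ⟨u, hu⟩, hTS⟩
  choose s hs hpos using fun I => exists_units_eq_sign_smul_pos (hTS I).1
  refine ⟨s, ⟨fun q => u q.1 q.2.1 q.2.2, fun I => ?_⟩, funext fun I => (hs I).trans (hTS I).2⟩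
  rw [aeval_tensorEntry, ← hu]
  exact hpos I

theorem ncard_le_ncard_signPatterns_tensorEntry {𝒮 : Set (((i : Fin d) → Fin (n i)) → ℝ)} {m : ℕ}
    (h𝒮 : ∀ S ∈ 𝒮, signumRankLE S m) :
    𝒮.ncard ≤ (signPatterns (tensorEntry (n := n) m)).ncard :=
  (Set.ncard_le_ncard (Set.Subset.trans h𝒮 (setOf_signumRankLE_subset_image_signPatterns n m))
    (Set.toFinite _)).trans (Set.ncard_image_le (Set.toFinite _))

theorem card_tensorEntry_variables_le {ε : ℝ} (hε : 0 ≤ ε) (n : Fin d → ℕ) {m : ℕ}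
    (hm : (m : ℝ) ≤ ε * (∏ i, n i : ℕ) / (Finset.univ.sup n : ℕ)) :
    (Fintype.card (Fin m × Σ i, Fin (n i)) : ℝ) ≤ d * (ε * (∏ i, n i : ℕ)) := by
  have hsum : ∑ i, n i ≤ d * Finset.univ.sup n := by
    simpa using Finset.sum_le_card_nsmul Finset.univ n _ fun i hi => Finset.le_sup hi
  calc (Fintype.card (Fin m × Σ i, Fin (n i)) : ℝ)
      = m * (∑ i, n i : ℕ) := by simp
    _ ≤ m * (d * Finset.univ.sup n : ℕ) := by gcongr
    _ = d * (m * (Finset.univ.sup n : ℕ)) := by push_cast; ring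
    _ ≤ d * (ε * (∏ i, n i : ℕ)) := by
        gcongr d * ?_
        exact mul_le_of_le_div₀ (by positivity) (by positivity) hm

end SignumRank

/-- For every `d` there are `c(d), ε₀(d) > 0` such that for `ε ∈ (0, ε₀)` the number of
signum tensors of signum rank at most `ε N / max n_j` is at most `2^{N c ε log₂(1/ε)}`,
where `N = n₁⋯n_d`. -/
theorem count_tensors_small_signum_rank (d : ℕ) :
    ∃ c : ℝ, 0 < c ∧ ∃ ε₀ : ℝ, 0 < ε₀ ∧
      ∀ ε : ℝ, 0 < ε → ε < ε₀ → ∀ n : Fin d → ℕ,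
        (Nat.card {S : ((i : Fin d) → Fin (n i)) → ℝ | IsSignTensor S ∧
            ∃ m : ℕ, (m : ℝ) ≤ ε * (∏ i, n i : ℕ) / (Finset.univ.sup n : ℕ) ∧
              signumRankLE S m} : ℝ) ≤
          (2 : ℝ) ^ ((∏ i, n i : ℕ) * c * ε * Real.logb 2 (1 / ε)) := by
  refine ⟨d * Real.logb 2 (2 * (d + 1) ^ 2) + d + 2, ?_, 1 / 2, by norm_num, fun ε hε hε2 n => ?_⟩
  · have := logb_two_mul_add_one_sq_nonneg d
    positivity
  set M := ⌊ε * (∏ i, n i : ℕ) / (Finset.univ.sup n : ℕ)⌋₊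
  have hM : (M : ℝ) ≤ ε * (∏ i, n i : ℕ) / (Finset.univ.sup n : ℕ) := Nat.floor_le (by positivity)
  have hcard : Fintype.card ((i : Fin d) → Fin (n i)) = ∏ i, n i := by simp
  have hcount := ncard_signPatterns_le_two_rpow (totalDegree_tensorEntry_le (n := n) M) hε hε2.le
    (hcard ▸ card_tensorEntry_variables_le hε.le n hM)
  rw [hcard] at hcount
  refine (Nat.cast_le.2 ?_).trans hcount
  rw [Nat.card_coe_set_eq]
  refine ncard_le_ncard_signPatterns_tensorEntry ?_
  rintro S ⟨-, m, hm, hS⟩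
  exact hS.mono (Nat.le_floor hm)
end
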